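/- arXiv:1107.4373 — 2 statements merged into one kernel-verified Lean document; each statement's English description precedes it below -/
import Mathlib

section
/- If R and R' are equitable ribbons, each with N boxes, then supp(R) = supp(R') if and only if R and R' have the same number of nonempty rows. -/
/-- A skew shape `outer / inner`: the boxes of the Young diagram of `outer`
that are not boxes of the Young diagram of `inner`. -/
structure SkewShape where
  outer : YoungDiagram
  inner : YoungDiagram
  inner_le : inner ≤ outer

namespace SkewShape

/-- The set of boxes of a skew shape. -/
def cells (A : SkewShape) : Finset (ℕ × ℕ) := A.outer.cells \ A.inner.cells

/-- The size of a skew shape is its number of boxes. -/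
def size (A : SkewShape) : ℕ := A.cells.card

/-- The length of row `i` of a skew shape. -/
def rowLen (A : SkewShape) (i : ℕ) : ℕ := (A.cells.filter fun c => c.1 = i).card

/-- The length of column `j` of a skew shape. -/
def colLen (A : SkewShape) (j : ℕ) : ℕ := (A.cells.filter fun c => c.2 = j).card

/-- The set of indices of nonempty rows. -/
def rowSet (A : SkewShape) : Finset ℕ := A.cells.image Prod.fst

/-- The set of indices of nonempty columns. -/
def colSet (A : SkewShape) : Finset ℕ := A.cells.image Prod.snd

/-- The number of nonempty rows. -/
def numRows (A : SkewShape) : ℕ := A.rowSet.card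

/-- The number of nonempty columns. -/
def numCols (A : SkewShape) : ℕ := A.colSet.card

/-- `rows A`: the multiset of lengths of the nonempty rows of `A`
(equivalently, that sequence sorted into weakly decreasing order). -/
def rows (A : SkewShape) : Multiset ℕ := A.rowSet.val.map A.rowLen

/-- `cols A`: the multiset of lengths of the nonempty columns of `A`. -/
def cols (A : SkewShape) : Multiset ℕ := A.colSet.val.map A.colLen

/-- A skew shape is disconnected if its boxes can be split into two nonempty
parts such that no box of one part shares a row or a column with a box of the
other part. -/
def Disconnected (A : SkewShape) : Prop :=
  ∃ B C : Finset (ℕ × ℕ), B.Nonempty ∧ C.Nonempty ∧ B ∪ C = A.cells ∧ B ∩ C = ∅ ∧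
    ∀ b ∈ B, ∀ c ∈ C, b.1 ≠ c.1 ∧ b.2 ≠ c.2

/-- A skew shape is connected if it is nonempty and not disconnected. -/
def Connected (A : SkewShape) : Prop := A.cells.Nonempty ∧ ¬ A.Disconnected

/-- A ribbon is a connected skew shape containing no 2×2 block of boxes. -/
def Ribbon (A : SkewShape) : Prop :=
  A.Connected ∧ ∀ i j : ℕ, ¬ ((i, j) ∈ A.cells ∧ (i, j + 1) ∈ A.cells ∧
    (i + 1, j) ∈ A.cells ∧ (i + 1, j + 1) ∈ A.cells)

/-- The lengths of any two nonempty rows differ by at most one. -/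
def RowEquitable (A : SkewShape) : Prop :=
  ∀ i ∈ A.rowSet, ∀ i' ∈ A.rowSet, A.rowLen i ≤ A.rowLen i' + 1

/-- The lengths of any two nonempty columns differ by at most one. -/
def ColEquitable (A : SkewShape) : Prop :=
  ∀ j ∈ A.colSet, ∀ j' ∈ A.colSet, A.colLen j ≤ A.colLen j' + 1

/-- Equitable: both row equitable and column equitable. -/
def Equitable (A : SkewShape) : Prop := A.RowEquitable ∧ A.ColEquitable

/-- A filling of a skew shape is semistandard if its entries are positive
integers, weakly increasing along rows and strictly increasing down columns. -/
def IsSsyt (A : SkewShape) (T : ℕ × ℕ → ℕ) : Prop :=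
  (∀ c ∈ A.cells, 1 ≤ T c) ∧
  (∀ i j j', (i, j) ∈ A.cells → (i, j') ∈ A.cells → j ≤ j' → T (i, j) ≤ T (i, j')) ∧
  (∀ i i' j, (i, j) ∈ A.cells → (i', j) ∈ A.cells → i < i' → T (i, j) < T (i', j))

end SkewShape

/-- `c` comes weakly before `d` in the reverse reading order (right to left
along rows, rows top to bottom). -/
def ReadsBefore (c d : ℕ × ℕ) : Prop := c.1 < d.1 ∨ (c.1 = d.1 ∧ d.2 ≤ c.2)

instance : DecidableRel ReadsBefore := fun c d => by unfold ReadsBefore; infer_instance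

namespace SkewShape

/-- The number of boxes of `A` filled with the entry `k` by the filling `T`. -/
def content (A : SkewShape) (T : ℕ × ℕ → ℕ) (k : ℕ) : ℕ :=
  (A.cells.filter fun c => T c = k).card

/-- A Littlewood--Richardson filling: a semistandard filling such that every
prefix of the reverse reading word contains at least as many `k`'s as
`(k+1)`'s, for every positive `k`. -/
def IsLR (A : SkewShape) (T : ℕ × ℕ → ℕ) : Prop :=
  A.IsSsyt T ∧ ∀ d ∈ A.cells, ∀ k : ℕ,
    (A.cells.filter fun c => T c = k + 2 ∧ ReadsBefore c d).card ≤
    (A.cells.filter fun c => T c = k + 1 ∧ ReadsBefore c d).card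

end SkewShape

/-- The `i`-th largest part (0-indexed) of a multiset of natural numbers,
i.e. the `i`-th entry of the multiset sorted into weakly decreasing order. -/
def part (lam : Multiset ℕ) (i : ℕ) : ℕ := (lam.sort (· ≥ ·)).getD i 0

namespace SkewShape

/-- The support of a skew shape `A`: the set of partitions `lam` (multisets of
positive integers) for which there exists an LR filling of `A` of content `lam`. -/
def supp (A : SkewShape) : Set (Multiset ℕ) :=
  {lam | 0 ∉ lam ∧ ∃ T : ℕ × ℕ → ℕ, A.IsLR T ∧ ∀ i : ℕ, A.content T (i + 1) = part lam i}

/-- The set of LR fillings of `A` of content `lam` (normalized to vanish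
outside the boxes of `A`). -/
def LRset (A : SkewShape) (lam : Multiset ℕ) : Set ((ℕ × ℕ) → ℕ) :=
  {T | A.IsLR T ∧ (∀ c, c ∉ A.cells → T c = 0) ∧ ∀ i : ℕ, A.content T (i + 1) = part lam i}

/-- `s_A − s_B` is Schur-positive: for every partition, the number of LR
fillings of `B` of that content is at most the number for `A`. -/
def SchurPosDiff (A B : SkewShape) : Prop :=
  ∀ lam : Multiset ℕ, (B.LRset lam).ncard ≤ (A.LRset lam).ncard

end SkewShape

/-- The sum of the `k` largest parts of a multiset of natural numbers. -/
def psum (lam : Multiset ℕ) (k : ℕ) : ℕ := ((lam.sort (· ≥ ·)).take k).sum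

/-- Dominance order: `DomLe lam mu` means `lam ⊴ mu`, i.e. for every `k` the
sum of the `k` largest parts of `lam` is at most that of `mu`. -/
def DomLe (lam mu : Multiset ℕ) : Prop := ∀ k : ℕ, psum lam k ≤ psum mu k

/-- The conjugate (transpose) of a partition given as a multiset: its parts
are the numbers `#{x ∈ lam | x ≥ j}` for `j = 1, 2, …`. -/
def conj (lam : Multiset ℕ) : Multiset ℕ :=
  ((Finset.range lam.sum).val.map fun j => Multiset.card (lam.filter fun x => j + 1 ≤ x)).filter
    fun y => y ≠ 0

inductive SY : List Bool → (ℕ → ℕ) → ℕ → Prop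
  | one : SY [] (Function.update (fun _ => 0) 0 1) 0
  | step (D : List Bool) (ν : ℕ → ℕ) (k k' : ℕ) (h : SY D ν k)
      (h' : k' = 0 ∨ ν k' < ν (k' - 1)) :
      SY (decide (k < k') :: D) (Function.update ν k' (ν k' + 1)) k'

theorem SY.step' {D : List Bool} {ν ν' : ℕ → ℕ} {k k' : ℕ} {b : Bool} (h : SY D ν k)
    (h' : k' = 0 ∨ ν k' < ν (k' - 1)) (hb : b = decide (k < k')) (h1 : ν' k' = ν k' + 1)
    (h2 : ∀ i, i ≠ k' → ν' i = ν i) : SY (b :: D) ν' k' := by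
  have : ν' = Function.update ν k' (ν k' + 1) := by
    funext i
    by_cases hi : i = k'
    · subst hi; simp [h1]
    · simp [hi, h2 i hi]
  rw [this, hb]
  exact SY.step D ν k k' h h'

theorem SY.one_row (p : ℕ) (ν : ℕ → ℕ) (h0 : ν 0 = p + 1) (h : ∀ i, i ≠ 0 → ν i = 0) :
    SY (List.replicate p false) ν 0 := by
  induction p generalizing ν with
  | zero =>
    have : ν = Function.update (fun _ => 0) 0 1 := by
      funext i
      by_cases hi : i = 0
      · subst hi; simp [h0]
      · simp [hi, h i hi]
    rw [this]; exact SY.one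
  | succ p ih =>
    rw [List.replicate_succ]
    refine SY.step' (ih (Function.update ν 0 (p+1)) (by simp) ?_) (Or.inl rfl) (by simp) (by simp [h0]) ?_
    · intro i hi; simp [hi, h i hi]
    · intro i hi; simp [hi]

theorem sum_range_ext {f : ℕ → ℕ} {L M : ℕ} (h : L ≤ M) (hz : ∀ i, L ≤ i → f i = 0) :
    ∑ i ∈ Finset.range M, f i = ∑ i ∈ Finset.range L, f i := by
  symm
  apply Finset.sum_subset
  · intro i hi; simp at *; omega
  · intro i _ hi; apply hz; simpa using hi

theorem sum_update_lt (f : ℕ → ℕ) (L k v : ℕ) (hk : k < L) :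
    ∑ i ∈ Finset.range L, Function.update f k v i + f k = ∑ i ∈ Finset.range L, f i + v := by
  rw [Finset.sum_update_of_mem (by simpa using hk)]
  have := Finset.add_sum_erase (Finset.range L) f (a := k) (by simpa using hk)
  rw [Finset.sdiff_singleton_eq_erase]
  omega

theorem SY.strip {D : List Bool} {ν' : ℕ → ℕ} {k' s L : ℕ} (hD : SY D ν' k') (hks : k' < s) (p : ℕ) :
    ∀ ν : ℕ → ℕ, (∀ i, ν' i ≤ ν i) → (∀ i, ν (i+1) ≤ ν' i) → (∀ i, s < i → ν i = ν' i) → s < L →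
    ν' s < ν s → ∑ i ∈ Finset.range L, ν i = ∑ i ∈ Finset.range L, ν' i + (p + 1) →
    ∃ k, SY (List.replicate p false ++ true :: D) ν k ∧ ν' k < ν k ∧ ∀ i, i < k → ν i = ν' i := by
  induction p with
  | zero =>
    intro ν h1 h2 h3 hL hs hsum
    have hup : ∑ i ∈ Finset.range L, Function.update ν' s (ν' s + 1) i = ∑ i ∈ Finset.range L, ν i := by
      have := sum_update_lt ν' L s (ν' s + 1) hL
      omega
    have hle : ∀ i ∈ Finset.range L, Function.update ν' s (ν' s + 1) i ≤ ν i := by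
      intro i _
      by_cases hi : i = s
      · subst hi; simpa using hs
      · simpa [hi] using h1 i
    have heq := (Finset.sum_eq_sum_iff_of_le hle).1 hup
    have hs1 : ν s = ν' s + 1 := by
      have := heq s (by simpa using hL); simpa using this.symm
    have ho : ∀ i, i ≠ s → ν i = ν' i := by
      intro i hi
      by_cases hiL : i < L
      · have := heq i (by simpa using hiL); simpa [hi] using this.symm
      · exact h3 i (by omega)
    refine ⟨s, ?_, hs, fun i hi => ho i (by omega)⟩
    simp only [List.replicate_zero, List.nil_append]
    refine SY.step' hD ?_ (by simp [hks]) hs1 ho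
    right
    have := h2 (s-1)
    rw [Nat.sub_add_cancel (by omega)] at this
    omega
  | succ p ih =>
    intro ν h1 h2 h3 hL hs hsum
    classical
    have hex : ∃ i, ν' i < ν i := ⟨s, hs⟩
    set k := Nat.find hex with hk
    have hk1 : ν' k < ν k := Nat.find_spec hex
    have hk2 : ∀ i, i < k → ν i = ν' i := by
      intro i hi
      have := Nat.find_min hex hi
      have := h1 i
      omega
    have hks' : k ≤ s := Nat.find_min' hex hs
    have hsu := sum_update_lt ν L k (ν k - 1) (by omega)
    have hs' : ν' s < Function.update ν k (ν k - 1) s := by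
      by_cases hsk : s = k
      · have : ν = Function.update ν' s (ν s) := by
          funext i
          by_cases hi : i = s
          · subst hi; simp
          · simp only [hi, ne_eq, not_false_eq_true, Function.update_of_ne]
            rcases lt_or_gt_of_ne hi with h | h
            · exact hk2 i (by omega)
            · exact h3 i h
        have h4 := sum_update_lt ν' L s (ν s) hL
        rw [← this] at h4
        rw [← hsk]; simp; omega
      · simpa [hsk] using hs
    obtain ⟨k2, hk3, hk4, hk5⟩ := ih (Function.update ν k (ν k - 1)) (by
        intro i
        by_cases hi : i = k
        · rw [hi]; simp; omega
        · simpa [hi] using h1 i) (by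
        intro i
        by_cases hi : i + 1 = k
        · rw [hi]; simp; have := h2 i; rw [hi] at this; omega
        · simpa [hi] using h2 i) (by
        intro i hi
        have : i ≠ k := by omega
        simpa [this] using h3 i hi) hL hs' (by omega)
    have hkk : k ≤ k2 := by
      by_contra hlt
      have h6 := hk2 k2 (by omega)
      have : k2 ≠ k := by omega
      simp [this] at hk4; omega
    refine ⟨k, ?_, hk1, hk2⟩
    rw [List.replicate_succ, List.cons_append]
    refine SY.step' hk3 ?_ (by simp [hkk]) (by simp; omega) (by intro i hi; simp [hi])
    by_cases hk0 : k = 0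
    · exact Or.inl hk0
    · right
      have h7 : k - 1 ≠ k := by omega
      simp only [Function.update_self, ne_eq, h7, not_false_eq_true, Function.update_of_ne]
      have := h2 (k-1)
      rw [Nat.sub_add_cancel (by omega)] at this
      have := hk2 (k-1) (by omega)
      omega

/-- basic consequences -/
theorem SY.adm {D : List Bool} {ν : ℕ → ℕ} {k : ℕ} (h : SY D ν k) :
    Antitone ν ∧ 0 < ν k ∧ ν (D.count true + 1) = 0 ∧ ν 0 ≤ D.count false + 1 ∧
    ∑ i ∈ Finset.range (D.count true + 1), ν i = D.length + 1 := by
  induction h with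
  | one =>
    refine ⟨?_, by simp, by simp, by simp, by simp⟩
    apply antitone_nat_of_succ_le; intro n; simp
  | step D ν k k' h h' ih =>
    obtain ⟨ha, hk, hz, h0, hs⟩ := ih
    have hkk : k ≤ D.count true := by
      by_contra hlt
      have := ha (show D.count true + 1 ≤ k by omega)
      omega
    have hk' : k' ≤ (decide (k < k') :: D).count true := by
      by_cases hlt : k < k'
      · simp only [hlt, decide_true, List.count_cons_self]
        by_contra hc
        have := ha (show D.count true + 1 ≤ k' - 1 by omega)
        rcases h' with h' | h' <;> omega
      · simp [hlt]; omega
    have hle : D.count true ≤ (decide (k < k') :: D).count true := by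
      simp [List.count_cons]
    refine ⟨?_, by simp, ?_, ?_, ?_⟩
    · apply antitone_nat_of_succ_le
      intro n
      have h1 := ha (Nat.le_succ n)
      by_cases e1 : n + 1 = k'
      · subst e1
        simp at h' ⊢; omega
      · by_cases e2 : n = k'
        · subst e2; simp at h1 ⊢; omega
        · simpa [e1, e2] using h1
    · have : (decide (k < k') :: D).count true + 1 ≠ k' := by omega
      simp only [ne_eq, this, not_false_eq_true, Function.update_of_ne]
      have := ha (show D.count true + 1 ≤ (decide (k < k') :: D).count true + 1 by omega)
      omega
    · by_cases e : k' = 0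
      · subst e; simp; omega
      · have : (0:ℕ) ≠ k' := by omega
        simp only [ne_eq, this, not_false_eq_true, Function.update_of_ne, List.count_cons]
        omega
    · have h3 := sum_update_lt ν ((decide (k < k') :: D).count true + 1) k' (ν k' + 1) (by omega)
      have h4 := sum_range_ext (f := ν) (show D.count true + 1 ≤ (decide (k < k') :: D).count true + 1 by omega)
        (fun i hi => by have := ha hi; omega)
      simp only [List.length_cons]
      omega

theorem SY.transpose {D : List Bool} {ν : ℕ → ℕ} {k : ℕ} (h : SY D ν k) :
    ∃ g : ℕ → ℕ, (∀ i j, j < ν i ↔ i < g j) ∧ SY (D.map not) g (ν k - 1) := by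
  induction h with
  | one =>
    refine ⟨Function.update (fun _ => 0) 0 1, ?_, by simpa using SY.one⟩
    intro i j
    by_cases hi : i = 0 <;> by_cases hj : j = 0 <;> simp [hi, hj]
  | step D ν k k' h h' ih =>
    obtain ⟨g, hg, hS⟩ := ih
    obtain ⟨ha, hk, -⟩ := h.adm
    have hgk : g (ν k') = k' := by
      apply le_antisymm
      · have := hg k' (ν k'); omega
      · rcases h' with h' | h'
        · omega
        · have := hg (k'-1) (ν k'); omega
    refine ⟨Function.update g (ν k') (g (ν k') + 1), ?_, ?_⟩
    · intro i j
      have h1 := hg i j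
      by_cases hi : i = k' <;> by_cases hj : j = ν k'
      · subst hi; subst hj; simp [hgk]
      · subst hi; simp [hj]; omega
      · subst hj; simp only [hi, ne_eq, not_false_eq_true, Function.update_of_ne, Function.update_self]
        rw [hgk] at h1 ⊢; omega
      · simpa [hi, hj] using h1
    · simp only [List.map_cons, Function.update_self, Nat.add_sub_cancel]
      refine SY.step' hS ?_ ?_ (by simp) (by intro i hi; simp [hi])
      · by_cases e : ν k' = 0
        · exact Or.inl e
        · right
          have := hg k' (ν k' - 1)
          omega
      · by_cases hlt : k < k'
        · have := ha (show k ≤ k' - 1 by omega)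
          simp [hlt]; omega
        · have h1 := ha (not_lt.1 hlt)
          simp only [hlt, decide_false, Bool.not_false]
          symm; simp; omega

def Adm (ν : ℕ → ℕ) (l N : ℕ) : Prop :=
  Antitone ν ∧ ν l = 0 ∧ ν 0 + l ≤ N + 1 ∧ ∑ i ∈ Finset.range l, ν i = N

def Exc (ν : ℕ → ℕ) (s p l : ℕ) : Prop :=
  ν 0 = ν s ∨ (p = 2 ∧ ν 0 = ν s + 1 ∧ ν 1 = ν s) ∨ (s + 1 = l ∧ ν s = p)

def Good (D : List Bool) (ν : ℕ → ℕ) (p l : ℕ) : Prop :=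
  ∃ k, SY D ν k ∧ ∀ s, ν s ≠ 0 → ν (s+1) = 0 → ¬ Exc ν s p l → k < s

theorem tele (ν : ℕ → ℕ) (hν : Antitone ν) (c : ℕ) (t : ℕ) :
    ∑ i ∈ Finset.range t, max (ν (i+1)) (min (ν i) c) + max (ν 0) c
      = ∑ i ∈ Finset.range t, ν i + max (ν t) c := by
  induction t with
  | zero => simp
  | succ t ih =>
    rw [Finset.sum_range_succ, Finset.sum_range_succ]
    have := hν (Nat.le_succ t)
    simp only [Nat.succ_eq_add_one] at this
    omega

theorem step_lemma {D : List Bool} {l' N' p p' x s : ℕ} {ν : ℕ → ℕ}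
    (hA : Adm ν (l'+1) (N'+p)) (hs : 1 ≤ s) (hs1 : ν s ≠ 0) (hs2 : ν (s+1) = 0)
    (hx1 : 1 ≤ x) (hx2 : x ≤ ν s) (hxp : x ≤ p) (hq : p - x + ν s ≤ ν 0)
    (hsl : s = l' → x = ν s) (hb1 : ν 1 + l' ≤ N' + 1) (hb2 : ν 0 + x + l' ≤ N' + 1 + p)
    (IH : ∀ ν', Adm ν' l' N' → Good D ν' p' l')
    (hg : x = ν s ∨ (¬ (p' = 2 ∧ s = 1 ∧ max (ν 1) (ν 0 + x - p) = ν s - x + 1) ∧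
      ¬ (s + 1 = l' ∧ ν s = x + p'))) :
    ∃ k, SY (List.replicate (p-1) false ++ true :: D) ν k ∧ (x < p → k < s) := by
  obtain ⟨ha, hz, h0, hsum⟩ := hA
  have hsl' : s ≤ l' := by
    by_contra hc
    have := ha (show l' + 1 ≤ s by omega)
    omega
  set c := ν 0 + x - p with hc
  have hc1 : ν s ≤ c := by omega
  have hs0 : ν s ≤ ν 0 := ha (by omega)
  set ν' : ℕ → ℕ := fun i => if i < s then max (ν (i+1)) (min (ν i) c) else if i = s then ν s - x else 0
    with hν'
  have e1 : ∀ i, i < s → ν' i = max (ν (i+1)) (min (ν i) c) := by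
    intro i hi; simp [hν', hi]
  have e2 : ν' s = ν s - x := by simp [hν']
  have e3 : ∀ i, s < i → ν' i = 0 := by
    intro i hi
    have h1 : ¬ i < s := by omega
    have h2 : i ≠ s := by omega
    simp [hν', h1, h2]
  have hzz : ∀ i, s < i → ν i = 0 := by
    intro i hi
    have := ha (show s + 1 ≤ i by omega)
    omega
  have hle : ∀ i, ν' i ≤ ν i := by
    intro i
    rcases lt_trichotomy i s with h | h | h
    · rw [e1 i h]; have := ha (Nat.le_succ i); simp only [Nat.succ_eq_add_one] at this; omega
    · subst h; omega
    · rw [e3 i h]; omega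
  have hge : ∀ i, ν (i+1) ≤ ν' i := by
    intro i
    rcases lt_trichotomy i s with h | h | h
    · rw [e1 i h]; omega
    · subst h; omega
    · rw [hzz (i+1) (by omega)]; omega
  have hsum' : ∑ i ∈ Finset.range (l'+1), ν' i + p = ∑ i ∈ Finset.range (l'+1), ν i := by
    rw [sum_range_ext (f := ν') (show s + 1 ≤ l' + 1 by omega) (fun i hi => e3 i (by omega)),
      sum_range_ext (f := ν) (show s + 1 ≤ l' + 1 by omega) (fun i hi => hzz i (by omega)),
      Finset.sum_range_succ, Finset.sum_range_succ, e2,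
      Finset.sum_congr rfl (fun i hi => e1 i (by simpa using hi))]
    have := tele ν ha c s
    omega
  have hν0 : ν' 0 = max (ν 1) c := by
    rw [e1 0 (by omega)]
    have : ν 1 ≤ ν 0 := ha (by omega)
    simp only [zero_add]; omega
  have hzl : ν' l' = 0 := by
    rcases Nat.lt_or_eq_of_le hsl' with h | h
    · exact e3 _ h
    · rw [← h, e2]; have := hsl h; omega
  have hA' : Adm ν' l' N' := by
    refine ⟨antitone_nat_of_succ_le (fun n => (hle _).trans (hge n)), hzl, ?_, ?_⟩
    · rw [hν0]; omega
    · rw [Finset.sum_range_succ, hzl] at hsum'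
      omega
  obtain ⟨k, hk, hkE⟩ := IH ν' hA'
  have hkν := hk.adm.2.1
  have hks : k < s := by
    by_cases hxs : x = ν s
    · by_contra hcon
      rcases Nat.lt_or_eq_of_le (not_lt.1 hcon) with h | h
      · rw [e3 k h] at hkν; omega
      · rw [← h] at hkν; omega
    · obtain ⟨hg1, hg2⟩ := hg.resolve_left hxs
      refine hkE s (by omega) (e3 _ (by omega)) ?_
      have hν1s : ν s ≤ ν 1 := ha hs
      rintro (h | ⟨h1, h2, h3⟩ | ⟨h1, h2⟩)
      · rw [hν0] at h; omega
      · rw [hν0, e2] at h2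
        by_cases hs1' : s = 1
        · exact hg1 ⟨h1, hs1', h2⟩
        · have h4 := hge 1
          have h5 : ν s ≤ ν (1+1) := ha (by omega)
          omega
      · exact hg2 ⟨h1, by omega⟩
  obtain ⟨k2, hk2, hk3, hk4⟩ := SY.strip (L := l'+1) hk hks (p-1) ν hle hge
    (fun i hi => by rw [e3 i hi, hzz i hi]) (by omega) (by omega) (by omega)
  refine ⟨k2, hk2, fun hxp' => ?_⟩
  by_contra hcon
  have heq : ∀ i, i < s → ν i = ν' i := fun i hi => hk4 i (by omega)
  have h8 : ∑ i ∈ Finset.range s, ν i = ∑ i ∈ Finset.range s, max (ν (i+1)) (min (ν i) c) :=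
    Finset.sum_congr rfl (fun i hi => (heq i (by simpa using hi)).trans (e1 i (by simpa using hi)))
  have := tele ν ha c s
  omega

def Dof : List ℕ → List Bool
  | [] => []
  | [p] => List.replicate (p-1) false
  | p :: q :: t => List.replicate (p-1) false ++ true :: Dof (q :: t)

theorem exists_last {ν : ℕ → ℕ} {l N : ℕ} (hA : Adm ν l N) (hN : 0 < N) :
    ∃ s, s < l ∧ ν s ≠ 0 ∧ ν (s+1) = 0 := by
  obtain ⟨ha, hz, h0, hsum⟩ := hA
  classical
  have hex : ∃ i, ν i = 0 := ⟨l, hz⟩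
  have h1 := Nat.find_spec hex
  have h2 : Nat.find hex ≤ l := Nat.find_min' hex hz
  have h3 : Nat.find hex ≠ 0 := by
    intro h
    rw [h] at h1
    have : ∑ i ∈ Finset.range l, ν i = 0 := Finset.sum_eq_zero (fun i _ => by
      have := ha (Nat.zero_le i); omega)
    omega
  refine ⟨Nat.find hex - 1, by omega, Nat.find_min hex (by omega), ?_⟩
  rw [Nat.sub_add_cancel (by omega)]; exact h1

/-- sum estimates -/
theorem sum_est {ν : ℕ → ℕ} {l N s : ℕ} (hA : Adm ν l N) (hs : s < l) (h1 : 1 ≤ s) (hz : ν (s+1) = 0) :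
    N ≤ s * ν 0 + ν s ∧ ν 0 + ν 1 + s * ν s ≤ N + ν s := by
  obtain ⟨ha, -, h0, hsum⟩ := hA
  rw [sum_range_ext (f := ν) (show s + 1 ≤ l by omega) (fun i hi => by
    have := ha hi; omega), Finset.sum_range_succ] at hsum
  constructor
  · have : ∑ i ∈ Finset.range s, ν i ≤ ∑ i ∈ Finset.range s, ν 0 :=
      Finset.sum_le_sum (fun i _ => ha (Nat.zero_le i))
    simp at this; omega
  · obtain ⟨t, rfl⟩ : ∃ t, s = t + 1 := ⟨s-1, by omega⟩
    cases t with
    | zero => simp at *; omega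
    | succ t =>
      rw [Finset.sum_range_succ', Finset.sum_range_succ'] at hsum
      have : ∑ i ∈ Finset.range t, ν (t+1+1) ≤ ∑ i ∈ Finset.range t, ν (i+1+1) :=
        Finset.sum_le_sum (fun i hi => ha (by simp at hi; omega))
      simp at this hsum
      have : (t+1+1) * ν (t+1+1) = t * ν (t+1+1) + 2 * ν (t+1+1) := by ring
      omega

theorem last_unique {ν : ℕ → ℕ} (ha : Antitone ν) {s t : ℕ} (h1 : ν s ≠ 0) (h2 : ν (s+1) = 0)
    (h3 : ν t ≠ 0) (h4 : ν (t+1) = 0) : s = t := by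
  rcases lt_trichotomy s t with h | h | h
  · have := ha (show s + 1 ≤ t by omega); omega
  · exact h
  · have := ha (show t + 1 ≤ s by omega); omega

theorem mul_cancel_aux {n C a : ℕ} (hn : 1 ≤ n) (h : n * C ≤ a * n) : C ≤ a := by
  rw [mul_comm a n] at h
  exact Nat.le_of_mul_le_mul_left h (by omega)

theorem main_rows (a : ℕ) (ha : 2 ≤ a) : ∀ (α' : List ℕ) (p : ℕ), (∀ q ∈ p :: α', a ≤ q ∧ q ≤ a + 1) →
    ∀ ν, Adm ν (α'.length + 1) (α'.sum + p) → Good (Dof (p :: α')) ν p (α'.length + 1) := by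
  intro α'
  induction α' with
  | nil =>
    intro p hp ν hA
    obtain ⟨h1, h2, h3, h4⟩ := hA
    have hpp := hp p (by simp)
    simp at h2 h3 h4
    refine ⟨0, ?_, ?_⟩
    · apply SY.one_row
      · omega
      · intro i hi
        have := h1 (show 1 ≤ i by omega); omega
    · intro s hs hs2 hE
      exfalso
      apply hE
      left
      rcases Nat.eq_zero_or_pos s with h | h
      · rw [h]
      · have := h1 (show 1 ≤ s from h); omega
  | cons p' t ih =>
    intro p hp ν hA
    have IH := ih p' (fun q hq => hp q (List.mem_cons_of_mem _ hq))
    have hpp := hp p (by simp)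
    have hpp' := hp p' (by simp)
    have hS1 : a * t.length ≤ t.sum := by
      have := List.card_nsmul_le_sum t a (fun q hq => (hp q (by simp [hq])).1)
      simpa [mul_comm] using this
    have hS2 : t.sum ≤ (a+1) * t.length := by
      have := List.sum_le_card_nsmul t (a+1) (fun q hq => (hp q (by simp [hq])).2)
      simpa [mul_comm] using this
    simp only [List.length_cons, List.sum_cons] at hA ⊢
    rw [show p' + t.sum + p = (t.sum + p') + p by ring] at hA
    generalize t.sum = S at *
    have hlen : t.length = t.length := rfl
    generalize hn : t.length = n at *
    have hanti := hA.1
    obtain ⟨s, hsl, hs1, hs2⟩ := exists_last hA (by omega)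
    have hAb := hA.2.2.1
    have hsge : 1 ≤ s := by
      by_contra hc
      have : s = 0 := by omega
      subst this
      have h5 := hA.2.2.2
      rw [sum_range_ext (f := ν) (show 1 ≤ n + 1 + 1 by omega) (fun i hi => by
        have := hanti hi; simp at hs2; omega)] at h5
      simp at h5; omega
    obtain ⟨hE1, hE2⟩ := sum_est hA hsl hsge hs2
    have hAB : ν 1 ≤ ν 0 := hanti (by omega)
    have hBC : ν s ≤ ν 1 := hanti hsge
    have h2n : 2 * n ≤ a * n := Nat.mul_le_mul_right n ha
    have hsC : ν s ≤ s * ν s := Nat.le_mul_of_pos_left _ (by omega)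
    have hS2' : (a+1) * n = a * n + n := by ring
    have hb1 : ν 1 + (n + 1) ≤ S + p' + 1 := by
      omega
    have hpA : p ≤ ν 0 := by
      by_contra hc
      have h1 : s * ν 0 ≤ (n+1) * a := Nat.mul_le_mul (by omega) (by omega)
      have h2 : (n+1) * a = a * n + a := by ring
      omega
    have key : ∀ x, 1 ≤ x → x ≤ ν s → x ≤ p → p - x + ν s ≤ ν 0 → (s = n + 1 → x = ν s) →
        ν 0 + x + (n + 1) ≤ S + p' + 1 + p →
        (x = ν s ∨ (¬ (p' = 2 ∧ s = 1 ∧ max (ν 1) (ν 0 + x - p) = ν s - x + 1) ∧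
          ¬ (s + 1 = n + 1 ∧ ν s = x + p'))) → (¬ Exc ν s p (n+1+1) → x < p) →
        Good (Dof (p :: p' :: t)) ν p (n + 1 + 1) := by
      intro x hx1 hx2 hx3 hx4 hx5 hx6 hx7 hx8
      obtain ⟨k, hk, hk'⟩ := step_lemma hA hsge hs1 hs2 hx1 hx2 hx3 hx4 hx5 hb1 hx6 IH hx7
      refine ⟨k, hk, ?_⟩
      intro s' hs1' hs2' hE
      have := last_unique hanti hs1 hs2 hs1' hs2'
      subst this
      exact hk' (hx8 hE)
    by_cases hcA : s = n + 1
    · -- full number of rows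
      have hCp : ν s ≤ p := by
        by_contra hc
        have h1 : (n+1) * (a+1) ≤ s * ν s := Nat.mul_le_mul (by omega) (by omega)
        have h2 : (n+1) * (a+1) = a * n + n + a + 1 := by ring
        omega
      refine key (ν s) (by omega) le_rfl hCp (by omega) (fun _ => rfl) ?_ (Or.inl rfl) ?_
      · have : ν s + s ≤ s * ν s + 1 := by
          obtain ⟨s', rfl⟩ : ∃ s', s = s' + 1 := ⟨s-1, by omega⟩
          obtain ⟨c, hc⟩ : ∃ c, ν (s'+1) = c + 1 := ⟨ν (s'+1) - 1, by omega⟩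
          rw [hc]
          nlinarith [Nat.zero_le (s' * c)]
        omega
      · intro hE
        have : ν s ≠ p := fun h => hE (Or.inr (Or.inr ⟨by omega, h⟩))
        omega
    by_cases hc1 : ν 0 = ν s
    · refine key p (by omega) (by omega) le_rfl (by omega) (by omega) (by omega) (Or.inr ⟨by omega, ?_⟩) ?_
      · rintro ⟨h1, h2⟩
        have h3 : n * ν s ≤ (a+1) * n := by
          have : s = n := by omega
          subst this; omega
        have := mul_cancel_aux (by omega) h3
        omega
      · intro hE; exact absurd (Or.inl hc1) hE
    by_cases hc2 : p = 2 ∧ ν 0 = ν s + 1 ∧ ν 1 = ν s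
    · obtain ⟨hp2, hA1, hB1⟩ := hc2
      have hC2 : 2 ≤ ν s := by
        by_contra hc
        have h1 : s * ν 0 ≤ s * 2 := Nat.mul_le_mul_left s (by omega)
        omega
      refine key 2 (by omega) hC2 (by omega) (by omega) (by omega) (by omega) (Or.inr ⟨by omega, ?_⟩) ?_
      · rintro ⟨h1, h2⟩
        have h3 : n * ν s ≤ (a+1) * n := by
          have : s = n := by omega
          subst this; omega
        have := mul_cancel_aux (by omega) h3
        omega
      · intro hE; exact absurd (Or.inr (Or.inl ⟨hp2, hA1, hB1⟩)) hE
    have hCA : ν s < ν 0 := by omega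
    by_cases hc3 : 2 ≤ ν s ∧ ν 1 = ν s ∧ ν 0 = ν s + p - 1
    · obtain ⟨hC2, hB1, hA1⟩ := hc3
      have hp3 : 3 ≤ p := by omega
      refine key 2 (by omega) hC2 (by omega) (by omega) (by omega) (by omega) (Or.inr ⟨by omega, ?_⟩) (by omega)
      rintro ⟨h1, h2⟩
      have h3 : n * ν s ≤ (a+1) * n := by
        have : s = n := by omega
        subst this; omega
      have := mul_cancel_aux (by omega) h3
      omega
    · refine key (max 1 (p - (ν 0 - ν s))) (by omega) (by omega) (by omega) (by omega) (by omega) (by omega) ?_ (by omega)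
      by_cases hxC : max 1 (p - (ν 0 - ν s)) = ν s
      · exact Or.inl hxC
      · refine Or.inr ⟨by omega, ?_⟩
        rintro ⟨h1, h2⟩
        have h3 : n * ν s ≤ (a+1) * n := by
          have : s = n := by omega
          subst this; omega
        have h4 := mul_cancel_aux (by omega) h3
        have h5 : (a+1) * n ≤ n * ν s := by
          rw [mul_comm]; exact Nat.mul_le_mul_left n (by omega)
        have h6 : s * ν s = n * ν s := by
          rw [show s = n by omega]
        omega

/-- the case `1 :: 2 :: 2 ...` -/
theorem main_one (n : ℕ) (ν : ℕ → ℕ) (hA : Adm ν (n + 2) (2 * n + 3)) :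
    ∃ k, SY (Dof (1 :: List.replicate (n+1) 2)) ν k := by
  have hanti := hA.1
  obtain ⟨s, hsl, hs1, hs2⟩ := exists_last hA (by omega)
  have hAb := hA.2.2.1
  have hsge : 1 ≤ s := by
    by_contra hc
    have : s = 0 := by omega
    subst this
    have h5 := hA.2.2.2
    rw [sum_range_ext (f := ν) (show 1 ≤ n + 2 by omega) (fun i hi => by
      have := hanti hi; simp at hs2; omega)] at h5
    simp at h5; omega
  obtain ⟨hE1, hE2⟩ := sum_est hA hsl hsge hs2
  have hAB : ν 1 ≤ ν 0 := hanti (by omega)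
  have hBC : ν s ≤ ν 1 := hanti hsge
  have hsC : ν s ≤ s * ν s := Nat.le_mul_of_pos_left _ (by omega)
  have IH := main_rows 2 le_rfl (List.replicate n 2) 2 (by
    intro q hq
    have : q = 2 := by
      simp only [List.mem_cons, List.mem_replicate] at hq
      omega
    omega)
  simp only [List.length_replicate, List.sum_replicate, smul_eq_mul] at IH
  have := step_lemma (l' := n+1) (N' := n*2+2) (p := 1) (p' := 2) (x := 1) (s := s) (ν := ν)
    (D := Dof (2 :: List.replicate n 2))
    (by convert hA using 1; ring) hsge hs1 hs2 le_rfl (by omega) le_rfl (by omega)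
    (by
      intro h
      by_contra hc
      have h1 : s * 2 ≤ s * ν s := Nat.mul_le_mul_left s (by omega)
      omega) (by omega) (by omega) IH (by
      right
      constructor
      · rintro ⟨-, h1, h2⟩
        subst h1; omega
      · rintro ⟨h1, h2⟩
        have : s * ν s = s * 3 := by rw [h2]
        omega)
  obtain ⟨k, hk, -⟩ := this
  exact ⟨k, by simpa [Dof, List.replicate_succ] using hk⟩

def Dl (d : ℕ → Bool) : ℕ → List Bool
  | 0 => []
  | n+1 => d n :: Dl d n

theorem Dl_length (d : ℕ → Bool) (n : ℕ) : (Dl d n).length = n := by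
  induction n with
  | zero => rfl
  | succ n ih => simp [Dl, ih]

theorem Dl_not (d : ℕ → Bool) (n : ℕ) : Dl (fun m => !d m) n = (Dl d n).map not := by
  induction n with
  | zero => rfl
  | succ n ih => simp [Dl, ih]

theorem Dl_count (d : ℕ → Bool) (n : ℕ) : (Dl d n).count true + (Dl d n).count false = n := by
  induction n with
  | zero => rfl
  | succ n ih => cases h : d n <;> simp [Dl, h] <;> omega

theorem Dof_count (t : List ℕ) (p : ℕ) : (Dof (p :: t)).count true = t.length := by
  induction t generalizing p with
  | nil => simp [Dof, List.count_replicate]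
  | cons q t ih => simp [Dof, List.count_replicate, ih]

theorem Dof_length (t : List ℕ) (p : ℕ) (h : ∀ q ∈ p :: t, 1 ≤ q) :
    (Dof (p :: t)).length + 1 = t.sum + p := by
  induction t generalizing p with
  | nil => have := h p (by simp); simp [Dof]; omega
  | cons q t ih =>
    have h1 := ih q (fun r hr => h r (List.mem_cons_of_mem _ hr))
    have h2 := h p (by simp)
    simp [Dof]; omega

def runLen (ρ : ℕ → ℕ) (n m : ℕ) : ℕ := ((Finset.range (n+1)).filter fun i => ρ i = ρ m).card

theorem runs (d : ℕ → Bool) (ρ : ℕ → ℕ) (n : ℕ) (hρ : ∀ m, m < n → ρ (m+1) = if d m then ρ m + 1 else ρ m) :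
    ∃ h t, Dl d n = Dof (h :: t) ∧ h = runLen ρ n n ∧
      (∀ q ∈ t, ∃ m, m ≤ n ∧ ρ m < ρ n ∧ q = runLen ρ n m) ∧ ∀ m, m ≤ n → ρ m ≤ ρ n := by
  induction n with
  | zero => exact ⟨1, [], by simp [Dl, Dof], by simp [runLen, Finset.filter_singleton], by simp, by intro m hm; simp at hm; rw [hm]⟩
  | succ n ih =>
    obtain ⟨h, t, h1, h2, h3, h4⟩ := ih (fun m hm => hρ m (by omega))
    have hn := hρ n (by omega)
    have hne : ∀ m, ρ m ≠ ρ (n+1) → runLen ρ (n+1) m = runLen ρ n m := by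
      intro m hm
      unfold runLen
      rw [Finset.range_add_one (n := n+1), Finset.filter_insert, if_neg (fun h => hm h.symm)]
    have heq : ∀ m, ρ m = ρ (n+1) → runLen ρ (n+1) m = runLen ρ n m + 1 := by
      intro m hm
      unfold runLen
      rw [Finset.range_add_one (n := n+1), Finset.filter_insert, if_pos hm.symm, Finset.card_insert_of_notMem]
      simp
    have hpos : 1 ≤ h := by
      rw [h2]; unfold runLen
      apply Finset.card_pos.2
      exact ⟨n, by simp⟩
    by_cases hd : d n = true
    · simp only [hd, if_true] at hn
      refine ⟨1, h :: t, ?_, ?_, ?_, ?_⟩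
      · simp [Dl, Dof, hd, h1]
      · rw [heq _ rfl]
        have : runLen ρ n (n+1) = 0 := by
          unfold runLen
          rw [Finset.card_eq_zero, Finset.filter_eq_empty_iff]
          intro i hi
          simp at hi
          have := h4 i (by omega)
          omega
        omega
      · intro q hq
        rcases List.mem_cons.1 hq with hq | hq
        · exact ⟨n, by omega, by omega, by rw [hne _ (by omega), hq, h2]⟩
        · obtain ⟨m, hm1, hm2, hm3⟩ := h3 q hq
          exact ⟨m, by omega, by omega, by rw [hne _ (by omega), hm3]⟩
      · intro m hm
        rcases Nat.lt_or_eq_of_le hm with hm | hm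
        · have := h4 m (by omega); omega
        · rw [hm]
    · simp only [hd] at hn
      simp at hn hd
      refine ⟨h+1, t, ?_, ?_, ?_, ?_⟩
      · cases t with
        | nil =>
          simp only [Dl, Dof, hd, h1, Nat.add_sub_cancel]
          obtain ⟨h', rfl⟩ : ∃ h', h = h' + 1 := ⟨h-1, by omega⟩
          simp [List.replicate_succ]
        | cons q t =>
          simp only [Dl, Dof, hd, h1, Nat.add_sub_cancel]
          obtain ⟨h', rfl⟩ : ∃ h', h = h' + 1 := ⟨h-1, by omega⟩
          simp [List.replicate_succ]
      · rw [heq _ rfl, h2]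
        unfold runLen; rw [hn]
      · intro q hq
        obtain ⟨m, hm1, hm2, hm3⟩ := h3 q hq
        exact ⟨m, by omega, by omega, by rw [hne _ (by omega), hm3]⟩
      · intro m hm
        rcases Nat.lt_or_eq_of_le hm with hm | hm
        · have := h4 m (by omega); omega
        · rw [hm]

theorem exist_rows (d : ℕ → Bool) (ρ : ℕ → ℕ) (n : ℕ) (hρ : ∀ m, m < n → ρ (m+1) = if d m then ρ m + 1 else ρ m)
    (a : ℕ) (ha : 2 ≤ a) (hr : ∀ m, m ≤ n → a ≤ runLen ρ n m ∧ runLen ρ n m ≤ a + 1)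
    (ν : ℕ → ℕ) (hA : Adm ν ((Dl d n).count true + 1) (n + 1)) : ∃ k, SY (Dl d n) ν k := by
  obtain ⟨h, t, h1, h2, h3, -⟩ := runs d ρ n hρ
  have hall : ∀ q ∈ h :: t, a ≤ q ∧ q ≤ a + 1 := by
    intro q hq
    rcases List.mem_cons.1 hq with hq | hq
    · rw [hq, h2]; exact hr n le_rfl
    · obtain ⟨m, hm, -, hm2⟩ := h3 q hq
      rw [hm2]; exact hr m hm
  have hlen := Dof_length t h (fun q hq => by have := hall q hq; omega)
  rw [← h1, Dl_length] at hlen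
  rw [h1, Dof_count, hlen] at hA
  obtain ⟨k, hk, -⟩ := main_rows a ha t h hall ν hA
  exact ⟨k, h1 ▸ hk⟩

theorem adm_conj {ν : ℕ → ℕ} {l m N : ℕ} (hA : Adm ν l N) (hlm : l + m = N + 1) :
    ∃ g : ℕ → ℕ, (∀ i j, j < ν i ↔ i < g j) ∧ Adm g m N := by
  classical
  obtain ⟨ha, hz, h0, hsum⟩ := hA
  have hex : ∀ j, ∃ i, ν i ≤ j := fun j => ⟨l, by omega⟩
  have hconj : ∀ i j, j < ν i ↔ i < Nat.find (hex j) := by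
    intro i j
    rw [Nat.lt_find_iff]
    constructor
    · intro h i' hi'
      have := ha hi'; omega
    · intro h
      have := h i le_rfl; omega
  generalize hg : (fun j => Nat.find (hex j)) = g
  have hconj : ∀ i j, j < ν i ↔ i < g j := by
    intro i j; rw [← hg]; exact hconj i j
  refine ⟨g, hconj, ?_, ?_, ?_, ?_⟩
  · intro x y hxy
    by_contra hc
    have h1 := hconj (g x) x
    have h2 := hconj (g x) y
    omega
  · by_contra hc
    have h1 := hconj 0 m
    omega
  · by_contra hc
    have h1 := hconj l 0
    omega
  · rw [← hsum]
    have e1 : ∀ j ∈ Finset.range m, g j = ∑ i ∈ Finset.range l, if j < ν i then 1 else 0 := by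
      intro j _
      rw [← Finset.card_filter]
      have : (Finset.range l).filter (fun i => j < ν i) = Finset.range (g j) := by
        ext i
        have h1 := hconj i j
        have h2 := hconj l j
        simp only [Finset.mem_filter, Finset.mem_range]
        omega
      rw [this, Finset.card_range]
    have e2 : ∀ i ∈ Finset.range l, ν i = ∑ j ∈ Finset.range m, if j < ν i then 1 else 0 := by
      intro i _
      rw [← Finset.card_filter]
      have : (Finset.range m).filter (fun j => j < ν i) = Finset.range (ν i) := by
        ext j
        have h1 := ha (Nat.zero_le i)
        simp only [Finset.mem_filter, Finset.mem_range]
        omega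
      rw [this, Finset.card_range]
    rw [Finset.sum_congr rfl e1, Finset.sum_congr rfl e2, Finset.sum_comm]

theorem count_not (D : List Bool) : (D.map not).count true = D.count false := by
  induction D with
  | nil => rfl
  | cons b D ih => cases b <;> simp [ih]

theorem exist_of_not (d : ℕ → Bool) (n : ℕ)
    (h : ∀ ν, Adm ν ((Dl (fun m => !d m) n).count true + 1) (n + 1) → ∃ k, SY (Dl (fun m => !d m) n) ν k)
    (ν : ℕ → ℕ) (hA : Adm ν ((Dl d n).count true + 1) (n + 1)) : ∃ k, SY (Dl d n) ν k := by
  have hc := Dl_count d n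
  obtain ⟨g, hg, hgA⟩ := adm_conj (m := (Dl d n).count false + 1) hA (by omega)
  rw [Dl_not, count_not] at h
  obtain ⟨k, hk⟩ := h g hgA
  obtain ⟨ν', hν', hk'⟩ := hk.transpose
  have : ν' = ν := by
    funext i
    apply le_antisymm
    · by_contra hcon
      have h1 := hν' (ν i) i
      have h2 := hν' i (ν i)
      have h3 := hg i (ν i)
      have h4 := hν' (ν i) i
      omega
    · by_contra hcon
      have h1 := hg i (ν' i)
      have h2 := hν' (ν' i) i
      omega
  subst this
  rw [List.map_map, show not ∘ not = id by funext b; simp, List.map_id] at hk'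
  exact ⟨_, hk'⟩

theorem alt_D (d : ℕ → Bool) (n : ℕ) (h0 : d 0 = false) (h : ∀ m, m + 1 < n → d (m+1) = !d m) :
    (∀ k, n = 2 * k → Dl d n = Dof (1 :: List.replicate k 2)) ∧
    (∀ k, n = 2 * k + 1 → Dl d n = Dof (2 :: List.replicate k 2)) := by
  have hd : ∀ m, m < n → d m = decide (m % 2 = 1) := by
    intro m
    induction m with
    | zero => intro _; simp [h0]
    | succ m ih =>
      intro hm
      rw [h m hm, ih (by omega)]
      rcases Nat.mod_two_eq_zero_or_one m with e | e
      · have : (m+1) % 2 = 1 := by omega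
        simp [e, this]
      · have : (m+1) % 2 = 0 := by omega
        simp [e, this]
  clear h h0
  induction n with
  | zero =>
    constructor
    · intro k hk
      have : k = 0 := by omega
      subst this; rfl
    · intro k hk; omega
  | succ n ih =>
    obtain ⟨i1, i2⟩ := ih (fun m hm => hd m (by omega))
    have hn := hd n (by omega)
    constructor
    · intro k hk
      obtain ⟨k, rfl⟩ : ∃ k', k = k' + 1 := ⟨k-1, by omega⟩
      have := i2 k (by omega)
      have e : n % 2 = 1 := by omega
      simp [Dl, hn, e, this, Dof, List.replicate_succ]
    · intro k hk
      have := i1 k (by omega)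
      have e : n % 2 = 0 := by omega
      simp only [Dl, hn, e, this]
      cases k <;> simp [Dof, List.replicate_succ]

theorem exist_alt (d : ℕ → Bool) (n : ℕ) (h0 : d 0 = false) (h : ∀ m, m + 1 < n → d (m+1) = !d m)
    (ν : ℕ → ℕ) (hA : Adm ν ((Dl d n).count true + 1) (n + 1)) : ∃ k, SY (Dl d n) ν k := by
  obtain ⟨h1, h2⟩ := alt_D d n h0 h
  rcases Nat.even_or_odd' n with ⟨k, hk | hk⟩
  · have e := h1 k hk
    rw [e] at hA ⊢
    rw [Dof_count, List.length_replicate] at hA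
    cases k with
    | zero =>
      obtain ⟨g1, g2, g3, g4⟩ := hA
      simp at g2 g3 g4
      refine ⟨0, ?_⟩
      have := SY.one_row 0 ν (by omega) (fun i hi => by
        have := g1 (show 1 ≤ i by omega); omega)
      simpa [Dof] using this
    | succ k =>
      apply main_one
      convert hA using 1; omega
  · have e := h2 k hk
    rw [e] at hA ⊢
    rw [Dof_count] at hA
    obtain ⟨k, hk, -⟩ := main_rows 2 le_rfl (List.replicate k 2) 2 (by
      intro q hq
      have : q = 2 := by
        simp only [List.mem_cons, List.mem_replicate] at hq
        omega
      omega) ν (by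
        convert hA using 1
        simp; omega)
    exact ⟨k, hk⟩

theorem exist_main (d : ℕ → Bool) (ρ γ : ℕ → ℕ) (n : ℕ)
    (hρ : ∀ m, m < n → ρ (m+1) = if d m then ρ m + 1 else ρ m)
    (hγ : ∀ m, m < n → γ (m+1) = if !d m then γ m + 1 else γ m)
    (hr : ∀ m m', m ≤ n → m' ≤ n → runLen ρ n m ≤ runLen ρ n m' + 1)
    (hc : ∀ m m', m ≤ n → m' ≤ n → runLen γ n m ≤ runLen γ n m' + 1)
    (ν : ℕ → ℕ) (hA : Adm ν ((Dl d n).count true + 1) (n + 1)) : ∃ k, SY (Dl d n) ν k := by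
  have hmin : ∀ f : ℕ → ℕ, ∃ m0, m0 ≤ n ∧ ∀ m, m ≤ n → f m0 ≤ f m := by
    intro f
    obtain ⟨m0, h1, h2⟩ := Finset.exists_min_image (Finset.range (n+1)) f ⟨0, by simp⟩
    exact ⟨m0, by simpa [Nat.lt_succ_iff] using h1, fun m hm => h2 m (by simp; omega)⟩
  obtain ⟨m1, hm1, hm1'⟩ := hmin (runLen ρ n)
  obtain ⟨m2, hm2, hm2'⟩ := hmin (runLen γ n)
  by_cases c1 : 2 ≤ runLen ρ n m1
  · exact exist_rows d ρ n hρ _ c1 (fun m hm => ⟨hm1' m hm, hr m m1 hm hm1⟩) ν hA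
  by_cases c2 : 2 ≤ runLen γ n m2
  · exact exist_of_not d n (exist_rows (fun m => !d m) γ n hγ _ c2 (fun m hm => ⟨hm2' m hm, hc m m2 hm hm2⟩)) ν hA
  have three : ∀ f : ℕ → ℕ, ∀ m, m + 1 < n → f (m+1) = f m → f (m+2) = f m → 3 ≤ runLen f n m := by
    intro f m hm e1 e2
    have : ({m, m+1, m+2} : Finset ℕ) ⊆ (Finset.range (n+1)).filter fun i => f i = f m := by
      intro i hi
      simp only [Finset.mem_insert, Finset.mem_singleton] at hi
      simp only [Finset.mem_filter, Finset.mem_range]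
      rcases hi with rfl | rfl | rfl
      · exact ⟨by omega, rfl⟩
      · exact ⟨by omega, e1⟩
      · exact ⟨by omega, e2⟩
    have h2 := Finset.card_le_card this
    rw [Finset.card_insert_of_notMem (by simp), Finset.card_insert_of_notMem (by simp),
      Finset.card_singleton] at h2
    exact h2
  have halt : ∀ m, m + 1 < n → d (m+1) = !d m := by
    intro m hm
    have r1 := hρ m (by omega)
    have r2 := hρ (m+1) (by omega)
    have g1 := hγ m (by omega)
    have g2 := hγ (m+1) (by omega)
    have k1 := hr m m1 (by omega) hm1
    have k2 := hc m m2 (by omega) hm2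
    cases e1 : d m <;> cases e2 : d (m+1) <;> simp only [e1, e2] at r1 r2 g1 g2 ⊢ <;> simp at r1 r2 g1 g2 ⊢
    · have := three ρ m hm r1 (by rw [show m + 2 = m+1+1 by rfl, r2, r1]); omega
    · have := three γ m hm g1 (by rw [show m + 2 = m+1+1 by rfl, g2, g1]); omega
  cases e0 : d 0
  · exact exist_alt d n e0 halt ν hA
  · refine exist_of_not d n (exist_alt (fun m => !d m) n (by simp [e0]) (fun m hm => by simp [halt m hm])) ν hA

def cnt (u : ℕ → ℕ) (n i : ℕ) : ℕ := ((Finset.range (n+1)).filter fun m => u m = i).card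

theorem cnt_succ (u : ℕ → ℕ) (n i : ℕ) : cnt u (n+1) i = cnt u n i + if u (n+1) = i then 1 else 0 := by
  unfold cnt
  rw [Finset.range_add_one (n := n+1), Finset.filter_insert]
  split_ifs with h
  · rw [Finset.card_insert_of_notMem]; simp
  · rfl

theorem cnt_zero (u : ℕ → ℕ) (i : ℕ) : cnt u 0 i = if u 0 = i then 1 else 0 := by
  unfold cnt
  rw [zero_add, Finset.range_one, Finset.filter_singleton]
  split_ifs <;> simp

theorem cnt_congr {u v : ℕ → ℕ} {n : ℕ} (h : ∀ m, m ≤ n → u m = v m) (i : ℕ) : cnt u n i = cnt v n i := by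
  unfold cnt
  congr 1
  apply Finset.filter_congr
  intro m hm
  rw [h m (by simp at hm; omega)]

def IsWord (d : ℕ → Bool) (n : ℕ) (u : ℕ → ℕ) : Prop :=
  (∀ m, m < n → d m = decide (u m < u (m+1))) ∧ ∀ m, m ≤ n → ∀ i, cnt u m (i+1) ≤ cnt u m i

theorem SY.inv {b : Bool} {D : List Bool} {ν : ℕ → ℕ} {k : ℕ} (h : SY (b :: D) ν k) :
    ∃ ν0 k0, SY D ν0 k0 ∧ b = decide (k0 < k) ∧ ν = Function.update ν0 k (ν0 k + 1) := by
  cases h with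
  | step D ν0 k0 k' h h' => exact ⟨ν0, k0, h, rfl, rfl⟩

theorem word_of_SY (d : ℕ → Bool) (n : ℕ) : ∀ ν k, SY (Dl d n) ν k →
    ∃ u : ℕ → ℕ, u n = k ∧ IsWord d n u ∧ ∀ i, cnt u n i = ν i := by
  induction n with
  | zero =>
    intro ν k h
    simp only [Dl] at h
    cases h
    have : ∀ i, cnt (fun _ => 0) 0 i = Function.update (fun _ => 0) 0 1 i := by
      intro i
      rw [cnt_zero]
      by_cases hi : i = 0
      · simp [hi]
      · simp [hi, Ne.symm hi]
    refine ⟨fun _ => 0, rfl, ⟨fun m hm => by omega, ?_⟩, this⟩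
    intro m hm i
    have : m = 0 := by omega
    subst this
    rw [this, this]; simp
  | succ n ih =>
    intro ν k h
    have hanti := h.adm.1
    simp only [Dl] at h
    obtain ⟨ν0, k0, h0, hb, hν⟩ := h.inv
    obtain ⟨u, hu1, ⟨hu2, hu3⟩, hu4⟩ := ih ν0 k0 h0
    have hne : ∀ m, m ≤ n → Function.update u (n+1) k m = u m := by
      intro m hm
      have : m ≠ n + 1 := by omega
      simp [this]
    have hc : ∀ i, cnt (Function.update u (n+1) k) (n+1) i = ν i := by
      intro i
      rw [cnt_succ, cnt_congr hne, hu4, hν]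
      by_cases hi : i = k
      · simp [hi]
      · simp [hi, Ne.symm hi]
    refine ⟨Function.update u (n+1) k, by simp, ⟨?_, ?_⟩, hc⟩
    · intro m hm
      rcases Nat.lt_or_eq_of_le (Nat.lt_succ_iff.1 hm) with h | h
      · rw [hne m h.le, hne (m+1) h]; exact hu2 m h
      · subst h
        rw [hne m le_rfl, hu1, hb]; simp
    · intro m hm i
      rcases Nat.lt_or_eq_of_le hm with h | h
      · have : ∀ m', m' ≤ m → Function.update u (n+1) k m' = u m' := fun m' hm' => hne m' (by omega)
        rw [cnt_congr this, cnt_congr this]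
        exact hu3 m (by omega) i
      · subst h
        rw [hc, hc]; exact hanti (Nat.le_succ i)

theorem SY_of_word (d : ℕ → Bool) (n : ℕ) (u : ℕ → ℕ) (h : IsWord d n u) :
    SY (Dl d n) (cnt u n) (u n) := by
  induction n with
  | zero =>
    have h0 : u 0 = 0 := by
      by_contra hc
      have := h.2 0 le_rfl (u 0 - 1)
      rw [cnt_zero, cnt_zero, Nat.sub_add_cancel (by omega), if_pos rfl, if_neg (by omega)] at this
      omega
    rw [h0]
    have : cnt u 0 = Function.update (fun _ => 0) 0 1 := by
      funext i
      rw [cnt_zero, h0]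
      by_cases hi : i = 0
      · simp [hi]
      · simp [hi, Ne.symm hi]
    rw [this]; exact SY.one
  | succ n ih =>
    have h1 := ih ⟨fun m hm => h.1 m (by omega), fun m hm => h.2 m (by omega)⟩
    refine SY.step' h1 ?_ (h.1 n (by omega)) (by rw [cnt_succ]; simp) ?_
    · by_cases h0 : u (n+1) = 0
      · exact Or.inl h0
      · right
        have := h.2 (n+1) le_rfl (u (n+1) - 1)
        rw [Nat.sub_add_cancel (by omega), cnt_succ, cnt_succ, if_pos rfl, if_neg (by omega)] at this
        omega
    · intro i hi
      rw [cnt_succ, if_neg (Ne.symm hi)]; rfl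

namespace SkewShape

def IsSeq (R : SkewShape) (n : ℕ) (c : ℕ → ℕ × ℕ) (d : ℕ → Bool) : Prop :=
  R.cells = (Finset.range (n+1)).image c ∧
  ∀ m, m < n → (d m = true ∧ (c (m+1)).1 = (c m).1 + 1 ∧ (c (m+1)).2 = (c m).2) ∨
    (d m = false ∧ (c (m+1)).1 = (c m).1 ∧ (c (m+1)).2 + 1 = (c m).2)

theorem IsSeq.mono {R : SkewShape} {n : ℕ} {c : ℕ → ℕ × ℕ} {d : ℕ → Bool} (h : R.IsSeq n c d) (m t : ℕ)
    (ht : m + t ≤ n) : (c m).1 ≤ (c (m+t)).1 ∧ (c (m+t)).2 ≤ (c m).2 ∧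
      (c (m+t)).1 + (c m).2 = (c m).1 + (c (m+t)).2 + t := by
  induction t with
  | zero => simp
  | succ t ih =>
    have := ih (by omega)
    rw [← Nat.add_assoc]
    rcases h.2 (m+t) (by omega) with h | h <;> omega

theorem IsSeq.mono' {R : SkewShape} {n : ℕ} {c : ℕ → ℕ × ℕ} {d : ℕ → Bool} (h : R.IsSeq n c d) {m m' : ℕ}
    (h1 : m ≤ m') (h2 : m' ≤ n) : (c m).1 ≤ (c m').1 ∧ (c m').2 ≤ (c m).2 ∧
      (c m').1 + (c m).2 + m = (c m).1 + (c m').2 + m' := by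
  have := h.mono m (m' - m) (by omega)
  rw [Nat.add_sub_cancel' h1] at this
  omega

theorem IsSeq.inj {R : SkewShape} {n : ℕ} {c : ℕ → ℕ × ℕ} {d : ℕ → Bool} (h : R.IsSeq n c d) {m m' : ℕ}
    (h1 : m ≤ n) (h2 : m' ≤ n) (he : c m = c m') : m = m' := by
  rcases le_total m m' with hle | hle
  · have := h.mono' hle h2; rw [he] at this; omega
  · have := h.mono' hle h1; rw [he] at this; omega

theorem IsSeq.reads {R : SkewShape} {n : ℕ} {c : ℕ → ℕ × ℕ} {d : ℕ → Bool} (h : R.IsSeq n c d) {m m' : ℕ}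
    (h1 : m ≤ n) (h2 : m' ≤ n) : ReadsBefore (c m) (c m') ↔ m ≤ m' := by
  unfold ReadsBefore
  rcases le_total m m' with hle | hle
  · have := h.mono' hle h2; omega
  · have := h.mono' hle h1; omega

theorem IsSeq.card {R : SkewShape} {n : ℕ} {c : ℕ → ℕ × ℕ} {d : ℕ → Bool} (h : R.IsSeq n c d)
    (P : ℕ × ℕ → Prop) [DecidablePred P] :
    (R.cells.filter P).card = ((Finset.range (n+1)).filter fun m => P (c m)).card := by
  rw [h.1, Finset.filter_image, Finset.card_image_of_injOn]
  intro m hm m' hm' he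
  simp at hm hm'
  exact h.inj (by omega) (by omega) he

theorem IsSeq.mem {R : SkewShape} {n : ℕ} {c : ℕ → ℕ × ℕ} {d : ℕ → Bool} (h : R.IsSeq n c d) {e : ℕ × ℕ} :
    e ∈ R.cells ↔ ∃ m, m ≤ n ∧ c m = e := by
  rw [h.1]; simp [Nat.lt_succ_iff]

theorem IsSeq.mem' {R : SkewShape} {n : ℕ} {c : ℕ → ℕ × ℕ} {d : ℕ → Bool} (h : R.IsSeq n c d) {m : ℕ}
    (hm : m ≤ n) : c m ∈ R.cells := h.mem.2 ⟨m, hm, rfl⟩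

theorem IsSeq.prefix_card {R : SkewShape} {n : ℕ} {c : ℕ → ℕ × ℕ} {d : ℕ → Bool} (h : R.IsSeq n c d)
    {T : ℕ × ℕ → ℕ} {u : ℕ → ℕ} (hu : ∀ m, m ≤ n → T (c m) = u m + 1) {m : ℕ} (hm : m ≤ n) (k : ℕ) :
    (R.cells.filter fun e => T e = k + 1 ∧ ReadsBefore e (c m)).card = cnt u m k := by
  rw [h.card]
  unfold cnt
  congr 1
  ext i
  simp only [Finset.mem_filter, Finset.mem_range]
  constructor
  · rintro ⟨h1, h2, h3⟩
    rw [h.reads (by omega) hm] at h3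
    rw [hu i (by omega)] at h2
    omega
  · rintro ⟨h1, h2⟩
    rw [h.reads (by omega) hm, hu i (by omega)]
    omega

theorem IsSeq.content_eq {R : SkewShape} {n : ℕ} {c : ℕ → ℕ × ℕ} {d : ℕ → Bool} (h : R.IsSeq n c d)
    {T : ℕ × ℕ → ℕ} {u : ℕ → ℕ} (hu : ∀ m, m ≤ n → T (c m) = u m + 1) (k : ℕ) :
    R.content T (k+1) = cnt u n k := by
  unfold content
  rw [h.card]
  unfold cnt
  congr 1
  apply Finset.filter_congr
  intro i hi
  simp at hi
  rw [hu i (by omega)]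
  omega

theorem IsSeq.supp_iff {R : SkewShape} {n : ℕ} {c : ℕ → ℕ × ℕ} {d : ℕ → Bool} (h : R.IsSeq n c d)
    (lam : Multiset ℕ) : lam ∈ R.supp ↔ 0 ∉ lam ∧ ∃ k, SY (Dl d n) (part lam) k := by
  constructor
  · rintro ⟨h0, T, ⟨⟨hT1, hT2, hT3⟩, hLR⟩, hcont⟩
    refine ⟨h0, ?_⟩
    have hu : ∀ m, m ≤ n → T (c m) = (fun m => T (c m) - 1) m + 1 := by
      intro m hm
      have := hT1 _ (h.mem' hm)
      simp only; omega
    have hw : IsWord d n (fun m => T (c m) - 1) := by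
      constructor
      · intro m hm
        have m1 := h.mem' (show m ≤ n by omega)
        have m2 := h.mem' (show m + 1 ≤ n by omega)
        have p1 := hT1 _ m1
        have p2 := hT1 _ m2
        rcases h.2 m hm with ⟨h1, h2, h3⟩ | ⟨h1, h2, h3⟩
        · have := hT3 (c m).1 (c (m+1)).1 (c m).2 m1 (by rw [← h3]; exact m2) (by omega)
          rw [← h3] at this
          rw [h1]; symm
          simp only [decide_eq_true_eq]
          have e : T ((c m).1, (c (m+1)).2) = T (c m) := by rw [h3]
          rw [e] at this
          have e2 : T ((c (m+1)).1, (c (m+1)).2) = T (c (m+1)) := rfl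
          omega
        · have := hT2 (c m).1 (c (m+1)).2 (c m).2 (by rw [← h2]; exact m2) m1 (by omega)
          have e : T ((c m).1, (c (m+1)).2) = T (c (m+1)) := by rw [← h2]
          have e2 : T ((c m).1, (c m).2) = T (c m) := rfl
          rw [h1]; symm
          simp only [decide_eq_false_iff_not]
          omega
      · intro m hm i
        have := hLR _ (h.mem' hm) i
        rwa [h.prefix_card hu hm, h.prefix_card hu hm] at this
    have := SY_of_word d n _ hw
    refine ⟨T (c n) - 1, ?_⟩
    convert this using 1
    funext i
    rw [← hcont, h.content_eq hu]
  · rintro ⟨h0, k, hk⟩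
    obtain ⟨u, -, ⟨hw1, hw2⟩, hw3⟩ := word_of_SY d n _ _ hk
    refine ⟨h0, fun e => u (e.1 + (c 0).2 - (c 0).1 - e.2) + 1, ?_⟩
    have hu : ∀ m, m ≤ n → (fun e : ℕ × ℕ => u (e.1 + (c 0).2 - (c 0).1 - e.2) + 1) (c m) = u m + 1 := by
      intro m hm
      have := h.mono' (Nat.zero_le m) hm
      simp only
      congr 2; omega
    generalize (fun e : ℕ × ℕ => u (e.1 + (c 0).2 - (c 0).1 - e.2) + 1) = T at hu
    have hrow : ∀ t m, m + t ≤ n → (c (m+t)).1 = (c m).1 → u (m+t) ≤ u m := by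
      intro t
      induction t with
      | zero => intro m _ _; simp
      | succ t ih =>
        intro m hm he
        have h1 := h.mono m t (by omega)
        have h2 := h.mono (m+t) 1 (by omega)
        have h3 := ih m (by omega) (by rw [← Nat.add_assoc] at he; omega)
        have h4 := hw1 (m+t) (by omega)
        rw [← Nat.add_assoc] at he
        rw [← Nat.add_assoc m t 1]
        rcases h.2 (m+t) (by omega) with h5 | h5
        · omega
        · rw [h5.1] at h4
          have := decide_eq_false_iff_not.1 h4.symm
          omega
    have hcol : ∀ t m, m + t ≤ n → (c (m+t)).2 = (c m).2 → u m + t ≤ u (m+t) := by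
      intro t
      induction t with
      | zero => intro m _ _; simp
      | succ t ih =>
        intro m hm he
        have h1 := h.mono m t (by omega)
        have h2 := h.mono (m+t) 1 (by omega)
        have h3 := ih m (by omega) (by rw [← Nat.add_assoc] at he; omega)
        have h4 := hw1 (m+t) (by omega)
        rw [← Nat.add_assoc] at he
        rw [← Nat.add_assoc m t 1]
        rcases h.2 (m+t) (by omega) with h5 | h5
        · rw [h5.1] at h4
          have := of_decide_eq_true h4.symm
          omega
        · omega
    refine ⟨⟨⟨?_, ?_, ?_⟩, ?_⟩, ?_⟩
    · intro e he
      obtain ⟨m, hm, rfl⟩ := h.mem.1 he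
      rw [hu m hm]; omega
    · intro i j j' h1 h2 hjj
      obtain ⟨m, hm, e1⟩ := h.mem.1 h1
      obtain ⟨m', hm', e2⟩ := h.mem.1 h2
      rw [← e1, ← e2, hu m hm, hu m' hm']
      have hle : m' ≤ m := by
        by_contra hc
        have := h.mono' (show m ≤ m' by omega) hm'
        rw [e1, e2] at this
        simp only at this
        omega
      have := hrow (m - m') m' (by omega) (by rw [Nat.add_sub_cancel' hle, e1, e2])
      rw [Nat.add_sub_cancel' hle] at this
      omega
    · intro i i' j h1 h2 hii
      obtain ⟨m, hm, e1⟩ := h.mem.1 h1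
      obtain ⟨m', hm', e2⟩ := h.mem.1 h2
      rw [← e1, ← e2, hu m hm, hu m' hm']
      have hlt : m < m' := by
        by_contra hc
        have := h.mono' (show m' ≤ m by omega) hm
        rw [e1, e2] at this
        simp only at this
        omega
      have := hcol (m' - m) m (by omega) (by rw [Nat.add_sub_cancel' hlt.le, e1, e2])
      rw [Nat.add_sub_cancel' hlt.le] at this
      omega
    · intro e he k
      obtain ⟨m, hm, rfl⟩ := h.mem.1 he
      rw [h.prefix_card hu hm, h.prefix_card hu hm]
      exact hw2 m hm k
    · intro i
      rw [h.content_eq hu, hw3]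

end SkewShape

namespace SkewShape

theorem mem_cells' {A : SkewShape} {e : ℕ × ℕ} : e ∈ A.cells ↔ e ∈ A.outer ∧ e ∉ A.inner := by
  unfold cells
  rw [Finset.mem_sdiff, YoungDiagram.mem_cells, YoungDiagram.mem_cells]

theorem conv {A : SkewShape} {a b a' b' x y : ℕ} (h : (a, b) ∈ A.cells) (h' : (a', b') ∈ A.cells)
    (h1 : a ≤ x) (h2 : x ≤ a') (h3 : b ≤ y) (h4 : y ≤ b') : (x, y) ∈ A.cells := by
  rw [mem_cells'] at h h' ⊢
  exact ⟨A.outer.up_left_mem h2 h4 h'.1, fun hc => h.2 (A.inner.up_left_mem h1 h3 hc)⟩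

theorem diag_lt {A : SkewShape} (hA : A.Ribbon) {i j i' j' : ℕ} (h : (i, j) ∈ A.cells)
    (h' : (i', j') ∈ A.cells) (hd : i + j' = i' + j) (hlt : i < i') : False := by
  refine hA.2 i j ⟨h, ?_, ?_, ?_⟩ <;> apply conv h h' <;> omega

theorem diag_eq {A : SkewShape} (hA : A.Ribbon) {e f : ℕ × ℕ} (h : e ∈ A.cells)
    (h' : f ∈ A.cells) (hd : e.1 + f.2 = f.1 + e.2) : e = f := by
  obtain ⟨i, j⟩ := e
  obtain ⟨i', j'⟩ := f
  simp only at hd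
  rcases lt_trichotomy i i' with hl | hl | hl
  · exact (diag_lt hA h h' hd hl).elim
  · ext <;> simp only <;> omega
  · exact (diag_lt hA h' h hd.symm hl).elim

theorem next_mem {A : SkewShape} (hA : A.Ribbon) {e f : ℕ × ℕ} (h : e ∈ A.cells)
    (h' : f ∈ A.cells) (hd : e.1 + f.2 < f.1 + e.2) :
    (e.1 + 1, e.2) ∈ A.cells ∨ (1 ≤ e.2 ∧ (e.1, e.2 - 1) ∈ A.cells) := by
  by_contra hc
  push Not at hc
  obtain ⟨hc1, hc2⟩ := hc
  have key : ∀ g ∈ A.cells, ¬ (g.1 ≤ e.1 ∧ e.2 ≤ g.2) → e.1 < g.1 ∧ g.2 < e.2 := by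
    intro g hg hn
    by_contra hcc
    rcases Nat.lt_or_ge e.1 g.1 with h1 | h1
    · exact hc1 (conv (a := e.1) (b := e.2) (a' := g.1) (b' := g.2) h hg (by omega) (by omega) (by omega) (by omega))
    · exact hc2 (by omega) (conv (a := g.1) (b := g.2) (a' := e.1) (b' := e.2) hg h (by omega) (by omega) (by omega) (by omega))
  apply hA.1.2
  refine ⟨A.cells.filter fun g => g.1 ≤ e.1 ∧ e.2 ≤ g.2, A.cells.filter fun g => ¬ (g.1 ≤ e.1 ∧ e.2 ≤ g.2),
    ⟨e, by simp [h]⟩, ⟨f, ?_⟩, Finset.filter_union_filter_not_eq _ _, (by ext g; simp +contextual), ?_⟩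
  · rw [Finset.mem_filter]; exact ⟨h', by omega⟩
  · intro b hb c hcm
    rw [Finset.mem_filter] at hb hcm
    have := key c hcm.1 hcm.2
    omega

def nxt (A : SkewShape) (e : ℕ × ℕ) : ℕ × ℕ :=
  if (e.1 + 1, e.2) ∈ A.cells then (e.1 + 1, e.2) else (e.1, e.2 - 1)

theorem nxt_spec {A : SkewShape} (hA : A.Ribbon) {e f : ℕ × ℕ} (h : e ∈ A.cells)
    (h' : f ∈ A.cells) (hd : e.1 + f.2 < f.1 + e.2) :
    A.nxt e ∈ A.cells ∧ (((e.1 + 1, e.2) ∈ A.cells ∧ (A.nxt e).1 = e.1 + 1 ∧ (A.nxt e).2 = e.2) ∨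
      ((e.1 + 1, e.2) ∉ A.cells ∧ (A.nxt e).1 = e.1 ∧ (A.nxt e).2 + 1 = e.2)) := by
  unfold nxt
  split_ifs with hh
  · exact ⟨hh, Or.inl ⟨hh, rfl, rfl⟩⟩
  · rcases next_mem hA h h' hd with h1 | h1
    · exact (hh h1).elim
    · refine ⟨h1.2, Or.inr ⟨hh, rfl, ?_⟩⟩
      simp only; omega

theorem exists_seq {A : SkewShape} (hA : A.Ribbon) : ∃ n c d, A.IsSeq n c d := by
  obtain ⟨e0, he0, hmin⟩ := Finset.exists_min_image A.cells (fun e => (e.1 : ℤ) - e.2) hA.1.1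
  obtain ⟨e1, he1, hmax⟩ := Finset.exists_max_image A.cells (fun e => (e.1 : ℤ) - e.2) hA.1.1
  have key : ∀ m : ℕ, ∀ f ∈ A.cells, e0.1 + f.2 + m ≤ f.1 + e0.2 →
      (A.nxt)^[m] e0 ∈ A.cells ∧ e0.1 + ((A.nxt)^[m] e0).2 + m = ((A.nxt)^[m] e0).1 + e0.2 := by
    intro m
    induction m with
    | zero => intro f hf h; exact ⟨he0, by simp⟩
    | succ m ih =>
      intro f hf h
      obtain ⟨h1, h2⟩ := ih f hf (by omega)
      rw [Function.iterate_succ_apply']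
      have := nxt_spec hA h1 hf (by omega)
      refine ⟨this.1, ?_⟩
      omega
  have hle : e0.1 + e1.2 ≤ e1.1 + e0.2 := by have := hmin e1 he1; omega
  obtain ⟨n, hn⟩ : ∃ n, n = e1.1 + e0.2 - (e0.1 + e1.2) := ⟨_, rfl⟩
  refine ⟨n, fun m => (A.nxt)^[m] e0, fun m => decide ((((A.nxt)^[m] e0).1 + 1, ((A.nxt)^[m] e0).2) ∈ A.cells), ?_, ?_⟩
  · ext f
    rw [Finset.mem_image]
    constructor
    · intro hf
      have h1 := hmin f hf
      have h2 := hmax f hf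
      refine ⟨f.1 + e0.2 - (e0.1 + f.2), by rw [Finset.mem_range]; omega, ?_⟩
      obtain ⟨h3, h4⟩ := key (f.1 + e0.2 - (e0.1 + f.2)) f hf (by omega)
      exact diag_eq hA h3 hf (by omega)
    · rintro ⟨m, hm, rfl⟩
      rw [Finset.mem_range] at hm
      exact (key m e1 he1 (by omega)).1
  · intro m hm
    obtain ⟨h1, h2⟩ := key m e1 he1 (by omega)
    have := (nxt_spec hA h1 he1 (by omega)).2
    simp only [Function.iterate_succ_apply', decide_eq_true_eq, decide_eq_false_iff_not]
    exact this

theorem IsSeq.size {R : SkewShape} {n : ℕ} {c : ℕ → ℕ × ℕ} {d : ℕ → Bool} (h : R.IsSeq n c d) :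
    R.size = n + 1 := by
  have := h.card (fun _ => True)
  simpa [SkewShape.size] using this

theorem IsSeq.numRows {R : SkewShape} {n : ℕ} {c : ℕ → ℕ × ℕ} {d : ℕ → Bool} (h : R.IsSeq n c d) :
    R.numRows = (Dl d n).count true + 1 := by
  have key : ∀ m, m ≤ n → (c m).1 = (c 0).1 + (Dl d m).count true ∧
      (Finset.range (m+1)).image (fun i => (c i).1) = Finset.Icc (c 0).1 (c m).1 := by
    intro m
    induction m with
    | zero => intro _; simp [Dl]
    | succ m ih =>
      intro hm
      obtain ⟨h1, h2⟩ := ih (by omega)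
      rw [Finset.range_add_one, Finset.image_insert, h2]
      simp only [Dl]
      rcases h.2 m hm with ⟨h3, h4, h5⟩ | ⟨h3, h4, h5⟩
      · rw [h3, List.count_cons_self]
        refine ⟨by omega, ?_⟩
        ext x
        rw [Finset.mem_insert, Finset.mem_Icc, Finset.mem_Icc]
        omega
      · rw [h3, List.count_cons_of_ne (by simp)]
        refine ⟨by omega, ?_⟩
        ext x
        rw [Finset.mem_insert, Finset.mem_Icc, Finset.mem_Icc]
        omega
  obtain ⟨h1, h2⟩ := key n le_rfl
  unfold SkewShape.numRows rowSet
  rw [h.1, Finset.image_image]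
  change ((Finset.range (n+1)).image (fun i => (c i).1)).card = _
  rw [h2, Nat.card_Icc]
  omega

theorem supp_char {R : SkewShape} (hR : R.Ribbon) (hE : R.Equitable) (lam : Multiset ℕ) :
    lam ∈ R.supp ↔ 0 ∉ lam ∧ Adm (part lam) R.numRows R.size := by
  obtain ⟨n, c, d, h⟩ := exists_seq hR
  rw [h.supp_iff, h.numRows, h.size]
  refine and_congr_right fun h0 => ⟨?_, ?_⟩
  · rintro ⟨k, hk⟩
    obtain ⟨a1, a2, a3, a4, a5⟩ := hk.adm
    have e1 := Dl_length d n
    have e2 := Dl_count d n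
    refine ⟨a1, a3, by omega, by omega⟩
  · intro hA
    have hγ0 : ∀ m, m ≤ n → (c m).2 ≤ (c 0).2 := fun m hm => (h.mono' (Nat.zero_le m) hm).2.1
    have er : ∀ m, m ≤ n → runLen (fun i => (c i).1) n m = R.rowLen (c m).1 := by
      intro m hm
      unfold runLen rowLen
      rw [h.card]
    have ec : ∀ m, m ≤ n → runLen (fun i => (c 0).2 - (c i).2) n m = R.colLen (c m).2 := by
      intro m hm
      unfold runLen colLen
      rw [h.card]
      congr 1
      apply Finset.filter_congr
      intro i hi
      rw [Finset.mem_range] at hi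
      have := hγ0 m hm
      have := hγ0 i (by omega)
      simp only
      omega
    refine exist_main d (fun i => (c i).1) (fun i => (c 0).2 - (c i).2) n ?_ ?_ ?_ ?_ _ hA
    · intro m hm
      rcases h.2 m hm with ⟨h3, h4, h5⟩ | ⟨h3, h4, h5⟩ <;> simp [h3, h4]
    · intro m hm
      have := hγ0 m hm.le
      have := hγ0 (m+1) hm
      rcases h.2 m hm with ⟨h3, h4, h5⟩ | ⟨h3, h4, h5⟩
      · simp [h3, h5]
      · simp [h3]; omega
    · intro m m' hm hm'
      rw [er m hm, er m' hm']
      exact hE.1 _ (Finset.mem_image_of_mem _ (h.mem' hm)) _ (Finset.mem_image_of_mem _ (h.mem' hm'))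
    · intro m m' hm hm'
      rw [ec m hm, ec m' hm']
      exact hE.2 _ (Finset.mem_image_of_mem _ (h.mem' hm)) _ (Finset.mem_image_of_mem _ (h.mem' hm'))

end SkewShape

theorem part_hook (a k : ℕ) (ha : 1 ≤ a) (i : ℕ) :
    part (a ::ₘ Multiset.replicate k 1) i = if i = 0 then a else if i ≤ k then 1 else 0 := by
  have hs : (a ::ₘ Multiset.replicate k 1).sort (· ≥ ·) = a :: List.replicate k 1 := by
    rw [Multiset.sort_cons]
    · congr 1
      rw [← Multiset.coe_replicate]
      rw [Multiset.coe_sort]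
      apply List.eq_replicate_iff.2
      constructor
      · simp
      · intro b hb
        rw [List.mem_mergeSort] at hb
        exact (List.mem_replicate.1 hb).2
    · intro b hb
      rw [Multiset.mem_replicate] at hb
      omega
  unfold part
  rw [hs]
  rcases i with _ | i
  · simp
  · rw [List.getD_cons_succ]
    simp only [Nat.succ_ne_zero, if_false]
    split_ifs with h
    · rw [List.getD_eq_getElem _ _ (by simp; omega)]; simp
    · rw [List.getD_eq_default _ _ (by simp; omega)]

theorem hook_adm (l N : ℕ) (h1 : 1 ≤ l) (h2 : l ≤ N) :
    Adm (part ((N + 1 - l) ::ₘ Multiset.replicate (l - 1) 1)) l N := by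
  have hp := part_hook (N + 1 - l) (l - 1) (by omega)
  refine ⟨?_, ?_, ?_, ?_⟩
  · intro i j hij
    rw [hp, hp]
    split_ifs <;> omega
  · rw [hp, if_neg (by omega), if_neg (by omega)]
  · rw [hp, if_pos rfl]; omega
  · obtain ⟨k, rfl⟩ : ∃ k, l = k + 1 := ⟨l - 1, by omega⟩
    rw [Finset.sum_range_succ']
    have : ∀ i ∈ Finset.range k, part ((N + 1 - (k+1)) ::ₘ Multiset.replicate (k + 1 - 1) 1) (i+1) = 1 := by
      intro i hi
      rw [Finset.mem_range] at hi
      rw [hp, if_neg (by omega), if_pos (by omega)]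
    rw [Finset.sum_congr rfl this, hp, if_pos rfl]
    simp; omega

theorem numRows_le_of_supp {R R' : SkewShape} (hR : R.Ribbon) (hE : R.Equitable) (hR' : R'.Ribbon)
    (hE' : R'.Equitable) (hs : R.size = R'.size) (h : R.supp = R'.supp) : R'.numRows ≤ R.numRows := by
  by_contra hc
  have h1 : R'.numRows ≤ R'.size := Finset.card_image_le
  have hA := hook_adm R'.numRows R'.size (by omega) h1
  have hm : ((R'.size + 1 - R'.numRows) ::ₘ Multiset.replicate (R'.numRows - 1) 1) ∈ R'.supp := by
    rw [SkewShape.supp_char hR' hE']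
    refine ⟨?_, hA⟩
    rw [Multiset.mem_cons, Multiset.mem_replicate]
    omega
  rw [← h, SkewShape.supp_char hR hE] at hm
  have := hm.2.2.1
  rw [part_hook _ _ (by omega)] at this
  split_ifs at this <;> omega

/-- If `R` and `R'` are equitable ribbons, each with `N` boxes, then
`supp R = supp R'` if and only if `R` and `R'` have the same number of nonempty
rows. -/
theorem equitable_ribbon_supp_eq_iff (N : ℕ) (R R' : SkewShape)
    (hR : R.Ribbon) (heqR : R.Equitable) (hR' : R'.Ribbon) (heqR' : R'.Equitable)
    (hs : R.size = N) (hs' : R'.size = N) :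
    R.supp = R'.supp ↔ R.numRows = R'.numRows := by
  subst hs
  constructor
  · intro h
    exact le_antisymm (numRows_le_of_supp hR' heqR' hR heqR hs' h.symm)
      (numRows_le_of_supp hR heqR hR' heqR' hs'.symm h)
  · intro h
    ext lam
    rw [SkewShape.supp_char hR heqR, SkewShape.supp_char hR' heqR', h, hs']
end

section
/- A connected skew shape A with N boxes is maximal in the support-containment order among connected skew shapes with N boxes — that is, there is no connected skew shape B with N boxes such that supp(A) ⊆ supp(B) and supp(A) ≠ supp(B) — if and only if A is an equitable ribbon. -/
namespace EqRib

open Finset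

def Bad (lam : ℕ → ℕ) (l r a : ℕ) : Prop :=
  lam (l - 2) = lam (l - 1) ∨ (l = r ∧ lam (l - 1) = a) ∨ (l = 2 ∧ lam 0 = r + 1 ∧ lam 1 = r)

lemma yexists (L0 L1 Ln p n r a N : ℕ) (hlr : n + 2 ≤ r) (hp : 0 < p)
    (b1 : N ≤ (n + 2) * L0) (b2 : L0 + (n + 1) * p ≤ N) (b3 : 2 * L1 ≤ N) (hpL : p ≤ L1)
    (hL : L1 ≤ L0) (hLn : Ln ≤ L0)
    (hc : L0 + r ≤ N + 1) (ha : 2 ≤ a) (h1 : r * a + 1 ≤ N + r) (h2 : N + 1 ≤ r * a + r)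
    (h3 : 2 * r ≤ N + 1) (E1 : Prop) (hE1 : E1 → p < Ln ∧ ¬ (n + 2 = r ∧ p = a)) :
    L1 + a + r ≤ N + 2 ∧
    ∃ y, y < a ∧ y + p ≤ L0 ∧ a ≤ p + y ∧ (n + 2 = r → p + y = a) ∧ L0 + a + r ≤ N + 2 + y ∧
      (E1 → 1 ≤ y) ∧ (y + N + 2 = L0 + a + r ∨ y = 0 ∨ y + p = a ∨ (y = 1 ∧ E1)) := by
  have hK : L1 + a + r ≤ N + 2 := by
    rcases Nat.lt_or_ge a 3 with h | h
    · have : a = 2 := by omega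
      subst this
      omega
    · have : (r - 2) * (a - 3) ≥ 0 := Nat.zero_le _
      obtain ⟨r', rfl⟩ := Nat.exists_eq_add_of_le (show 2 ≤ r by omega)
      obtain ⟨a', rfl⟩ := Nat.exists_eq_add_of_le h
      have : N + (2 + r') ≥ (2 + r') * (3 + a') + 1 := h1
      have h5 : N + 5 ≥ 2 * (3 + a') + 2 * (2 + r') := by nlinarith
      omega
  refine ⟨hK, ?_⟩
  have hA : a ≤ L0 := by
    by_contra hcon
    have : L0 + 1 ≤ a := by omega
    have : (n + 2) * L0 ≤ r * L0 := Nat.mul_le_mul_right _ hlr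
    have : r * (L0 + 1) ≤ r * a := Nat.mul_le_mul_left _ ‹_›
    have e : r * (L0 + 1) = r * L0 + r := by ring
    omega
  have hpa : n + 2 = r → p ≤ a := by
    intro h
    subst h
    by_contra hcon
    have : (n + 2) * (a + 1) ≤ (n + 2) * p := Nat.mul_le_mul_left _ (by omega)
    have e : (n + 2) * (a + 1) = (n + 2) * a + (n + 2) := by ring
    have e2 : (n + 2) * p = (n + 1) * p + p := by ring
    omega
  have hx : n + 2 = r → L0 + r + p ≤ N + 2 := by
    intro h
    subst h
    obtain ⟨p', rfl⟩ := Nat.exists_eq_add_of_le (show 1 ≤ p by omega)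
    nlinarith
  by_cases hE : E1
  · obtain ⟨g1, g2⟩ := hE1 hE
    refine ⟨max (max (L0 + a + r - (N + 2)) (a - p)) 1, ?_⟩
    refine ⟨by omega, by omega, by omega, ?_, by omega, by omega, ?_⟩
    · intro h; have := hpa h; have := hx h; have : p ≠ a := fun e => g2 ⟨h, e⟩
      omega
    · simp only [hE, and_true]
      omega
  · refine ⟨max (L0 + a + r - (N + 2)) (a - p), ?_⟩
    refine ⟨by omega, by omega, by omega, ?_, by omega, fun h => absurd h hE, ?_⟩
    · intro h; have := hpa h; have := hx h
      omega
    · omega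

lemma step (lam : ℕ → ℕ) (hanti : Antitone lam) (n r a a' N : ℕ) (hlr : n + 2 ≤ r)
    (h0 : lam (n + 2) = 0) (hp : 0 < lam (n + 1)) (hsum : ∑ k ∈ range (n + 2), lam k = N)
    (hc : lam 0 + r ≤ N + 1) (ha : 2 ≤ a) (h1 : r * a + 1 ≤ N + r) (h2 : N + 1 ≤ r * a + r)
    (h3 : 2 * r ≤ N + 1) (ha' : 3 ≤ r → 2 ≤ a') (h2' : N + 2 ≤ a + (r - 1) * a' + r) :
    ∃ mu : ℕ → ℕ, (∀ k, mu k ≤ lam k) ∧ (∀ k, lam (k + 1) ≤ mu k) ∧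
      ∑ k ∈ range (n + 2), mu k + a = N ∧ mu (r - 1) = 0 ∧ mu 0 + a + r ≤ N + 2 ∧
      mu (n + 1) < lam (n + 1) ∧
      (¬ Bad lam (n + 2) r a → ∃ k < n + 1, mu k < lam k) ∧
      (0 < mu (n + 1) → ¬ Bad mu (n + 2) (r - 1) a') := by
  have hge : ∀ k ∈ range (n + 1), lam (n + 1) ≤ lam (k + 1) := fun k hk =>
    hanti (by have := mem_range.1 hk; omega)
  have b1 : N ≤ (n + 2) * lam 0 := by
    rw [← hsum]
    have := Finset.sum_le_card_nsmul (range (n + 2)) lam (lam 0) (fun k _ => hanti (Nat.zero_le k))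
    simpa using this
  have b0 : (n + 1) * lam (n + 1) ≤ ∑ k ∈ range (n + 1), lam (k + 1) := by
    have := Finset.card_nsmul_le_sum (range (n + 1)) (fun k => lam (k + 1)) (lam (n + 1)) hge
    simpa using this
  have hsum' : ∑ k ∈ range (n + 1), lam (k + 1) + lam 0 = N := by
    rw [← hsum, Finset.sum_range_succ' lam (n + 1)]
  have hsum'' : ∑ k ∈ range (n + 1), lam k + lam (n + 1) = N := by
    rw [← hsum, Finset.sum_range_succ lam (n + 1)]
  have b3 : 2 * lam 1 ≤ N := by
    have : lam (0 + 1) ≤ ∑ k ∈ range (n + 1), lam (k + 1) :=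
      Finset.single_le_sum (f := fun k => lam (k + 1)) (fun _ _ => Nat.zero_le _)
        (mem_range.2 (Nat.succ_pos n))
    have : lam 1 ≤ lam 0 := hanti (by omega)
    simp only [zero_add] at *
    omega
  obtain ⟨hK, y, y1, y2, y3, y4, y5, y6, y7⟩ := yexists (lam 0) (lam 1) (lam n) (lam (n + 1)) n r a N
    hlr hp b1 (by omega) b3 (hanti (by omega)) (hanti (by omega)) (hanti (by omega)) hc ha h1 h2 h3
    (¬ Bad lam (n + 2) r a) (by
      intro hb
      simp only [Bad, not_or] at hb
      have hh : lam (n + 1) ≤ lam n := hanti (by omega)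
      obtain ⟨c1, c2, c3⟩ := hb
      simp only [Nat.add_sub_cancel, show n + 2 - 1 = n + 1 by omega] at c1 c2
      exact ⟨by omega, c2⟩)
  set m := lam 0 - y with hm
  set p := lam (n + 1) with hpdef
  let mu : ℕ → ℕ := fun k => if k ≤ n then max (lam (k + 1)) (min (lam k) m) else
    if k = n + 1 then p + y - a else 0
  have mule : ∀ k ≤ n, mu k = max (lam (k + 1)) (min (lam k) m) := fun k hk => if_pos hk
  have mun : mu (n + 1) = p + y - a := by simp [mu]
  have mugt : ∀ k, n + 1 < k → mu k = 0 := fun k hk => by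
    simp only [mu]; rw [if_neg (by omega), if_neg (by omega)]
  have u1 : ∀ k, mu k ≤ lam k := by
    intro k
    rcases Nat.lt_trichotomy k (n + 1) with h | h | h
    · rw [mule k (by omega)]
      have : lam (k + 1) ≤ lam k := hanti (by omega)
      omega
    · subst h; rw [mun]; omega
    · rw [mugt k h]; omega
  have u2 : ∀ k, lam (k + 1) ≤ mu k := by
    intro k
    rcases Nat.lt_or_ge k (n + 1) with h | h
    · rw [mule k (by omega)]; omega
    · have : lam (k + 1) ≤ lam (n + 2) := hanti (by omega)
      omega
  have key : ∀ j ≤ n + 1, ∑ k ∈ range j, mu k + lam 0 = ∑ k ∈ range j, lam k + max (lam j) m := by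
    intro j
    induction j with
    | zero => intro _; simp; omega
    | succ j ih =>
      intro hj
      have := ih (by omega)
      rw [Finset.sum_range_succ, Finset.sum_range_succ, mule j (by omega)]
      have : lam (j + 1) ≤ lam j := hanti (by omega)
      omega
  have keyn := key (n + 1) le_rfl
  rw [max_eq_right (show lam (n + 1) ≤ m by omega)] at keyn
  have u3 : ∑ k ∈ range (n + 1), mu k + y + p = N := by omega
  have u3' : ∑ k ∈ range (n + 2), mu k + a = N := by
    rw [Finset.sum_range_succ, mun]; omega
  refine ⟨mu, u1, u2, u3', ?_, ?_, ?_, ?_, ?_⟩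
  · rcases Nat.lt_or_ge (n + 2) r with h | h
    · exact mugt _ (by omega)
    · rw [show r - 1 = n + 1 by omega, mun]; have := y4 (by omega); omega
  · rw [mule 0 (by omega)]; simp only [zero_add]; omega
  · rw [mun]; omega
  · intro hb
    by_contra hcon
    push Not at hcon
    have : ∑ k ∈ range (n + 1), lam k ≤ ∑ k ∈ range (n + 1), mu k :=
      Finset.sum_le_sum (fun k hk => hcon k (mem_range.1 hk))
    have := y6 hb
    omega
  · intro ht hbad
    have mun' : lam (n + 1) ≤ mu n := u2 n
    rcases hbad with h | ⟨h, h'⟩ | ⟨h, h', h''⟩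
    · simp only [Nat.add_sub_cancel, show n + 2 - 1 = n + 1 by omega] at h
      omega
    · simp only [show n + 2 - 1 = n + 1 by omega] at h'
      have hr : r = n + 3 := by omega
      subst hr
      have ha2 := ha' (by omega)
      have hs2 : ∑ k ∈ range n, mu (k + 1) + mu 0 = ∑ k ∈ range (n + 1), mu k :=
        (Finset.sum_range_succ' mu n).symm
      have hs3 : n * p ≤ ∑ k ∈ range n, mu (k + 1) := by
        have := Finset.card_nsmul_le_sum (range n) (fun k => mu (k + 1)) p (fun k hk =>
          le_trans (hanti (by have := mem_range.1 hk; omega)) (u2 (k + 1)))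
        simpa using this
      have hpt : a' + 1 ≤ p := by omega
      have hmu0 : p ≤ mu 0 := le_trans (hanti (by omega)) (u2 0)
      have e1 : (n + 3 - 1) * a' = n * a' + 2 * a' := by
        rw [show n + 3 - 1 = n + 2 by omega]; ring
      rw [e1] at h2'
      have hpe : p = a' + 1 := by
        by_contra hne
        have : a' + 2 ≤ p := by omega
        have : n * (a' + 2) ≤ n * p := Nat.mul_le_mul_left _ this
        have e2 : n * (a' + 2) = n * a' + 2 * n := by ring
        omega
      have hnp : n * p = n * a' + n := by rw [hpe]; ring
      have hmu0' : mu 0 = p := by omega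
      have hN : N = a + (n * a' + 2 * a') + n + 1 := by omega
      have hsl : ∑ k ∈ range (n + 1), lam (k + 1) ≤ ∑ k ∈ range (n + 1), mu k :=
        Finset.sum_le_sum (fun k _ => u2 k)
      have b0' : (n + 1) * p = n * p + p := by ring
      have hl0 : lam 0 = a + a' := by omega
      have hya : y + 1 = a := by omega
      rcases y7 with q | q | q | ⟨q, q'⟩
      · have : n * a' + a' = 1 := by omega
        omega
      · omega
      · omega
      · have ha2' : a = 2 := by omega
        subst ha2'
        apply q'
        rcases Nat.eq_zero_or_pos n with hn | hn
        · subst hn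
          right; right
          have hl1 : lam 1 = p := hpdef.symm
          refine ⟨rfl, ?_, ?_⟩ <;> omega
        · left
          have : lam n ≤ lam 1 := hanti hn
          have : lam 1 ≤ mu 0 := u2 0
          have : lam (n + 1) ≤ lam n := hanti (by omega)
          simp only [Nat.add_sub_cancel, show n + 2 - 1 = n + 1 by omega]
          omega
    · have hn : n = 0 := by omega
      subst hn
      have e1 : lam 1 ≤ mu 0 := u2 0
      simp only [zero_add, Finset.sum_range_one] at *
      have : p = r := by omega
      rcases y7 with q | q | q | ⟨q, q'⟩
      · omega
      · omega
      · omega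
      · apply q'
        right; right
        refine ⟨rfl, ?_, ?_⟩ <;> omega

end EqRib


namespace EqRib

open Finset

def cnt (w : ℕ → ℕ) (k t : ℕ) : ℕ := ((range t).filter (fun s => w s = k)).card

lemma cnt_succ (w : ℕ → ℕ) (k t : ℕ) : cnt w k (t + 1) = cnt w k t + if w t = k then 1 else 0 := by
  unfold cnt
  rw [Finset.range_add_one, Finset.filter_insert]
  split_ifs with h
  · rw [Finset.card_insert_of_notMem (by simp)]
  · rfl

@[simp] lemma cnt_zero (w : ℕ → ℕ) (k : ℕ) : cnt w k 0 = 0 := by simp [cnt]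

lemma cnt_mono (w : ℕ → ℕ) (k : ℕ) : Monotone (cnt w k) :=
  monotone_nat_of_le_succ (fun t => by rw [cnt_succ]; omega)

lemma cnt_congr {w w' : ℕ → ℕ} {t : ℕ} (h : ∀ s < t, w s = w' s) (k : ℕ) :
    cnt w k t = cnt w' k t := by
  unfold cnt
  congr 1
  apply Finset.filter_congr
  intro s hs
  rw [h s (mem_range.1 hs)]

lemma cnt_pos {w : ℕ → ℕ} {t s : ℕ} (h : s < t) : 0 < cnt w (w s) t := by
  unfold cnt
  exact Finset.card_pos.2 ⟨s, by simp [h]⟩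

lemma exists_of_cnt_pos {w : ℕ → ℕ} {k t : ℕ} (h : 0 < cnt w k t) : ∃ s < t, w s = k := by
  obtain ⟨s, hs⟩ := Finset.card_pos.1 h
  simp at hs
  exact ⟨s, hs⟩

def IsWord (w : ℕ → ℕ) (N : ℕ) (lam : ℕ → ℕ) : Prop :=
  (∀ t ≤ N, ∀ k, cnt w (k + 1) t ≤ cnt w k t) ∧ ∀ k, cnt w k N = lam k

lemma stripword (a : ℕ) : ∀ (d : ℕ → ℕ) (L : ℕ), (∀ k, L ≤ k → d k = 0) →
    ∑ k ∈ range L, d k = a →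
    ∃ f : ℕ → ℕ, (∀ s t, s ≤ t → t < a → f t ≤ f s) ∧ ∀ k, cnt f k a = d k := by
  induction a with
  | zero =>
    intro d L h0 hs
    refine ⟨fun _ => 0, by omega, fun k => ?_⟩
    rw [cnt_zero]
    rcases Nat.lt_or_ge k L with h | h
    · exact ((Finset.sum_eq_zero_iff.1 hs) k (mem_range.2 h)).symm
    · exact (h0 k h).symm
  | succ a ih =>
    intro d L h0 hs
    have hex : ∃ k, 0 < d k := by
      by_contra hcon
      push Not at hcon
      have : ∑ k ∈ range L, d k = 0 := Finset.sum_eq_zero (fun k _ => by have := hcon k; omega)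
      omega
    classical
    set k0 := Nat.find hex with hk0
    have hk : 0 < d k0 := Nat.find_spec hex
    have hmin : ∀ k, 0 < d k → k0 ≤ k := fun k h => Nat.find_min' hex h
    have hkL : k0 < L := by
      by_contra hcon
      have := h0 k0 (by omega)
      omega
    obtain ⟨f, hf1, hf2⟩ := ih (Function.update d k0 (d k0 - 1)) L (by
        intro k hk'
        rw [Function.update_of_ne (by omega)]
        exact h0 k hk') (by
        have e1 := Finset.add_sum_erase (range L) d (mem_range.2 hkL)
        have e2 := Finset.add_sum_erase (range L) (Function.update d k0 (d k0 - 1)) (mem_range.2 hkL)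
        rw [Function.update_self] at e2
        have e3 : ∑ x ∈ (range L).erase k0, Function.update d k0 (d k0 - 1) x
            = ∑ x ∈ (range L).erase k0, d x :=
          Finset.sum_congr rfl (fun x hx => Function.update_of_ne (Finset.ne_of_mem_erase hx) _ _)
        omega)
    refine ⟨fun s => if s < a then f s else k0, ?_, ?_⟩
    · intro s t hst ht
      by_cases h1 : t < a
      · simp only [h1, if_true, show s < a by omega]
        exact hf1 s t hst h1
      · by_cases h2 : s < a
        · simp only [h1, h2, if_true, if_false]
          apply hmin
          have := cnt_pos (w := f) h2
          rw [hf2] at this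
          by_cases h3 : f s = k0
          · rw [h3]; exact hk
          · rwa [Function.update_of_ne h3] at this
        · simp [h1, h2]
    · intro k
      rw [cnt_succ, cnt_congr (w' := f) (fun s hs => by simp [hs]), hf2]
      simp only [lt_irrefl, if_false]
      by_cases h : k = k0
      · subst h; rw [Function.update_self]; simp; omega
      · rw [Function.update_of_ne h, if_neg (fun e => h e.symm)]; simp

lemma cnt_append (w0 f : ℕ → ℕ) (M k m : ℕ) :
    cnt (fun t => if t < M then w0 t else f (t - M)) k (M + m) = cnt w0 k M + cnt f k m := by
  induction m with
  | zero => simp; exact cnt_congr (fun s hs => by simp [hs]) k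
  | succ m ih =>
    rw [← add_assoc, cnt_succ, ih, cnt_succ]
    simp
    ring

lemma words (al : ℕ → ℕ) (R : ℕ) (h0 : 1 ≤ al 0) (h2 : ∀ i, 1 ≤ i → i < R → 2 ≤ al i)
    (heq : ∀ i j, i < R → j < R → al i ≤ al j + 1) (r : ℕ) : r + 1 ≤ R →
    ∀ lam : ℕ → ℕ, Antitone lam → lam (r + 1) = 0 →
    ∑ k ∈ range (r + 1), lam k = ∑ i ∈ range (r + 1), al i →
    lam 0 + (r + 1) ≤ ∑ i ∈ range (r + 1), al i + 1 →
    ∃ (w : ℕ → ℕ) (l : ℕ), 1 ≤ l ∧ l ≤ r + 1 ∧ lam l = 0 ∧ 0 < lam (l - 1) ∧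
      IsWord w (∑ i ∈ range (r + 1), al i) lam ∧
      (∀ t, t + 1 < ∑ i ∈ range (r + 1), al i →
        (w t < w (t + 1) ↔ ∃ i, 1 ≤ i ∧ i < r + 1 ∧ ∑ j ∈ range i, al j = t + 1)) ∧
      (¬ Bad lam l (r + 1) (al r) → w (∑ i ∈ range (r + 1), al i - 1) < l - 1) := by
  induction r with
  | zero =>
    intro _ lam hanti hz hs hc
    simp only [zero_add, Finset.sum_range_one] at *
    refine ⟨fun _ => 0, 1, le_rfl, le_rfl, hz, by simp; omega, ⟨?_, ?_⟩, ?_, ?_⟩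
    · intro t _ k
      simp [cnt]
    · intro k
      rcases Nat.eq_zero_or_pos k with h | h
      · subst h; simp [cnt, hs]
      · have : lam k ≤ lam 1 := hanti h
        rw [show lam k = 0 by omega]
        simp [cnt]; omega
    · intro t ht
      constructor
      · intro h; simp at h
      · rintro ⟨i, h, h', _⟩; omega
    · intro h; exact absurd (Or.inl rfl) h
  | succ r ih =>
    intro hR lam hanti hz hs hc
    have bnd : ∀ a n, n ≤ R → (∀ i < n, a ≤ al i + 1) → n * a ≤ ∑ i ∈ range n, al i + n := by
      intro a n hn h
      have := Finset.card_nsmul_le_sum (range n) (fun i => al i + 1) a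
        (fun i hi => h i (mem_range.1 hi))
      rw [Finset.sum_add_distrib] at this
      simpa using this
    have bnd' : ∀ a n, n ≤ R → (∀ i < n, al i ≤ a + 1) → ∑ i ∈ range n, al i ≤ n * a + n := by
      intro a n hn h
      have := Finset.sum_le_card_nsmul (range n) al (a + 1)
        (fun i hi => h i (mem_range.1 hi))
      simp only [card_range, smul_eq_mul] at this
      linarith
    have bnd2 : ∀ n, n + 1 ≤ R → 2 * n + 1 ≤ ∑ i ∈ range (n + 1), al i := by
      intro n
      induction n with
      | zero => intro _; simpa using h0
      | succ n ihn =>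
        intro hn
        rw [Finset.sum_range_succ]
        have := ihn (by omega)
        have := h2 (n + 1) (by omega) hn
        omega
    set a := al (r + 1) with ha
    set M := ∑ i ∈ range (r + 1), al i with hM
    have hN : ∑ i ∈ range (r + 1 + 1), al i = M + a := Finset.sum_range_succ _ _
    rw [hN] at hs hc ⊢
    have ha2 : 2 ≤ a := h2 _ (by omega) (by omega)
    have q1 := bnd a (r + 1) (by omega) (fun i hi => heq _ _ (by omega) (by omega))
    have q2 := bnd' a (r + 1) (by omega) (fun i hi => heq _ _ (by omega) (by omega))
    have q3 := bnd2 r (by omega)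
    have q4 := bnd' (al r) r (by omega) (fun i hi => heq _ _ (by omega) (by omega))
    have q4' : M = ∑ i ∈ range r, al i + al r := Finset.sum_range_succ _ _
    rw [← hM] at q1 q2 q3
    -- the length
    have hex : ∃ l, lam l = 0 := ⟨_, hz⟩
    obtain ⟨l, hl0, hlmin⟩ : ∃ l, lam l = 0 ∧ ∀ k < l, 0 < lam k := by
      classical
      exact ⟨Nat.find hex, Nat.find_spec hex, fun k hk => Nat.pos_of_ne_zero (Nat.find_min hex hk)⟩
    have hl2 : l ≤ r + 2 := by
      by_contra hcon
      have := hlmin (r + 2) (by omega)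
      rw [show r + 1 + 1 = r + 2 by ring] at hz
      omega
    have hsl : ∀ m, l ≤ m → ∑ k ∈ range l, lam k = ∑ k ∈ range m, lam k := by
      intro m hm
      apply Finset.sum_subset (Finset.range_subset_range.2 hm)
      intro k _ hk
      have : lam k ≤ lam l := hanti (by simpa using hk)
      omega
    have hsl2 := hsl (r + 1 + 1) hl2
    have hl3 : 2 ≤ l := by
      by_contra hcon
      have := hsl 1 (by omega)
      simp at this
      omega
    obtain ⟨n, rfl⟩ := Nat.exists_eq_add_of_le' hl3
    have hpos : 0 < lam (n + 1) := hlmin _ (by omega)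
    obtain ⟨mu, m1, m2, m3, m4, m5, m6, m7, m8⟩ := step lam hanti n (r + 2) a (al r) (M + a)
      hl2 hl0 hpos (by omega) (by omega) ha2 (by linarith) (by linarith) (by omega)
      (fun h => h2 _ (by omega) (by omega))
      (by rw [show r + 2 - 1 = r + 1 by omega]; linarith)
    have m4' : mu (r + 1) = 0 := m4
    have hmuanti : Antitone mu := antitone_nat_of_succ_le (fun k => (m1 (k + 1)).trans (m2 k))
    have hmz : mu (n + 2) = 0 := by have := m1 (n + 2); omega
    have hmsum : ∑ k ∈ range (r + 1), mu k = M := by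
      have e : ∑ k ∈ range (n + 2), mu k = ∑ k ∈ range (r + 2), mu k := by
        apply Finset.sum_subset (Finset.range_subset_range.2 hl2)
        intro k _ hk
        have : mu k ≤ mu (n + 2) := hmuanti (by simpa using hk)
        omega
      have e2 : ∑ k ∈ range (r + 2), mu k = ∑ k ∈ range (r + 1), mu k + mu (r + 1) :=
        Finset.sum_range_succ mu (r + 1)
      omega
    obtain ⟨w0, l0, w1, w2, w3, w4, w5, w6, w7⟩ := ih (by omega) mu hmuanti m4' hmsum (by omega)
    obtain ⟨f, f1, f2⟩ := stripword a (fun k => lam k - mu k) (n + 2)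
      (fun k hk => by have : lam k ≤ lam (n + 2) := hanti hk; omega) (by
        rw [Finset.sum_tsub_distrib _ (fun k _ => m1 k)]; omega)
    have hl0n : l0 ≤ n + 2 := by
      by_contra hcon
      have : mu (l0 - 1) ≤ mu (n + 2) := hmuanti (by omega)
      omega
    have hf0 : f 0 = n + 1 := by
      apply le_antisymm
      · by_contra hcon
        have h := cnt_pos (w := f) (show 0 < a by omega)
        rw [f2] at h
        have : lam (f 0) ≤ lam (n + 2) := hanti (by omega)
        omega
      · have h : 0 < cnt f (n + 1) a := by rw [f2]; omega
        obtain ⟨s, hs1, hs2⟩ := exists_of_cnt_pos h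
        rw [← hs2]
        exact f1 0 s (by omega) hs1
    have hlast : w0 (M - 1) < n + 1 := by
      have hlt : w0 (M - 1) < l0 := by
        by_contra hcon
        have h := cnt_pos (w := w0) (show M - 1 < M by omega)
        rw [w5.2] at h
        have : mu (w0 (M - 1)) ≤ mu l0 := hmuanti (by omega)
        omega
      rcases Nat.lt_or_ge l0 (n + 2) with h | h
      · omega
      · have : l0 = n + 2 := by omega
        subst this
        exact w7 (m8 w4)
    have hmonoS : ∀ i j, i ≤ j → ∑ k ∈ range i, al k ≤ ∑ k ∈ range j, al k := fun i j hij =>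
      Finset.sum_le_sum_of_subset (Finset.range_subset_range.2 hij)
    refine ⟨fun t => if t < M then w0 t else f (t - M), n + 2, by omega, by omega, hl0, hpos,
      ⟨?_, ?_⟩, ?_, ?_⟩
    · intro t ht k
      rcases Nat.lt_or_ge t M with h | h
      · rw [cnt_congr (w' := w0) (fun s hs => by simp [hs.trans h]) (k + 1),
          cnt_congr (w' := w0) (fun s hs => by simp [hs.trans h]) k]
        exact w5.1 t h.le k
      · obtain ⟨m, rfl⟩ := Nat.exists_eq_add_of_le h
        rw [cnt_append, cnt_append, w5.2, w5.2]
        have e1 := cnt_mono f (k + 1) (show m ≤ a by omega)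
        rw [f2] at e1
        have := m1 (k + 1)
        have := m2 k
        omega
    · intro k
      rw [cnt_append, w5.2, f2]
      have := m1 k
      omega
    · intro t ht
      rcases Nat.lt_trichotomy (t + 1) M with h | h | h
      · simp only [h, show t < M by omega, if_true]
        rw [w6 t h]
        constructor
        · rintro ⟨i, i1, i2, i3⟩; exact ⟨i, i1, by omega, i3⟩
        · rintro ⟨i, i1, i2, i3⟩
          refine ⟨i, i1, ?_, i3⟩
          by_contra hcon
          have : i = r + 1 := by omega
          subst this
          omega
      · simp only [show t < M by omega, if_true, h, lt_irrefl, if_false, Nat.sub_self, hf0]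
        rw [show t = M - 1 by omega]
        refine ⟨fun _ => ⟨r + 1, by omega, by omega, rfl⟩, fun _ => hlast⟩
      · simp only [show ¬ t < M by omega, show ¬ t + 1 < M by omega, if_false]
        constructor
        · intro hh
          have := f1 (t - M) (t + 1 - M) (by omega) (by omega)
          omega
        · rintro ⟨i, i1, i2, i3⟩
          have := hmonoS i (r + 1) (by omega)
          omega
    · intro hb
      obtain ⟨k, k1, k2⟩ := m7 hb
      have h : 0 < cnt f k a := by rw [f2]; omega
      obtain ⟨s, hs1, hs2⟩ := exists_of_cnt_pos h
      simp only [show ¬ (M + a - 1 < M) by omega, if_false]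
      have := f1 s (M + a - 1 - M) (by omega) (by omega)
      omega

end EqRib


namespace EqRib

open Finset

/-- conjugate -/
def cj (lam : ℕ → ℕ) (R j : ℕ) : ℕ := ((range R).filter (fun k => j < lam k)).card

lemma lt_cj {lam : ℕ → ℕ} {R : ℕ} (ha : Antitone lam) (hR : lam R = 0) (j k : ℕ) :
    k < cj lam R j ↔ j < lam k := by
  unfold cj
  constructor
  · intro h
    by_contra hcon
    have : (range R).filter (fun k => j < lam k) ⊆ range k := by
      intro x hx
      simp only [mem_filter, mem_range] at hx ⊢
      by_contra hx'
      have : lam x ≤ lam k := ha (by omega)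
      omega
    have := Finset.card_le_card this
    simp only [card_range] at this
    omega
  · intro h
    have hk : k < R := by
      by_contra hcon
      have : lam k ≤ lam R := ha (by omega)
      omega
    have : range (k + 1) ⊆ (range R).filter (fun k => j < lam k) := by
      intro x hx
      simp only [mem_filter, mem_range] at hx ⊢
      have : lam k ≤ lam x := ha (by omega)
      omega
    have := Finset.card_le_card this
    simp only [card_range] at this
    omega

lemma cj_cj {lam : ℕ → ℕ} {R c : ℕ} (ha : Antitone lam) (hR : lam R = 0) (hc : lam 0 ≤ c) (k : ℕ) :
    cj (cj lam R) c k = lam k := by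
  rw [cj]
  simp_rw [lt_cj ha hR]
  have : (range c).filter (fun j => j < lam k) = range (lam k) := by
    ext x
    have : lam k ≤ lam 0 := ha (Nat.zero_le k)
    simp only [mem_filter, mem_range]
    omega
  rw [this, card_range]

lemma cj_anti (lam : ℕ → ℕ) (R : ℕ) : Antitone (cj lam R) := by
  intro j j' h
  apply Finset.card_le_card
  intro x hx
  simp only [mem_filter, mem_range] at hx ⊢
  omega

lemma cj_sum {lam : ℕ → ℕ} {R c : ℕ} (ha : Antitone lam) (hc : lam 0 ≤ c) :
    ∑ j ∈ range c, cj lam R j = ∑ k ∈ range R, lam k := by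
  unfold cj
  simp_rw [Finset.card_filter]
  rw [Finset.sum_comm]
  apply Finset.sum_congr rfl
  intro k _
  rw [← Finset.card_filter]
  have : (range c).filter (fun j => j < lam k) = range (lam k) := by
    ext x
    have : lam k ≤ lam 0 := ha (Nat.zero_le k)
    simp only [mem_filter, mem_range]
    omega
  rw [this, card_range]

lemma transpose {w : ℕ → ℕ} {N R : ℕ} {lam : ℕ → ℕ} (ha : Antitone lam) (hR : lam R = 0)
    (hw : IsWord w N lam) : ∃ w', IsWord w' N (cj lam R) ∧
      ∀ t, t + 1 < N → (w' t < w' (t + 1) ↔ ¬ (w t < w (t + 1))) := by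
  have hlt : ∀ s < N, w s < R := by
    intro s hs
    by_contra hcon
    have h := cnt_pos (w := w) hs
    rw [hw.2] at h
    have : lam (w s) ≤ lam R := ha (by omega)
    omega
  have key : ∀ t ≤ N, ∀ j, cnt (fun t => cnt w (w t) t) j t = cj (fun k => cnt w k t) R j := by
    intro t
    induction t with
    | zero => intro _ j; simp [cj]
    | succ t ih =>
      intro ht j
      rw [cnt_succ, ih (by omega), cj, cj, Finset.card_filter, Finset.card_filter]
      have hm := mem_range.2 (hlt t (by omega))
      rw [← Finset.add_sum_erase _ _ hm, ← Finset.add_sum_erase (range R)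
        (fun i => if j < cnt w i (t + 1) then 1 else 0) hm]
      have e : ∑ x ∈ (range R).erase (w t), (if j < cnt w x (t + 1) then 1 else 0)
          = ∑ x ∈ (range R).erase (w t), (if j < cnt w x t then 1 else 0) := by
        apply Finset.sum_congr rfl
        intro x hx
        have h9 : cnt w x (t + 1) = cnt w x t := by
          rw [cnt_succ, if_neg (fun e => Finset.ne_of_mem_erase hx e.symm), add_zero]
        rw [h9]
      rw [e, cnt_succ, if_pos rfl]
      split_ifs <;> omega
  have hanti : ∀ t ≤ N, Antitone (fun k => cnt w k t) := fun t ht =>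
    antitone_nat_of_succ_le (fun k => hw.1 t ht k)
  refine ⟨fun t => cnt w (w t) t, ⟨?_, ?_⟩, ?_⟩
  · intro t ht k
    rw [key t ht, key t ht]
    exact cj_anti _ _ (by omega)
  · intro k
    rw [key N le_rfl]
    congr 1
    funext k
    exact hw.2 k
  · intro t ht
    simp only [not_lt]
    constructor
    · intro h
      by_contra hcon
      push Not at hcon
      rw [cnt_succ, if_neg (by omega), add_zero] at h
      have := hanti t (by omega) hcon.le
      simp only at this
      omega
    · intro h
      have := hanti (t + 1) (by omega) h
      simp only at this
      rw [cnt_succ w (w t), if_pos rfl] at this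
      omega

def Stp (u : ℕ → ℕ) : Prop := u 0 = 0 ∧ ∀ t, u (t + 1) = u t ∨ u (t + 1) = u t + 1

lemma Stp.mono {u : ℕ → ℕ} (h : Stp u) : Monotone u :=
  monotone_nat_of_le_succ (fun t => by rcases h.2 t with e | e <;> omega)

lemma Stp.le {u : ℕ → ℕ} (h : Stp u) (t : ℕ) : u t ≤ t := by
  induction t with
  | zero => rw [h.1]
  | succ t ih => rcases h.2 t with e | e <;> omega

lemma Stp.compl {u : ℕ → ℕ} (h : Stp u) : Stp (fun t => t - u t) := by
  refine ⟨by simp, fun t => ?_⟩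
  have := h.le t
  rcases h.2 t with e | e <;> simp only [e] <;> omega

lemma sum_cnt (u : ℕ → ℕ) (N m : ℕ) :
    ∑ i ∈ range m, cnt u i N = ((range N).filter (fun t => u t < m)).card := by
  unfold cnt
  rw [← Finset.card_biUnion]
  · congr 1
    ext x
    simp only [mem_biUnion, mem_filter, mem_range]
    constructor
    · rintro ⟨a, b, c, d⟩; exact ⟨c, by omega⟩
    · rintro ⟨a, b⟩; exact ⟨_, b, a, rfl⟩
  · intro x _ y _ hxy
    rw [Function.onFun, Finset.disjoint_left]
    intro a ha hb
    simp at ha hb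
    exact hxy (by omega)

def Hyp (u : ℕ → ℕ) (N : ℕ) : Prop :=
  (∀ i j, i ≤ u (N - 1) → j ≤ u (N - 1) → cnt u i N ≤ cnt u j N + 1) ∧
  ∀ i, 1 ≤ i → i ≤ u (N - 1) → 2 ≤ cnt u i N

lemma words1 {u : ℕ → ℕ} {N : ℕ} (hu : Stp u) (hN : 1 ≤ N) (hH : Hyp u N) {lam : ℕ → ℕ}
    (ha : Antitone lam) (h0 : lam (u (N - 1) + 1) = 0)
    (hs : ∑ k ∈ range (u (N - 1) + 1), lam k = N) (hc : lam 0 + u (N - 1) ≤ N) :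
    ∃ w, IsWord w N lam ∧ ∀ t, t + 1 < N → (w t < w (t + 1) ↔ u t < u (t + 1)) := by
  have hsum : ∑ i ∈ range (u (N - 1) + 1), cnt u i N = N := by
    rw [sum_cnt, Finset.filter_true_of_mem, card_range]
    intro x hx
    have := mem_range.1 hx
    have : u x ≤ u (N - 1) := hu.mono (by omega)
    omega
  have hc0 : 1 ≤ cnt u 0 N := by
    have := cnt_pos (w := u) (show 0 < N by omega)
    rwa [hu.1] at this
  obtain ⟨w, l, -, -, -, -, h5, h6, -⟩ := words (fun i => cnt u i N) (u (N - 1) + 1) hc0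
    (fun i h1 h2 => hH.2 i h1 (by omega)) (fun i j hi hj => hH.1 i j (by omega) (by omega))
    (u (N - 1)) le_rfl lam ha h0 (by rw [hs, hsum]) (by rw [hsum]; omega)
  rw [hsum] at h5 h6
  refine ⟨w, h5, fun t ht => (h6 t ht).trans ?_⟩
  simp_rw [sum_cnt]
  constructor
  · rintro ⟨i, i1, i2, i3⟩
    by_contra hcon
    have hm := hu.mono (show t ≤ t + 1 by omega)
    have e : u t = u (t + 1) := by omega
    rcases Nat.lt_or_ge (u t) i with h | h
    · have : range (t + 2) ⊆ (range N).filter (fun t => u t < i) := by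
        intro x hx
        simp only [mem_filter, mem_range] at hx ⊢
        have : u x ≤ u (t + 1) := hu.mono (by omega)
        omega
      have := Finset.card_le_card this
      rw [card_range] at this
      omega
    · have : (range N).filter (fun t => u t < i) ⊆ range t := by
        intro x hx
        simp only [mem_filter, mem_range] at hx ⊢
        by_contra hx'
        have : u t ≤ u x := hu.mono (by omega)
        omega
      have := Finset.card_le_card this
      rw [card_range] at this
      omega
  · intro h
    have : u (t + 1) ≤ u (N - 1) := hu.mono (by omega)
    refine ⟨u (t + 1), by omega, by omega, ?_⟩
    have : (range N).filter (fun s => u s < u (t + 1)) = range (t + 1) := by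
      ext x
      simp only [mem_filter, mem_range]
      constructor
      · rintro ⟨_, h'⟩
        by_contra hcon
        have : u (t + 1) ≤ u x := hu.mono (by omega)
        omega
      · intro hx
        have : u x ≤ u t := hu.mono (by omega)
        omega
    rw [this, card_range]

lemma words2 {u : ℕ → ℕ} {N : ℕ} (hu : Stp u) (hN : 1 ≤ N)
    (hH : Hyp u N ∨ Hyp (fun t => t - u t) N) {lam : ℕ → ℕ}
    (ha : Antitone lam) (h0 : lam (u (N - 1) + 1) = 0)
    (hs : ∑ k ∈ range (u (N - 1) + 1), lam k = N) (hc : lam 0 + u (N - 1) ≤ N) :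
    ∃ w, IsWord w N lam ∧ ∀ t, t + 1 < N → (w t < w (t + 1) ↔ u t < u (t + 1)) := by
  rcases hH with hH | hH
  · exact words1 hu hN hH ha h0 hs hc
  · have hle := hu.le (N - 1)
    have hz : cj lam (u (N - 1) + 1) (N - 1 - u (N - 1) + 1) = 0 := by
      have := lt_cj ha h0 (N - 1 - u (N - 1) + 1) 0
      omega
    obtain ⟨w, w1, w2⟩ := words1 (lam := cj lam (u (N - 1) + 1)) hu.compl hN hH (cj_anti _ _) hz
      (by rw [cj_sum ha (by omega), hs]) (by
        have : cj lam (u (N - 1) + 1) 0 ≤ u (N - 1) + 1 := by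
          unfold cj
          exact (Finset.card_filter_le _ _).trans (by simp)
        omega)
    obtain ⟨w', w3, w4⟩ := transpose (cj_anti _ _) hz w1
    refine ⟨w', ⟨w3.1, fun k => ?_⟩, fun t ht => ?_⟩
    · rw [w3.2, cj_cj ha h0 (by omega)]
    · rw [w4 t ht, w2 t ht]
      have := hu.le t
      rcases hu.2 t with e | e <;> simp only [e] <;> omega

/-- an equitable ribbon satisfies one of the hypotheses -/
lemma hyp_or {u : ℕ → ℕ} {N : ℕ} (hu : Stp u) (hN : 1 ≤ N)
    (h1 : ∀ i j, i ≤ u (N - 1) → j ≤ u (N - 1) → cnt u i N ≤ cnt u j N + 1)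
    (h2 : ∀ i j, i ≤ N - 1 - u (N - 1) → j ≤ N - 1 - u (N - 1) →
      cnt (fun t => t - u t) i N ≤ cnt (fun t => t - u t) j N + 1) :
    Hyp u N ∨ Hyp (fun t => t - u t) N := by
  have gen : ∀ u : ℕ → ℕ, Stp u →
      (∀ i j, i ≤ N - 1 - u (N - 1) → j ≤ N - 1 - u (N - 1) →
      cnt (fun t => t - u t) i N ≤ cnt (fun t => t - u t) j N + 1) →
      (∃ j ≤ N - 1 - u (N - 1), cnt (fun t => t - u t) j N ≤ 1) →
      (∃ i, 1 ≤ i ∧ i ≤ u (N - 1) ∧ cnt u i N ≤ 1) →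
      2 ≤ N ∧ u (N - 2) + 1 = u (N - 1) := by
    intro u hu h2 ⟨j, hj, hj'⟩ ⟨i, hi, hi', hi2⟩
    have hN2 : 2 ≤ N := by
      have := hu.le (N - 1)
      omega
    refine ⟨hN2, ?_⟩
    rcases (show u (N - 1) = u (N - 2) ∨ u (N - 1) = u (N - 2) + 1 by
      have := hu.2 (N - 2); rwa [show N - 2 + 1 = N - 1 by omega] at this) with e | e
    swap
    · omega
    exfalso
    -- find first t with u t = i
    have hex : ∃ t, i ≤ u t := ⟨_, hi'⟩
    classical
    obtain ⟨t, ht, htmin⟩ : ∃ t, i ≤ u t ∧ ∀ s < t, u s < i :=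
      ⟨Nat.find hex, Nat.find_spec hex, fun s hs => by have := Nat.find_min hex hs; omega⟩
    have ht0 : t ≠ 0 := by
      rintro rfl
      rw [hu.1] at ht; omega
    obtain ⟨s, rfl⟩ := Nat.exists_eq_succ_of_ne_zero ht0
    simp only [Nat.succ_eq_add_one] at *
    have hs := htmin s (by omega)
    have hs' := hu.2 s
    have hiu : u (s + 1) = i := by omega
    have hsN : s + 1 ≤ N - 1 := by
      by_contra hcon
      have := htmin (N - 1) (by omega)
      omega
    -- s+2 < N
    have hs2 : u (s + 2) ≠ i ∨ N ≤ s + 2 := by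
      by_contra hcon
      push Not at hcon
      have : ({s + 1, s + 2} : Finset ℕ) ⊆ (range N).filter (fun x => u x = i) := by
        intro x hx
        simp only [mem_insert, mem_singleton] at hx
        simp only [mem_filter, mem_range]
        rcases hx with rfl | rfl <;> omega
      have := Finset.card_le_card this
      rw [Finset.card_pair (by omega)] at this
      unfold cnt at hi2
      omega
    have hs3 : s + 2 < N := by
      by_contra hcon
      rw [show N - 1 = s + 1 by omega, show N - 2 = s by omega] at e
      omega
    have hs4 : u (s + 2) = i + 1 := by
      have := hu.2 (s + 1)
      rw [show s + 1 + 1 = s + 2 by ring] at this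
      omega
    have : ({s, s + 1, s + 2} : Finset ℕ) ⊆ (range N).filter (fun x => x - u x = s - u s) := by
      intro x hx
      simp only [mem_insert, mem_singleton] at hx
      simp only [mem_filter, mem_range]
      rcases hx with rfl | rfl | rfl
      · omega
      · have := hu.le s; omega
      · have := hu.le s; omega
    have := Finset.card_le_card this
    rw [Finset.card_eq_three.2 ⟨s, s + 1, s + 2, by omega, by omega, by omega, rfl⟩] at this
    have h3 := h2 (s - u s) j (by
      have := hu.compl.mono (show s ≤ N - 1 by omega); exact this) hj
    unfold cnt at h3 hj'
    beta_reduce at h3 hj'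
    omega
  by_contra hcon
  push Not at hcon
  obtain ⟨c1, c2⟩ := hcon
  unfold Hyp at c1 c2
  push Not at c1 c2
  obtain ⟨i, i1, i2, i3⟩ := c1 h1
  obtain ⟨j, j1, j2, j3⟩ := c2 h2
  have g1 := gen u hu h2 ⟨j, j2, by omega⟩ ⟨i, i1, i2, by omega⟩
  have hcc : (fun t => t - (fun t => t - u t) t) = u := by
    funext t
    have := hu.le t
    beta_reduce
    omega
  have g2 := gen (fun t => t - u t) hu.compl (by
      intro i j hi hj
      rw [hcc]
      have := hu.le (N - 1)
      beta_reduce at hi hj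
      exact h1 i j (by omega) (by omega)) ⟨i, by
        have := hu.le (N - 1)
        beta_reduce; omega, by rw [hcc]; omega⟩ ⟨j, j1, j2, by omega⟩
  have := hu.le (N - 1)
  have := hu.le (N - 2)
  beta_reduce at g2
  omega

end EqRib


namespace EqRib

open Finset

lemma conv (A : SkewShape) {i j i' j' a b : ℕ} (h1 : (i, j) ∈ A.cells) (h2 : (i', j') ∈ A.cells)
    (ha : i ≤ a) (ha' : a ≤ i') (hb : j ≤ b) (hb' : b ≤ j') : (a, b) ∈ A.cells := by
  simp only [SkewShape.cells, mem_sdiff, YoungDiagram.mem_cells] at h1 h2 ⊢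
  refine ⟨A.outer.up_left_mem ha' hb' h2.1, fun h => h1.2 (A.inner.up_left_mem ha hb h)⟩

lemma star {A : SkewShape} (hA : A.Connected) {c d : ℕ × ℕ} (hc : c ∈ A.cells) (hd : d ∈ A.cells)
    {i : ℕ} (h1 : c.1 ≤ i) (h2 : i < d.1) : ∃ j, (i, j) ∈ A.cells ∧ (i + 1, j) ∈ A.cells := by
  by_contra hcon
  push Not at hcon
  apply hA.2
  refine ⟨A.cells.filter (fun c => c.1 ≤ i), A.cells.filter (fun c => ¬ c.1 ≤ i), ⟨c, ?_⟩, ⟨d, ?_⟩,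
    Finset.filter_union_filter_not_eq _ _, Finset.disjoint_iff_inter_eq_empty.1 (Finset.disjoint_filter_filter_not _ _ _), ?_⟩
  · simp [hc, h1]
  · simp [hd, h2]
  · rintro ⟨x, y⟩ hb ⟨x', y'⟩ hc
    simp only [mem_filter] at hb hc ⊢
    refine ⟨by omega, ?_⟩
    rintro rfl
    exact hcon y (conv A hb.1 hc.1 (by omega) (by omega) le_rfl le_rfl)
      (conv A hb.1 hc.1 (by omega) (by omega) le_rfl le_rfl)

lemma star' {A : SkewShape} (hA : A.Connected) {c d : ℕ × ℕ} (hc : c ∈ A.cells) (hd : d ∈ A.cells)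
    {j : ℕ} (h1 : c.2 ≤ j) (h2 : j < d.2) : ∃ i, (i, j) ∈ A.cells ∧ (i, j + 1) ∈ A.cells := by
  by_contra hcon
  push Not at hcon
  apply hA.2
  refine ⟨A.cells.filter (fun c => c.2 ≤ j), A.cells.filter (fun c => ¬ c.2 ≤ j), ⟨c, ?_⟩, ⟨d, ?_⟩,
    Finset.filter_union_filter_not_eq _ _, Finset.disjoint_iff_inter_eq_empty.1 (Finset.disjoint_filter_filter_not _ _ _), ?_⟩
  · simp [hc, h1]
  · simp [hd, h2]
  · rintro ⟨x, y⟩ hb ⟨x', y'⟩ hc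
    simp only [mem_filter] at hb hc ⊢
    refine ⟨?_, by omega⟩
    rintro rfl
    exact hcon x (conv A hb.1 hc.1 le_rfl le_rfl (by omega) (by omega))
      (conv A hb.1 hc.1 le_rfl le_rfl (by omega) (by omega))

lemma rowIcc {A : SkewShape} (hA : A.Connected) : ∃ i0 i1, i0 ≤ i1 ∧ A.rowSet = Icc i0 i1 := by
  have hne : A.rowSet.Nonempty := hA.1.image _
  refine ⟨A.rowSet.min' hne, A.rowSet.max' hne, Finset.min'_le_max' _ _, ?_⟩
  apply Finset.Subset.antisymm
  · intro x hx
    rw [mem_Icc]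
    exact ⟨Finset.min'_le _ _ hx, Finset.le_max' _ _ hx⟩
  · intro x hx
    rw [mem_Icc] at hx
    obtain ⟨c, hc, hc'⟩ := mem_image.1 (A.rowSet.min'_mem hne)
    obtain ⟨d, hd, hd'⟩ := mem_image.1 (A.rowSet.max'_mem hne)
    rcases hx.2.eq_or_lt with e | e
    · rw [e]; exact A.rowSet.max'_mem hne
    · obtain ⟨j, hj, -⟩ := star hA hc hd (i := x) (by omega) (by omega)
      exact mem_image.2 ⟨_, hj, rfl⟩

lemma colIcc {A : SkewShape} (hA : A.Connected) : ∃ i0 i1, i0 ≤ i1 ∧ A.colSet = Icc i0 i1 := by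
  have hne : A.colSet.Nonempty := hA.1.image _
  refine ⟨A.colSet.min' hne, A.colSet.max' hne, Finset.min'_le_max' _ _, ?_⟩
  apply Finset.Subset.antisymm
  · intro x hx
    rw [mem_Icc]
    exact ⟨Finset.min'_le _ _ hx, Finset.le_max' _ _ hx⟩
  · intro x hx
    rw [mem_Icc] at hx
    obtain ⟨c, hc, hc'⟩ := mem_image.1 (A.colSet.min'_mem hne)
    obtain ⟨d, hd, hd'⟩ := mem_image.1 (A.colSet.max'_mem hne)
    rcases hx.2.eq_or_lt with e | e
    · rw [e]; exact A.colSet.max'_mem hne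
    · obtain ⟨j, hj, -⟩ := star' hA hc hd (j := x) (by omega) (by omega)
      exact mem_image.2 ⟨_, hj, rfl⟩

def P (u : ℕ → ℕ) (i0 j1 t : ℕ) : ℕ × ℕ := (i0 + u t, j1 - (t - u t))

structure RD (A : SkewShape) (u : ℕ → ℕ) (i0 j1 N : ℕ) : Prop where
  stp : Stp u
  hN : 1 ≤ N
  hle : N - 1 - u (N - 1) ≤ j1
  hcells : A.cells = (range N).image (P u i0 j1)

lemma P_inj {u : ℕ → ℕ} (hu : Stp u) {i0 j1 N : ℕ} (hle : N - 1 - u (N - 1) ≤ j1) {s t : ℕ}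
    (hs : s < N) (ht : t < N) (h : P u i0 j1 s = P u i0 j1 t) : s = t := by
  have h1 := hu.compl.mono (show s ≤ N - 1 by omega)
  have h2 := hu.compl.mono (show t ≤ N - 1 by omega)
  beta_reduce at h1 h2
  have h3 := hu.le s
  have h4 := hu.le t
  simp only [P, Prod.mk.injEq] at h
  omega

open Classical in
noncomputable def pu (A : SkewShape) (i0 j1 : ℕ) : ℕ → ℕ
  | 0 => 0
  | t + 1 => if (i0 + pu A i0 j1 t + 1, j1 - (t - pu A i0 j1 t)) ∈ A.cells then
      pu A i0 j1 t + 1 else pu A i0 j1 t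

lemma pu_stp (A : SkewShape) (i0 j1 : ℕ) : Stp (pu A i0 j1) := by
  refine ⟨rfl, fun t => ?_⟩
  rw [pu]
  split_ifs
  · right; rfl
  · left; rfl

lemma geom {A : SkewShape} (hA : A.Connected) : ∃ u i0 j1 M, Stp u ∧ 1 ≤ M ∧ M + 1 = A.numRows + A.numCols
    ∧ M - 1 - u (M - 1) ≤ j1 ∧ (∀ t < M, P u i0 j1 t ∈ A.cells) ∧
    (∀ c ∈ A.cells, i0 ≤ c.1 ∧ c.2 ≤ j1 ∧ c.1 - i0 + (j1 - c.2) < M) := by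
  obtain ⟨i0, i1, hi, hrow⟩ := rowIcc hA
  obtain ⟨j0, j1, hj, hcol⟩ := colIcc hA
  have hin : ∀ c ∈ A.cells, i0 ≤ c.1 ∧ c.1 ≤ i1 ∧ j0 ≤ c.2 ∧ c.2 ≤ j1 := by
    intro c hc
    have a1 : c.1 ∈ A.rowSet := mem_image.2 ⟨c, hc, rfl⟩
    have a2 : c.2 ∈ A.colSet := mem_image.2 ⟨c, hc, rfl⟩
    rw [hrow, mem_Icc] at a1
    rw [hcol, mem_Icc] at a2
    omega
  have r0 : i0 ∈ A.rowSet := by rw [hrow, mem_Icc]; omega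
  have r1 : i1 ∈ A.rowSet := by rw [hrow, mem_Icc]; omega
  have c0 : j0 ∈ A.colSet := by rw [hcol, mem_Icc]; omega
  have c1 : j1 ∈ A.colSet := by rw [hcol, mem_Icc]; omega
  obtain ⟨⟨_, y0⟩, m0, e0⟩ := mem_image.1 r0
  obtain ⟨⟨_, y1⟩, m1, e1⟩ := mem_image.1 r1
  obtain ⟨⟨x0, _⟩, m2, e2⟩ := mem_image.1 c0
  obtain ⟨⟨x1, _⟩, m3, e3⟩ := mem_image.1 c1
  simp only at e0 e1 e2 e3
  subst e0 e1 e2 e3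
  have n0 := hin _ m0
  have n1 := hin _ m1
  have n2 := hin _ m2
  have n3 := hin _ m3
  simp only at n0 n1 n2 n3
  rename_i i0 i1 j0 j1
  have tr : (i0, j1) ∈ A.cells := conv A m0 m3 (by omega) (by omega) (by omega) (by omega)
  have bl : (i1, j0) ∈ A.cells := conv A m2 m1 (by omega) (by omega) (by omega) (by omega)
  have step : ∀ i j, (i, j) ∈ A.cells → (i + 1, j) ∉ A.cells → (i ≠ i1 ∨ j ≠ j0) →
      1 ≤ j ∧ (i, j - 1) ∈ A.cells := by
    intro i j h h' hne
    have b := hin _ h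
    simp only at b
    rcases b.2.1.eq_or_lt with e | e
    · subst e
      exact ⟨by omega, conv A bl h le_rfl le_rfl (by omega) (by omega)⟩
    · obtain ⟨j', h1, h2⟩ := star hA tr bl (i := i) (by simp; omega) (by simpa using e)
      rcases Nat.lt_or_ge j' j with h3 | h3
      · exact ⟨by omega, conv A h1 h le_rfl le_rfl (by omega) (by omega)⟩
      · exact absurd (conv A h h2 (by omega) (by omega) (by omega) (by omega)) h'
  have main : ∀ t, t ≤ (i1 - i0) + (j1 - j0) → P (pu A i0 j1) i0 j1 t ∈ A.cells ∧
      pu A i0 j1 t ≤ i1 - i0 ∧ t - pu A i0 j1 t ≤ j1 - j0 := by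
    intro t
    induction t with
    | zero => intro _; refine ⟨by simpa [P, pu] using tr, by simp [pu], by simp⟩
    | succ t ih =>
      intro ht
      obtain ⟨a1, a2, a3⟩ := ih (by omega)
      have a4 := (pu_stp A i0 j1).le t
      rw [P] at a1 ⊢
      rw [pu]
      split_ifs with h
      · have := hin _ h
        simp only at this
        refine ⟨?_, by omega, by omega⟩
        rwa [show t + 1 - (pu A i0 j1 t + 1) = t - pu A i0 j1 t by omega, ← add_assoc]
      · have b := step _ _ a1 h (by omega)
        have b' := hin _ b.2
        simp only at b'
        refine ⟨?_, by omega, by omega⟩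
        rw [show j1 - (t + 1 - pu A i0 j1 t) = j1 - (t - pu A i0 j1 t) - 1 by omega]
        exact b.2
  refine ⟨pu A i0 j1, i0, j1, (i1 - i0) + (j1 - j0) + 1, pu_stp _ _ _, by omega, ?_, ?_, ?_, ?_⟩
  · rw [SkewShape.numRows, SkewShape.numCols, hrow, hcol]
    simp only [Nat.card_Icc]
    omega
  · have := main _ le_rfl
    simp only [Nat.add_sub_cancel]
    omega
  · intro t ht
    exact (main t (by omega)).1
  · intro c hc
    have := hin c hc
    omega

lemma image_sub {A : SkewShape} {u : ℕ → ℕ} {i0 j1 M : ℕ} (h : ∀ t < M, P u i0 j1 t ∈ A.cells) :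
    (range M).image (P u i0 j1) ⊆ A.cells := by
  intro x hx
  obtain ⟨t, ht, rfl⟩ := mem_image.1 hx
  exact h t (mem_range.1 ht)

lemma image_card {u : ℕ → ℕ} (hu : Stp u) {i0 j1 N : ℕ} (hle : N - 1 - u (N - 1) ≤ j1) :
    ((range N).image (P u i0 j1)).card = N := by
  rw [Finset.card_image_of_injOn, card_range]
  intro s hs t ht h
  exact P_inj hu hle (by simpa using hs) (by simpa using ht) h

lemma size_ge {A : SkewShape} (hA : A.Connected) : A.numRows + A.numCols ≤ A.size + 1 := by
  obtain ⟨u, i0, j1, M, h1, h2, h3, h4, h5, h6⟩ := geom hA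
  have := Finset.card_le_card (image_sub h5)
  rw [image_card h1 h4] at this
  rw [SkewShape.size]
  omega

lemma RD_of {A : SkewShape} (hA : A.Connected) (h : A.numRows + A.numCols = A.size + 1) :
    ∃ u i0 j1, RD A u i0 j1 A.size := by
  obtain ⟨u, i0, j1, M, h1, h2, h3, h4, h5, h6⟩ := geom hA
  have hM : M = A.size := by omega
  subst hM
  refine ⟨u, i0, j1, h1, h2, h4, ?_⟩
  symm
  apply Finset.eq_of_subset_of_card_le (image_sub h5)
  rw [image_card h1 h4]
  rfl

lemma ribbon_size {A : SkewShape} (hA : A.Ribbon) : A.numRows + A.numCols = A.size + 1 := by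
  obtain ⟨u, i0, j1, M, h1, h2, h3, h4, h5, h6⟩ := geom hA.1
  have : A.cells = (range M).image (P u i0 j1) := by
    apply Finset.Subset.antisymm _ (image_sub h5)
    rintro ⟨i, j⟩ hc
    obtain ⟨b1, b2, b3⟩ := h6 _ hc
    simp only at b1 b2 b3
    refine mem_image.2 ⟨_, mem_range.2 b3, ?_⟩
    have h5' := h5 _ b3
    set t := i - i0 + (j1 - j) with ht
    have h7 := h1.le t
    have h8 := h1.compl.mono (show t ≤ M - 1 by omega)
    beta_reduce at h8
    rw [P] at h5' ⊢
    rcases lt_trichotomy (i0 + u t) i with h | h | h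
    · exfalso
      refine hA.2 (i0 + u t) (j1 - (t - u t)) ⟨h5', ?_, ?_, ?_⟩ <;>
        exact conv A h5' hc (by omega) (by omega) (by omega) (by omega)
    · rw [h]; congr 1; omega
    · exfalso
      refine hA.2 i j ⟨hc, ?_, ?_, ?_⟩ <;>
        exact conv A hc h5' (by omega) (by omega) (by omega) (by omega)
  rw [SkewShape.size, this, image_card h1 h4]
  omega

lemma RD.ex {A : SkewShape} {u i0 j1 N} (h : RD A u i0 j1 N) {c : ℕ × ℕ} :
    c ∈ A.cells ↔ ∃ t, t < N ∧ c = P u i0 j1 t := by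
  rw [h.hcells, mem_image]
  simp only [mem_range, eq_comm]

lemma RD.bd {A : SkewShape} {u i0 j1 N} (h : RD A u i0 j1 N) {t : ℕ} (ht : t < N) :
    u t ≤ t ∧ t - u t ≤ j1 ∧ u t ≤ u (N - 1) ∧ t - u t ≤ N - 1 - u (N - 1) := by
  have h1 := h.stp.compl.mono (show t ≤ N - 1 by omega)
  have h2 := h.stp.mono (show t ≤ N - 1 by omega)
  have h3 := h.stp.le t
  have h4 := h.hle
  beta_reduce at h1
  omega

lemma RD.ribbon {A : SkewShape} {u i0 j1 N} (h : RD A u i0 j1 N) (hA : A.Connected) : A.Ribbon := by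
  refine ⟨hA, fun i j ⟨h1, _, _, h2⟩ => ?_⟩
  obtain ⟨s, hs, es⟩ := h.ex.1 h1
  obtain ⟨t, ht, et⟩ := h.ex.1 h2
  have a := h.bd hs
  have b := h.bd ht
  simp only [P, Prod.mk.injEq] at es et
  have : s = t := by omega
  subst this
  omega

lemma RD.card {A : SkewShape} {u i0 j1 N} (h : RD A u i0 j1 N) (p : ℕ × ℕ → Prop) [DecidablePred p] :
    (A.cells.filter p).card = ((range N).filter (fun t => p (P u i0 j1 t))).card := by
  rw [h.hcells, Finset.filter_image, Finset.card_image_of_injOn]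
  intro s hs t ht e
  simp only [coe_filter, mem_range, Set.mem_ofPred_eq] at hs ht
  exact P_inj h.stp h.hle hs.1 ht.1 e

lemma Stp.surj {u : ℕ → ℕ} (hu : Stp u) {n i : ℕ} (hi : i ≤ u n) : ∃ t ≤ n, u t = i := by
  induction n with
  | zero => exact ⟨0, le_rfl, by rw [hu.1] at hi ⊢; omega⟩
  | succ n ih =>
    rcases Nat.lt_or_ge (u n) i with h | h
    · exact ⟨n + 1, le_rfl, by rcases hu.2 n with e | e <;> omega⟩
    · obtain ⟨t, ht, e⟩ := ih h
      exact ⟨t, by omega, e⟩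

lemma RD.rowSet {A : SkewShape} {u i0 j1 N} (h : RD A u i0 j1 N) :
    A.rowSet = (range (u (N - 1) + 1)).image (fun i => i0 + i) := by
  ext x
  simp only [SkewShape.rowSet, mem_image, mem_range]
  constructor
  · rintro ⟨c, hc, rfl⟩
    obtain ⟨t, ht, rfl⟩ := h.ex.1 hc
    have := h.bd ht
    exact ⟨u t, by omega, rfl⟩
  · rintro ⟨i, hi, rfl⟩
    obtain ⟨t, ht, e⟩ := h.stp.surj (n := N - 1) (i := i) (by omega)
    have := h.hN
    exact ⟨_, h.ex.2 ⟨t, by omega, rfl⟩, by simp [P, e]⟩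

lemma RD.colSet {A : SkewShape} {u i0 j1 N} (h : RD A u i0 j1 N) :
    A.colSet = (range (N - 1 - u (N - 1) + 1)).image (fun i => j1 - i) := by
  ext x
  simp only [SkewShape.colSet, mem_image, mem_range]
  constructor
  · rintro ⟨c, hc, rfl⟩
    obtain ⟨t, ht, rfl⟩ := h.ex.1 hc
    have := h.bd ht
    exact ⟨t - u t, by omega, rfl⟩
  · rintro ⟨i, hi, rfl⟩
    obtain ⟨t, ht, e⟩ := h.stp.compl.surj (n := N - 1) (i := i) (by beta_reduce; omega)
    have := h.hN
    beta_reduce at e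
    exact ⟨_, h.ex.2 ⟨t, by omega, rfl⟩, by simp [P, e]⟩

lemma RD.numRows {A : SkewShape} {u i0 j1 N} (h : RD A u i0 j1 N) : A.numRows = u (N - 1) + 1 := by
  rw [SkewShape.numRows, h.rowSet, Finset.card_image_of_injective, card_range]
  intro a b; simp

lemma RD.size {A : SkewShape} {u i0 j1 N} (h : RD A u i0 j1 N) : A.size = N := by
  rw [SkewShape.size, h.hcells, image_card h.stp h.hle]

lemma RD.rowLen {A : SkewShape} {u i0 j1 N} (h : RD A u i0 j1 N) (i : ℕ) :
    A.rowLen (i0 + i) = cnt u i N := by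
  rw [SkewShape.rowLen, h.card]
  simp [P, cnt]

lemma RD.colLen {A : SkewShape} {u i0 j1 N} (h : RD A u i0 j1 N) {j : ℕ} (hj : j ≤ N - 1 - u (N - 1)) :
    A.colLen (j1 - j) = cnt (fun t => t - u t) j N := by
  rw [SkewShape.colLen, h.card, cnt]
  congr 1
  apply Finset.filter_congr
  intro t ht
  have := h.bd (mem_range.1 ht)
  have := h.hle
  simp only [P]
  omega

lemma RD.hyp {A : SkewShape} {u i0 j1 N} (h : RD A u i0 j1 N) (he : A.Equitable) :
    Hyp u N ∨ Hyp (fun t => t - u t) N := by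
  apply hyp_or h.stp h.hN
  · intro i j hi hj
    have := he.1 (i0 + i) (by rw [h.rowSet]; exact mem_image.2 ⟨i, by simp; omega, rfl⟩)
      (i0 + j) (by rw [h.rowSet]; exact mem_image.2 ⟨j, by simp; omega, rfl⟩)
    rwa [h.rowLen, h.rowLen] at this
  · intro i j hi hj
    have := he.2 (j1 - i) (by rw [h.colSet]; exact mem_image.2 ⟨i, by simp; omega, rfl⟩)
      (j1 - j) (by rw [h.colSet]; exact mem_image.2 ⟨j, by simp; omega, rfl⟩)
    rwa [h.colLen hi, h.colLen hj] at this

lemma RD.conn {A : SkewShape} {u i0 j1 N} (h : RD A u i0 j1 N) : A.Connected := by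
  refine ⟨⟨_, h.ex.2 ⟨0, h.hN, rfl⟩⟩, ?_⟩
  rintro ⟨B, C, hB, hC, hU, hI, hs⟩
  have hmem : ∀ c, c ∈ A.cells ↔ c ∈ B ∨ c ∈ C := by
    intro c; rw [← hU, mem_union]
  have key : ∀ B C : Finset (ℕ × ℕ), (∀ c, c ∈ A.cells ↔ c ∈ B ∨ c ∈ C) →
      (∀ b ∈ B, ∀ c ∈ C, b.1 ≠ c.1 ∧ b.2 ≠ c.2) → P u i0 j1 0 ∈ B → ∀ t < N, P u i0 j1 t ∈ B := by
    intro B C hm hs h0 t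
    induction t with
    | zero => intro _; exact h0
    | succ t ih =>
      intro ht
      have h1 := ih (by omega)
      rcases (hm _).1 (h.ex.2 ⟨t + 1, ht, rfl⟩) with h2 | h2
      · exact h2
      · exfalso
        have := hs _ h1 _ h2
        have hb := h.bd (t := t) (by omega)
        simp only [P] at this
        rcases h.stp.2 t with e | e <;> rw [e] at this <;> omega
  have fin : ∀ B C : Finset (ℕ × ℕ), (∀ c, c ∈ A.cells ↔ c ∈ B ∨ c ∈ C) → C.Nonempty →
      (∀ b ∈ B, ∀ c ∈ C, b.1 ≠ c.1 ∧ b.2 ≠ c.2) → P u i0 j1 0 ∈ B → False := by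
    intro B C hm ⟨c, hc⟩ hs h0
    obtain ⟨t, ht, rfl⟩ := h.ex.1 ((hm c).2 (Or.inr hc))
    exact (hs _ (key B C hm hs h0 t ht) _ hc).1 rfl
  rcases (hmem _).1 (h.ex.2 ⟨0, h.hN, rfl⟩) with h0 | h0
  · exact fin B C hmem hC hs h0
  · exact fin C B (fun c => by rw [hmem, or_comm]) hB
      (fun b hb c hc => ⟨(hs c hc b hb).1.symm, (hs c hc b hb).2.symm⟩) h0

end EqRib


namespace EqRib

open Finset

lemma RD.lr {A : SkewShape} {u i0 j1 N} (h : RD A u i0 j1 N) {w lam : ℕ → ℕ} (hw : IsWord w N lam)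
    (hasc : ∀ t, t + 1 < N → (w t < w (t + 1) ↔ u t < u (t + 1))) :
    ∃ T, A.IsLR T ∧ ∀ k, A.content T (k + 1) = lam k := by
  let T : ℕ × ℕ → ℕ := fun c => w (c.1 - i0 + (j1 - c.2)) + 1
  have hT : ∀ t < N, T (P u i0 j1 t) = w t + 1 := by
    intro t ht
    have := h.bd ht
    simp only [T, P]
    congr 2
    omega
  have hR : ∀ s < N, ∀ t < N, (ReadsBefore (P u i0 j1 s) (P u i0 j1 t) ↔ s ≤ t) := by
    intro s hs t ht
    have a := h.bd hs
    have b := h.bd ht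
    simp only [ReadsBefore, P]
    rcases Nat.le_total s t with c | c
    · have := h.stp.mono c
      omega
    · have := h.stp.mono c
      have := h.stp.compl.mono c
      beta_reduce at this
      omega
  have hcard : ∀ t < N, ∀ k, (A.cells.filter fun c => T c = k + 1 ∧ ReadsBefore c (P u i0 j1 t)).card
      = cnt w k (t + 1) := by
    intro t ht k
    rw [h.card, cnt]
    congr 1
    ext s
    simp only [mem_filter, mem_range]
    constructor
    · rintro ⟨a, b, c⟩
      rw [hT s a] at b
      rw [hR s a t ht] at c
      omega
    · rintro ⟨a, b⟩
      have hs : s < N := by omega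
      rw [hT s hs, hR s hs t ht]
      omega
  have hrow : ∀ d s, s + d < N → u (s + d) = u s → w (s + d) ≤ w s := by
    intro d s
    induction d with
    | zero => intro _ _; simp
    | succ d ih =>
      intro h1 h2
      have a := h.stp.mono (show s ≤ s + d by omega)
      have b := h.stp.mono (show s + d ≤ s + (d + 1) by omega)
      have := hasc (s + d) (by omega)
      rw [add_assoc] at this
      have := ih (by omega) (by omega)
      omega
  have hcol : ∀ d s, s + d < N → u (s + d) = u s + d → w s + d ≤ w (s + d) := by
    intro d s
    induction d with
    | zero => intro _ _; simp
    | succ d ih =>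
      intro h1 h2
      have a := h.stp.compl.mono (show s ≤ s + d by omega)
      have b := h.stp.compl.mono (show s + d ≤ s + (d + 1) by omega)
      beta_reduce at a b
      have := h.stp.le s
      have := h.stp.le (s + d)
      have := h.stp.le (s + (d + 1))
      have := hasc (s + d) (by omega)
      rw [add_assoc] at this
      have := ih (by omega) (by omega)
      omega
  refine ⟨T, ⟨⟨fun c _ => by simp [T], ?_, ?_⟩, ?_⟩, ?_⟩
  · intro i j j' h1 h2 hj
    obtain ⟨s, hs, es⟩ := h.ex.1 h1
    obtain ⟨t, ht, et⟩ := h.ex.1 h2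
    rw [es, et, hT s hs, hT t ht]
    have a := h.bd hs
    have b := h.bd ht
    simp only [P, Prod.mk.injEq] at es et
    have := hrow (s - t) t (by omega) (by rw [show t + (s - t) = s by omega]; omega)
    rw [show t + (s - t) = s by omega] at this
    omega
  · intro i j j' h1 h2 hj
    obtain ⟨s, hs, es⟩ := h.ex.1 h1
    obtain ⟨t, ht, et⟩ := h.ex.1 h2
    rw [es, et, hT s hs, hT t ht]
    have a := h.bd hs
    have b := h.bd ht
    simp only [P, Prod.mk.injEq] at es et
    have := hcol (t - s) s (by omega) (by rw [show s + (t - s) = t by omega]; omega)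
    rw [show s + (t - s) = t by omega] at this
    omega
  · intro d hd k
    obtain ⟨t, ht, rfl⟩ := h.ex.1 hd
    rw [hcard t ht, hcard t ht]
    exact hw.1 _ (by omega) k
  · intro k
    rw [SkewShape.content, h.card, ← hw.2, cnt]
    congr 1
    apply Finset.filter_congr
    intro s hs
    rw [hT s (mem_range.1 hs)]
    omega

lemma RD.lr' {A : SkewShape} {u i0 j1 N} (h : RD A u i0 j1 N) 
    (hH : Hyp u N ∨ Hyp (fun t => t - u t) N) {lam : ℕ → ℕ}
    (ha : Antitone lam) (h0 : lam (u (N - 1) + 1) = 0)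
    (hs : ∑ k ∈ range (u (N - 1) + 1), lam k = N) (hc : lam 0 + u (N - 1) ≤ N) :
    ∃ T, A.IsLR T ∧ ∀ k, A.content T (k + 1) = lam k := by
  obtain ⟨w, w1, w2⟩ := words2 h.stp h.hN hH ha h0 hs hc
  exact h.lr w1 w2

/-- build a shape from `u` -/
lemma shape {u : ℕ → ℕ} (hu : Stp u) {N : ℕ} (hN : 1 ≤ N) : ∃ A, RD A u 0 (N - 1 - u (N - 1)) N := by
  set V := N - 1 - u (N - 1) with hV
  have hb : ∀ t < N, t - u t ≤ V := by
    intro t ht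
    exact hu.compl.mono (show t ≤ N - 1 by omega)
  let O : Finset (ℕ × ℕ) := ((range N ×ˢ range N)).filter
    (fun c => ∃ t < N, c.1 ≤ u t ∧ c.2 ≤ V - (t - u t))
  have hO : ∀ c, c ∈ O ↔ ∃ t < N, c.1 ≤ u t ∧ c.2 ≤ V - (t - u t) := by
    intro c
    simp only [O, mem_filter, mem_product, mem_range, and_iff_right_iff_imp]
    rintro ⟨t, h1, h2, h3⟩
    have := hu.le t
    omega
  let I : Finset (ℕ × ℕ) := O.filter (fun c => (c.1 + 1, c.2 + 1) ∈ O)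
  have hOl : ∀ a b : ℕ × ℕ, b ≤ a → a ∈ O → b ∈ O := by
    intro a b hab ha
    obtain ⟨t, h1, h2, h3⟩ := (hO a).1 ha
    exact (hO b).2 ⟨t, h1, hab.1.trans h2, hab.2.trans h3⟩
  have hIl : ∀ a b : ℕ × ℕ, b ≤ a → a ∈ I → b ∈ I := by
    intro a b hab ha
    have ha := mem_filter.1 ha
    refine mem_filter.2 ⟨hOl a b hab ha.1, hOl _ _ ?_ ha.2⟩
    exact ⟨Nat.add_le_add_right hab.1 1, Nat.add_le_add_right hab.2 1⟩
  refine ⟨⟨⟨O, fun a b hab ha => hOl a b hab ha⟩, ⟨I, fun a b hab ha => hIl a b hab ha⟩,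
    fun x hx => ?_⟩, hu, hN, le_rfl, ?_⟩
  · exact Finset.filter_subset _ _ hx
  · simp only [SkewShape.cells]
    ext ⟨i, j⟩
    simp only [mem_sdiff, I, mem_filter, hO, mem_image, mem_range, P, not_and, zero_add,
      Prod.mk.injEq, not_exists]
    constructor
    · rintro ⟨⟨t, t1, t2, t3⟩, hn⟩
      have hn := hn ⟨t, t1, t2, t3⟩
      -- the cell on the diagonal
      have b1 := hb t t1
      have b2 := hu.le t
      -- point s with  s = i + (V - j)
      have hj : j ≤ V := by omega
      have hs : i + (V - j) < N := by
        have := hu.mono (show t ≤ N - 1 by omega)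
        have := hu.le (N - 1)
        omega
      refine ⟨i + (V - j), hs, ?_⟩
      have hs1 := hb _ hs
      have hs2 := hu.le (i + (V - j))
      have h3 := hn _ hs
      -- compare with t
      have h4 : i ≤ u (i + (V - j)) := by
        by_contra hcon
        rcases Nat.le_total t (i + (V - j)) with c | c
        · have := hu.mono c
          omega
        · have := hu.compl.mono c
          beta_reduce at this
          omega
      omega
    · rintro ⟨t, ht, rfl, rfl⟩
      refine ⟨⟨t, ht, le_rfl, le_rfl⟩, fun _ s hs h1 h2 => ?_⟩
      have := hb t ht
      have := hb s hs
      have := hu.le t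
      have := hu.le s
      rcases Nat.le_total s t with c | c
      · have := hu.mono c
        omega
      · have := hu.compl.mono c
        beta_reduce at this
        omega

/-- balanced steps -/
lemma bal {N r : ℕ} (hr : 1 ≤ r) (h2 : 2 * r ≤ N + 1) :
    ∃ u, Stp u ∧ u (N - 1) + 1 = r ∧ Hyp u N := by
  have hN : 1 ≤ N := by omega
  let u : ℕ → ℕ := fun t => ((t + 1) * r - 1) / N
  have hlt : ∀ t i, u t < i ↔ (t + 1) * r ≤ i * N := by
    intro t i
    have : 1 ≤ (t + 1) * r := Nat.one_le_iff_ne_zero.2 (by positivity)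
    simp only [u]
    rw [Nat.div_lt_iff_lt_mul (by omega)]
    omega
  have hlast : u (N - 1) + 1 = r := by
    have h1 := (hlt (N - 1) r).2 (by rw [Nat.sub_add_cancel hN, mul_comm])
    have h3 : ¬ u (N - 1) < r - 1 := by
      rw [hlt, Nat.sub_add_cancel hN, mul_comm, not_le]
      exact Nat.mul_lt_mul_of_pos_right (by omega) hN
    omega
  have hcnt : ∀ i, i < r → cnt u i N = (i + 1) * N / r - i * N / r := by
    intro i hi
    have : (range N).filter (fun s => u s = i) = Ico (i * N / r) ((i + 1) * N / r) := by
      ext s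
      simp only [mem_filter, mem_range, mem_Ico]
      have a1 := hlt s i
      have a2 := hlt s (i + 1)
      rw [← Nat.le_div_iff_mul_le (by omega)] at a1 a2
      have : (i + 1) * N / r ≤ N := by
        apply Nat.div_le_of_le_mul
        exact Nat.mul_le_mul_right _ hi
      omega
    rw [cnt, this, Nat.card_Ico]
  -- floor differences
  have hfl : ∀ i, N / r ≤ (i + 1) * N / r - i * N / r ∧ (i + 1) * N / r - i * N / r ≤ N / r + 1 := by
    intro i
    rw [add_mul, one_mul]
    have e3 := Nat.add_div (show 0 < r by omega) (a := i * N) (b := N)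
    rw [e3]
    generalize i * N / r = x
    generalize N / r = y
    split_ifs <;> omega
  refine ⟨u, ⟨?_, ?_⟩, hlast, ?_, ?_⟩
  · have := (hlt 0 1).2 (by omega)
    omega
  · intro t
    have a1 : u t ≤ u (t + 1) := by
      apply Nat.div_le_div_right
      have : (t + 1) * r ≤ (t + 1 + 1) * r := Nat.mul_le_mul_right _ (by omega)
      omega
    have a2 : u (t + 1) < u t + 2 := by
      rw [hlt]
      have := (hlt t (u t + 1)).1 (by omega)
      nlinarith
    omega
  · intro i j hi hj
    rw [hcnt i (by omega), hcnt j (by omega)]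
    have := hfl i
    have := hfl j
    omega
  · intro i h1 hi
    rw [hcnt i (by omega)]
    by_cases h3 : 2 * r ≤ N
    · have : 2 ≤ N / r := by rw [Nat.le_div_iff_mul_le (by omega)]; omega
      have := hfl i
      omega
    · have hN' : N = 2 * r - 1 := by omega
      -- (i+1)N / r = 2i+1 , iN/r = 2 i - 1
      have e1 : i * N / r = 2 * i - 1 := by
        rw [Nat.div_eq_iff (by omega)]
        obtain ⟨k, rfl⟩ : ∃ k, i = k + 1 := ⟨i - 1, by omega⟩
        obtain ⟨m, rfl⟩ : ∃ m, r = k + 2 + m := ⟨r - (k + 2), by omega⟩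
        rw [hN', show 2 * (k + 2 + m) - 1 = 2 * k + 2 * m + 3 by omega,
          show 2 * (k + 1) - 1 = 2 * k + 1 by omega]
        constructor
        · nlinarith
        · apply Nat.le_sub_of_add_le
          nlinarith
      have e2 : 2 * i + 1 ≤ (i + 1) * N / r := by
        rw [Nat.le_div_iff_mul_le (by omega)]
        obtain ⟨m, rfl⟩ : ∃ m, r = i + 1 + m := ⟨r - (i + 1), by omega⟩
        rw [hN', show 2 * (i + 1 + m) - 1 = 2 * i + 2 * m + 1 by omega]
        nlinarith
      omega

lemma balE {N r : ℕ} (hr : 1 ≤ r) (h2 : r ≤ N) :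
    ∃ u, Stp u ∧ u (N - 1) + 1 = r ∧ (Hyp u N ∨ Hyp (fun t => t - u t) N) := by
  by_cases h : 2 * r ≤ N + 1
  · obtain ⟨u, a, b, c⟩ := bal hr h
    exact ⟨u, a, b, Or.inl c⟩
  · obtain ⟨u, a, b, c⟩ := bal (N := N) (r := N - r + 1) (by omega) (by omega)
    refine ⟨fun t => t - u t, a.compl, by beta_reduce; omega, Or.inr ?_⟩
    have : (fun t => t - (fun t => t - u t) t) = u := by
      funext t
      have := a.le t
      beta_reduce
      omega
    rwa [this]

lemma existsE {N r : ℕ} (hr : 1 ≤ r) (h2 : r ≤ N) :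
    ∃ A : SkewShape, A.Connected ∧ A.size = N ∧ A.numRows = r ∧ ∀ lam : ℕ → ℕ, Antitone lam → lam r = 0 →
      ∑ k ∈ range r, lam k = N → lam 0 + r ≤ N + 1 →
      ∃ T, A.IsLR T ∧ ∀ k, A.content T (k + 1) = lam k := by
  obtain ⟨u, a, b, c⟩ := balE hr h2
  obtain ⟨A, hA⟩ := shape a (show 1 ≤ N by omega)
  refine ⟨A, hA.conn, hA.size, by rw [hA.numRows, b], fun lam h1 h2 h3 h4 => ?_⟩
  exact hA.lr' c h1 (by rw [b, h2]) (by rw [b, h3]) (by omega)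

lemma equitableE {N : ℕ} {A : SkewShape} (hA : A.Ribbon) (he : A.Equitable) (hs : A.size = N)
    (lam : ℕ → ℕ) (h1 : Antitone lam) (h2 : lam A.numRows = 0)
    (h3 : ∑ k ∈ range A.numRows, lam k = N) (h4 : lam 0 + A.numRows ≤ N + 1) :
    ∃ T, A.IsLR T ∧ ∀ k, A.content T (k + 1) = lam k := by
  obtain ⟨u, i0, j1, h⟩ := RD_of hA.1 (ribbon_size hA)
  rw [hs] at h
  rw [h.numRows] at h2 h3 h4
  exact h.lr' (h.hyp he) h1 h2 h3 (by omega)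

end EqRib


namespace EqRib

open Finset

def aa (A : SkewShape) (T : ℕ × ℕ → ℕ) (k i : ℕ) : ℕ :=
  (A.cells.filter (fun c => T c = k ∧ c.1 < i)).card

def bb (A : SkewShape) (T : ℕ × ℕ → ℕ) (k i : ℕ) : ℕ :=
  (A.cells.filter (fun c => T c = k ∧ c.1 = i)).card

lemma aa_mono (A : SkewShape) (T : ℕ × ℕ → ℕ) (k : ℕ) {i i' : ℕ} (h : i ≤ i') :
    aa A T k i ≤ aa A T k i' := by
  apply Finset.card_le_card
  intro x hx
  simp only [mem_filter] at hx ⊢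
  exact ⟨hx.1, hx.2.1, by omega⟩

lemma aa_succ (A : SkewShape) (T : ℕ × ℕ → ℕ) (k i : ℕ) :
    aa A T k (i + 1) = aa A T k i + bb A T k i := by
  unfold aa bb
  rw [← Finset.card_union_of_disjoint]
  · congr 1
    ext x
    simp only [mem_filter, mem_union, ← and_or_left]
    have : x.1 < i + 1 ↔ x.1 < i ∨ x.1 = i := by omega
    rw [this]
  · rw [Finset.disjoint_left]
    intro x hx hy
    simp only [mem_filter] at hx hy
    omega

lemma aa_zero (A : SkewShape) (T : ℕ × ℕ → ℕ) (k : ℕ) : aa A T k 0 = 0 := by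
  simp [aa]

lemma aa_le (A : SkewShape) (T : ℕ × ℕ → ℕ) (k i : ℕ) : aa A T k i ≤ A.content T k := by
  apply Finset.card_le_card
  intro x hx
  simp only [mem_filter] at hx ⊢
  exact ⟨hx.1, hx.2.1⟩

lemma SL {A : SkewShape} {T : ℕ × ℕ → ℕ} (hT : A.IsLR T) (k i : ℕ) :
    aa A T (k + 2) (i + 1) ≤ aa A T (k + 1) i := by
  induction i with
  | zero =>
    rcases (A.cells.filter (fun c => T c = k + 2 ∧ c.1 = 0)).eq_empty_or_nonempty with h | h
    · rw [aa_succ, bb, h, aa_zero]; simp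
    · obtain ⟨d, hd, hmin⟩ := Finset.exists_min_image _ Prod.snd h
      simp only [mem_filter] at hd hmin
      calc _ ≤ _ := Finset.card_le_card ?_
        _ ≤ _ := hT.2 d hd.1 k
        _ ≤ _ := Finset.card_le_card ?_
      · intro x hx
        simp only [mem_filter] at hx ⊢
        refine ⟨hx.1, hx.2.1, Or.inr ⟨by omega, hmin x ⟨hx.1, hx.2.1, by omega⟩⟩⟩
      · intro x hx
        simp only [mem_filter] at hx ⊢
        obtain ⟨h1, h2, h3 | h3⟩ := hx
        · omega
        · exfalso
          obtain ⟨x1, x2⟩ := x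
          obtain ⟨d1, d2⟩ := d
          simp only at h3
          obtain ⟨rfl, h3⟩ := h3
          have := hT.1.2.1 _ _ _ hd.1 h1 h3
          omega
  | succ i ih =>
    rcases (A.cells.filter (fun c => T c = k + 2 ∧ c.1 = i + 1)).eq_empty_or_nonempty with h | h
    · rw [aa_succ, bb, h, Finset.card_empty]
      exact ih.trans (aa_mono _ _ _ (by omega))
    · obtain ⟨d, hd, hmin⟩ := Finset.exists_min_image _ Prod.snd h
      simp only [mem_filter] at hd hmin
      calc _ ≤ _ := Finset.card_le_card ?_
        _ ≤ _ := hT.2 d hd.1 k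
        _ ≤ _ := Finset.card_le_card ?_
      · intro x hx
        simp only [mem_filter] at hx ⊢
        refine ⟨hx.1, hx.2.1, ?_⟩
        rcases Nat.lt_or_ge x.1 (i + 1) with h5 | h5
        · exact Or.inl (by omega)
        · exact Or.inr ⟨by omega, hmin x ⟨hx.1, hx.2.1, by omega⟩⟩
      · intro x hx
        simp only [mem_filter] at hx ⊢
        obtain ⟨h1, h2, h3 | h3⟩ := hx
        · exact ⟨h1, h2, by omega⟩
        · exfalso
          obtain ⟨x1, x2⟩ := x
          obtain ⟨d1, d2⟩ := d
          simp only at h3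
          obtain ⟨rfl, h3⟩ := h3
          have := hT.1.2.1 _ _ _ hd.1 h1 h3
          omega

lemma card_le_q {A : SkewShape} {T : ℕ × ℕ → ℕ} (hT : A.IsLR T) (q : ℕ) :
    (A.cells.filter (fun c => T c ≤ q)).card = ∑ k ∈ range q, A.content T (k + 1) := by
  rw [Finset.card_eq_sum_card_fiberwise (f := fun c => T c - 1) (t := range q)]
  · apply Finset.sum_congr rfl
    intro k hk
    rw [SkewShape.content, Finset.filter_filter]
    congr 1
    apply Finset.filter_congr
    intro c hc
    have := hT.1.1 c hc
    have := mem_range.1 hk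
    omega
  · intro c hc
    have hc := mem_filter.1 (Finset.mem_coe.1 hc)
    have := hT.1.1 c hc.1
    simp only [coe_range, Set.mem_Iio]
    omega

lemma content_pos {A : SkewShape} {T : ℕ × ℕ → ℕ} {c : ℕ × ℕ} (hc : c ∈ A.cells) :
    1 ≤ A.content T (T c) :=
  Finset.card_pos.2 ⟨c, mem_filter.2 ⟨hc, rfl⟩⟩

/-- all the necessary conditions -/
lemma nec {A : SkewShape} (hA : A.Connected) {T : ℕ × ℕ → ℕ} (hT : A.IsLR T) :
    (∀ k, A.numRows ≤ k → A.content T (k + 1) = 0) ∧ A.content T 1 ≤ A.numCols ∧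
    ∑ k ∈ range A.numRows, A.content T (k + 1) = A.size ∧
    ∀ i ∈ A.rowSet, A.content T A.numRows ≤ A.rowLen i ∧ A.rowLen i ≤ A.content T 1 := by
  obtain ⟨i0, i1, hi, hrow⟩ := rowIcc hA
  have hr : A.numRows = i1 + 1 - i0 := by
    rw [SkewShape.numRows, hrow, Nat.card_Icc]
  have hin : ∀ c ∈ A.cells, i0 ≤ c.1 ∧ c.1 ≤ i1 := by
    intro c hc
    have a1 : c.1 ∈ A.rowSet := mem_image.2 ⟨c, hc, rfl⟩
    rwa [hrow, mem_Icc] at a1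
  have hZ : ∀ k i, i ≤ i0 + k → aa A T (k + 1) i = 0 := by
    intro k
    induction k with
    | zero =>
      intro i h
      rw [aa, Finset.card_eq_zero, Finset.filter_eq_empty_iff]
      intro c hc
      have := hin c hc
      omega
    | succ k ih =>
      intro i h
      rcases i with _ | i
      · exact aa_zero _ _ _
      · have := SL hT k i
        have := ih i (by omega)
        rw [show k + 1 + 1 = k + 2 from rfl]
        omega
  have hcon : ∀ k i, i1 < i → A.content T k = aa A T k i := by
    intro k i h
    rw [SkewShape.content, aa]
    congr 1
    apply Finset.filter_congr
    intro c hc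
    have := hin c hc
    omega
  have c1 : ∀ k, A.numRows ≤ k → A.content T (k + 1) = 0 := by
    intro k hk
    rw [hcon _ (i1 + 1) (by omega)]
    exact hZ _ _ (by omega)
  have hle : ∀ c ∈ A.cells, T c ≤ A.numRows := by
    intro c hc
    by_contra h
    have h1 := content_pos (T := T) hc
    have h2 := c1 (T c - 1) (by omega)
    rw [Nat.sub_add_cancel (by omega)] at h2
    omega
  refine ⟨c1, ?_, ?_, ?_⟩
  · rw [SkewShape.content, SkewShape.numCols]
    apply Finset.card_le_card_of_injOn Prod.snd
    · intro c hc
      have hc := mem_filter.1 (Finset.mem_coe.1 hc)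
      exact mem_image.2 ⟨c, hc.1, rfl⟩
    · rintro ⟨x1, x2⟩ hx ⟨y1, y2⟩ hy e
      have hx := mem_filter.1 (Finset.mem_coe.1 hx)
      have hy := mem_filter.1 (Finset.mem_coe.1 hy)
      simp only at e
      subst e
      rcases lt_trichotomy x1 y1 with h | h | h
      · have := hT.1.2.2 _ _ _ hx.1 hy.1 h
        omega
      · rw [h]
      · have := hT.1.2.2 _ _ _ hy.1 hx.1 h
        omega
  · rw [← card_le_q hT, SkewShape.size]
    congr 1
    exact Finset.filter_true_of_mem hle
  · intro i hi'
    rw [hrow, mem_Icc] at hi'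
    constructor
    · obtain ⟨k, rfl⟩ : ∃ k, i = i0 + k := ⟨i - i0, by omega⟩
      have h1 : bb A T (k + 1) (i0 + k) ≤ A.rowLen (i0 + k) := by
        apply Finset.card_le_card
        intro x hx
        simp only [mem_filter] at hx ⊢
        exact ⟨hx.1, hx.2.2⟩
      have h2 := aa_succ A T (k + 1) (i0 + k)
      have h3 := hZ k (i0 + k) le_rfl
      have h4 : ∀ m, aa A T (k + 1 + m) (i0 + k + 1 + m) ≤ aa A T (k + 1) (i0 + k + 1) := by
        intro m
        induction m with
        | zero => exact le_rfl
        | succ m ih =>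
          refine le_trans ?_ ih
          have := SL hT (k + m) (i0 + k + 1 + m)
          rwa [show k + 1 + (m + 1) = k + m + 2 by ring, show k + 1 + m = k + m + 1 by ring]
      have h5 := h4 (A.numRows - (k + 1))
      rw [← hcon _ _ (by omega), show k + 1 + (A.numRows - (k + 1)) = A.numRows by omega] at h5
      omega
    · have h1 : A.rowLen i = ∑ k ∈ range A.numRows, bb A T (k + 1) i := by
        rw [SkewShape.rowLen, Finset.card_eq_sum_card_fiberwise (f := fun c => T c - 1)
          (t := range A.numRows)]
        · apply Finset.sum_congr rfl
          intro k hk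
          rw [bb, Finset.filter_filter]
          congr 1
          apply Finset.filter_congr
          intro c hc
          have := hT.1.1 c hc
          omega
        · intro c hc
          have hc := mem_filter.1 (Finset.mem_coe.1 hc)
          have := hT.1.1 c hc.1
          have := hle c hc.1
          simp only [coe_range, Set.mem_Iio]
          omega
      have h2 : ∀ K, ∑ k ∈ range K, bb A T (k + 1) i + aa A T (K + 1) (i + 1) ≤ aa A T 1 (i + 1) := by
        intro K
        induction K with
        | zero => simp
        | succ K ih =>
          rw [Finset.sum_range_succ]
          have := SL hT K i
          rw [aa_succ A T (K + 1)] at ih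
          simp only [add_assoc, Nat.reduceAdd] at *
          omega
      have h3 := h2 A.numRows
      have h4 := aa_le A T 1 (i + 1)
      omega

lemma nec_col {A : SkewShape} {T : ℕ × ℕ → ℕ} (hT : A.IsLR T) {q : ℕ}
    (h1 : ∑ k ∈ range q, A.content T (k + 1) = A.numCols * q)
    (h2 : ∀ k, q < k → A.content T (k + 1) = 0) :
    ∀ j ∈ A.colSet, q ≤ A.colLen j ∧ A.colLen j ≤ q + 1 := by
  have hinj : ∀ j, Set.InjOn T (A.cells.filter (fun c => c.2 = j)) := by
    rintro j ⟨x1, x2⟩ hx ⟨y1, y2⟩ hy e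
    have hx := mem_filter.1 (Finset.mem_coe.1 hx)
    have hy := mem_filter.1 (Finset.mem_coe.1 hy)
    obtain ⟨mx, ex⟩ := hx
    obtain ⟨my, ey⟩ := hy
    simp only at ex ey
    subst ex
    subst ey
    rcases lt_trichotomy x1 y1 with h | h | h
    · have := hT.1.2.2 _ _ _ mx my h
      omega
    · rw [h]
    · have := hT.1.2.2 _ _ _ my mx h
      omega
  have hle : ∀ c ∈ A.cells, T c ≤ q + 1 := by
    intro c hc
    by_contra h
    have h1 := content_pos (T := T) hc
    have h2 := h2 (T c - 1) (by omega)
    rw [Nat.sub_add_cancel (by omega)] at h2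
    omega
  have hq : ∀ j ∈ A.colSet, ((A.cells.filter (fun c => T c ≤ q)).filter (fun c => c.2 = j)).card ≤ q := by
    intro j _
    have : q = (Icc 1 q).card := by simp
    conv_rhs => rw [this]
    apply Finset.card_le_card_of_injOn T
    · intro c hc
      have hc := mem_filter.1 (Finset.mem_coe.1 hc)
      have hc' := mem_filter.1 hc.1
      have := hT.1.1 c hc'.1
      rw [Finset.mem_coe, mem_Icc]
      omega
    · refine (hinj j).mono ?_
      intro c hc
      have hc := mem_filter.1 (Finset.mem_coe.1 hc)
      have hc' := mem_filter.1 hc.1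
      exact Finset.mem_coe.2 (mem_filter.2 ⟨hc'.1, hc.2⟩)
  have hsum : ∑ j ∈ A.colSet, ((A.cells.filter (fun c => T c ≤ q)).filter (fun c => c.2 = j)).card
      = ∑ j ∈ A.colSet, q := by
    rw [← Finset.card_eq_sum_card_fiberwise, card_le_q hT, h1, Finset.sum_const, smul_eq_mul]
    · rfl
    · intro c hc
      have hc := mem_filter.1 (Finset.mem_coe.1 hc)
      exact mem_image.2 ⟨c, hc.1, rfl⟩
  have heq := (Finset.sum_eq_sum_iff_of_le hq).1 hsum
  intro j hj
  constructor
  · rw [← heq j hj]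
    apply Finset.card_le_card
    intro c hc
    have hc := mem_filter.1 hc
    have hc' := mem_filter.1 hc.1
    exact mem_filter.2 ⟨hc'.1, hc.2⟩
  · have : q + 1 = (Icc 1 (q + 1)).card := by simp
    rw [this]
    apply Finset.card_le_card_of_injOn T _ (hinj j)
    intro c hc
    have hc := mem_filter.1 (Finset.mem_coe.1 hc)
    have := hT.1.1 c hc.1
    have := hle c hc.1
    rw [Finset.mem_coe, mem_Icc]
    omega

lemma part_anti (lam : Multiset ℕ) : Antitone (part lam) := by
  apply antitone_nat_of_succ_le
  intro n
  unfold part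
  have h : (lam.sort (· ≥ ·)).Pairwise (· ≥ ·) := Multiset.pairwise_sort _ _
  generalize lam.sort (· ≥ ·) = l at h
  by_cases hn : n + 1 < l.length
  · rw [List.getD_eq_getElem _ _ hn, List.getD_eq_getElem _ _ (by omega)]
    exact List.pairwise_iff_getElem.1 h n (n + 1) (by omega) hn (by omega)
  · rw [List.getD_eq_default _ _ (by omega)]
    omega

lemma exists_part {f : ℕ → ℕ} (hf : Antitone f) {n : ℕ} (hn : f n = 0) :
    ∃ lam : Multiset ℕ, 0 ∉ lam ∧ ∀ i, part lam i = f i := by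
  classical
  have hex : ∃ m, f m = 0 := ⟨n, hn⟩
  obtain ⟨m, hm, hmin⟩ : ∃ m, f m = 0 ∧ ∀ s < m, f s ≠ 0 :=
      ⟨Nat.find hex, Nat.find_spec hex, fun s hs => Nat.find_min hex hs⟩
  have hp : ((List.range m).map f).Pairwise (· ≥ ·) := by
    rw [List.pairwise_map]
    refine List.Pairwise.imp (fun {a b} (h : a < b) => hf h.le) List.pairwise_lt_range
  refine ⟨(((List.range m).map f : List ℕ) : Multiset ℕ), ?_, ?_⟩
  · simp only [Multiset.mem_coe, List.mem_map, List.mem_range, not_exists, not_and]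
    exact fun s hs => hmin s hs
  · intro i
    have e : ((((List.range m).map f : List ℕ) : Multiset ℕ).sort (· ≥ ·)) = (List.range m).map f := by
      refine List.Perm.eq_of_pairwise' (Multiset.pairwise_sort _ _) hp ?_
      rw [← Multiset.coe_eq_coe, Multiset.sort_eq]
    rw [part, e]
    by_cases hi : i < m
    · rw [List.getD_eq_getElem _ _ (by simpa using hi)]
      simp
    · rw [List.getD_eq_default _ _ (by simpa using hi)]
      have := hf (show m ≤ i by omega)
      omega

end EqRib


namespace EqRib

open Finset

lemma sum_extend {f : ℕ → ℕ} {a b : ℕ} (h : a ≤ b) (hz : ∀ k, a ≤ k → f k = 0) :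
    ∑ k ∈ range b, f k = ∑ k ∈ range a, f k := by
  symm
  apply Finset.sum_subset (Finset.range_subset_range.2 h)
  intro x _ hx
  exact hz x (by simpa using hx)

def hook (r c : ℕ) (i : ℕ) : ℕ := if i = 0 then c else if i < r then 1 else 0

lemma hook_spec {r c N : ℕ} (hr : 1 ≤ r) (hc : 1 ≤ c) (h : r + c = N + 1) :
    Antitone (hook r c) ∧ hook r c r = 0 ∧ ∑ k ∈ range r, hook r c k = N ∧ hook r c 0 + r ≤ N + 1 := by
  refine ⟨?_, ?_, ?_, ?_⟩
  · intro i j hij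
    unfold hook
    split_ifs <;> omega
  · simp only [hook, lt_irrefl, if_false]
    rw [if_neg (by omega)]
  · obtain ⟨m, rfl⟩ : ∃ m, r = m + 1 := ⟨r - 1, by omega⟩
    rw [Finset.sum_range_succ']
    have : ∑ k ∈ range m, hook (m + 1) c (k + 1) = ∑ k ∈ range m, 1 := by
      apply Finset.sum_congr rfl
      intro k hk
      have := mem_range.1 hk
      rw [hook, if_neg (by omega), if_pos (by omega)]
    rw [this]
    simp [hook]
    omega
  · simp [hook]; omega

def rho (r N : ℕ) (i : ℕ) : ℕ := if i < N % r then N / r + 1 else if i < r then N / r else 0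

lemma rho_spec {r N : ℕ} (hr : 1 ≤ r) (h : r ≤ N) :
    Antitone (rho r N) ∧ rho r N r = 0 ∧ ∑ k ∈ range r, rho r N k = N ∧ rho r N 0 + r ≤ N + 1 ∧
    N / r ≤ rho r N (r - 1) ∧ rho r N 0 ≤ N / r + 1 := by
  have hm := Nat.mod_lt N (show 0 < r by omega)
  have hd := Nat.div_add_mod N r
  have hq : 1 ≤ N / r := Nat.div_pos h (by omega)
  refine ⟨?_, ?_, ?_, ?_, ?_, ?_⟩
  · intro i j hij
    unfold rho
    generalize N / r = q at *
    split_ifs <;> omega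
  · unfold rho
    rw [if_neg (by omega), if_neg (by omega)]
  · have : ∀ k ∈ range r, rho r N k = N / r + if k < N % r then 1 else 0 := by
      intro k hk
      have := mem_range.1 hk
      unfold rho
      split_ifs <;> omega
    rw [Finset.sum_congr rfl this, Finset.sum_add_distrib, Finset.sum_const, card_range, smul_eq_mul,
      ← Finset.card_filter]
    have : (range r).filter (fun k => k < N % r) = range (N % r) := by
      ext x; simp only [mem_filter, mem_range]; omega
    rw [this, card_range, hd]
  · have : N / r + r ≤ r * (N / r) + 1 := by
      generalize N / r = q at *
      obtain ⟨a, rfl⟩ : ∃ a, q = a + 1 := ⟨q - 1, by omega⟩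
      obtain ⟨b, rfl⟩ : ∃ b, r = b + 1 := ⟨r - 1, by omega⟩
      nlinarith [Nat.zero_le (a * b)]
    unfold rho
    generalize N / r = q at *
    generalize N % r = s at *
    generalize r * q = x at *
    split_ifs <;> omega
  · unfold rho
    generalize N / r = q at *
    split_ifs <;> omega
  · unfold rho
    generalize N / r = q at *
    split_ifs <;> omega

def kap (c N : ℕ) (i : ℕ) : ℕ := if i < N / c then c else if i = N / c then N % c else 0

lemma kap_spec {r c N : ℕ} (hr : 1 ≤ r) (hc : 1 ≤ c) (h : r + c = N + 1) :
    Antitone (kap c N) ∧ kap c N r = 0 ∧ ∑ k ∈ range r, kap c N k = N ∧ kap c N 0 + r ≤ N + 1 ∧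
    ∑ k ∈ range (N / c), kap c N k = c * (N / c) ∧ ∀ k, N / c < k → kap c N k = 0 := by
  have hm := Nat.mod_lt N (show 0 < c by omega)
  have hd := Nat.div_add_mod N c
  have hlt : ∀ k, N / c < k → kap c N k = 0 := by
    intro k hk
    rw [kap, if_neg (by omega), if_neg (by omega)]
  have hsum : ∑ k ∈ range (N / c), kap c N k = c * (N / c) := by
    have : ∀ k ∈ range (N / c), kap c N k = c := by
      intro k hk
      rw [kap, if_pos (mem_range.1 hk)]
    rw [Finset.sum_congr rfl this, Finset.sum_const, card_range, smul_eq_mul, mul_comm]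
  have hqr : N / c < r ∨ N / c = r ∧ N % c = 0 := by
    rcases lt_trichotomy (N / c) r with h1 | h1 | h1
    · exact Or.inl h1
    · refine Or.inr ⟨h1, ?_⟩
      rw [h1] at hd
      obtain ⟨a, rfl⟩ : ∃ a, c = a + 1 := ⟨c - 1, by omega⟩
      obtain ⟨b, rfl⟩ : ∃ b, r = b + 1 := ⟨r - 1, by omega⟩
      have e : (a + 1) * (b + 1) = a * b + a + b + 1 := by ring
      rw [e] at hd
      generalize N % (a + 1) = s at *
      generalize a * b = x at *
      omega
    · exfalso
      have : c * (r + 1) ≤ c * (N / c) := Nat.mul_le_mul_left _ h1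
      have : r ≤ c * r := Nat.le_mul_of_pos_left _ hc
      rw [mul_add] at *
      omega
  refine ⟨?_, ?_, ?_, ?_, hsum, hlt⟩
  · intro i j hij
    unfold kap
    generalize N / c = q at *
    split_ifs <;> omega
  · rcases hqr with h1 | h1
    · exact hlt _ h1
    · rw [kap, if_neg (by omega), h1.2]; simp
  · rcases hqr with h1 | h1
    · rw [sum_extend (a := N / c + 1) h1 (fun k hk => hlt k hk), Finset.sum_range_succ, hsum]
      simp only [kap, lt_irrefl, if_false, if_true]
      exact hd
    · rw [← h1.1, hsum]; omega
  · unfold kap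
    generalize N / c = q at *
    split_ifs <;> omega

lemma numRows_pos {A : SkewShape} (hA : A.Connected) : 1 ≤ A.numRows :=
  Finset.card_pos.2 (hA.1.image _)

lemma numCols_pos {A : SkewShape} (hA : A.Connected) : 1 ≤ A.numCols :=
  Finset.card_pos.2 (hA.1.image _)

lemma supp_spec {A : SkewShape} (hA : A.Connected) {lam : Multiset ℕ} (h : lam ∈ A.supp) :
    part lam A.numRows = 0 ∧ part lam 0 ≤ A.numCols ∧
    ∑ k ∈ range A.numRows, part lam k = A.size := by
  obtain ⟨-, T, hT, hc⟩ := h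
  obtain ⟨h1, h2, h3, -⟩ := nec hA hT
  refine ⟨?_, ?_, ?_⟩
  · rw [← hc]; exact h1 _ le_rfl
  · rw [← hc]; exact h2
  · rw [← h3]; exact Finset.sum_congr rfl (fun k _ => (hc k).symm)

lemma main1 {A : SkewShape} {N : ℕ} (hsize : A.size = N) (hA : A.Ribbon) (he : A.Equitable)
    {B : SkewShape} (hB : B.Connected) (hBs : B.size = N) (hsub : A.supp ⊆ B.supp) :
    A.supp = B.supp := by
  have hrc := ribbon_size hA
  have hr := numRows_pos hA.1
  have hc := numCols_pos hA.1
  have hE := equitableE hA he hsize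
  obtain ⟨k1, k2, k3, k4⟩ := hook_spec (N := N) hr hc (by omega)
  obtain ⟨lam, l1, l2⟩ := exists_part k1 k2
  obtain ⟨T, hT, hT'⟩ := hE _ k1 k2 k3 k4
  have hlam : lam ∈ A.supp := ⟨l1, T, hT, fun i => by rw [hT', l2]⟩
  obtain ⟨b1, b2, -⟩ := supp_spec hB (hsub hlam)
  rw [l2] at b1 b2
  have hBr := size_ge hB
  have hB1 := numRows_pos hB
  have e1 : A.numRows ≤ B.numRows := by
    by_contra hcon
    rw [hook, if_neg (by omega), if_pos (by omega)] at b1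
    omega
  simp only [hook, if_true] at b2
  have e2 : A.numRows = B.numRows := by omega
  apply Set.Subset.antisymm hsub
  intro mu hmu
  obtain ⟨m1, m2, m3⟩ := supp_spec hB hmu
  obtain ⟨T, hT, hT'⟩ := hE (part mu) (part_anti mu) (by rw [e2, m1]) (by rw [e2, m3, hBs]) (by omega)
  exact ⟨hmu.1, T, hT, hT'⟩

lemma main2 {A : SkewShape} {N : ℕ} (hA : A.Connected) (hsize : A.size = N)
    (hmax : ∀ B : SkewShape, B.Connected → B.size = N → A.supp ⊆ B.supp → A.supp = B.supp) :
    A.Ribbon ∧ A.Equitable := by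
  have hr := numRows_pos hA
  have hc := numCols_pos hA
  have hrc := size_ge hA
  have hrN : A.numRows ≤ N := by omega
  obtain ⟨E, hE, hEs, hEr, hEl⟩ := existsE hr hrN
  have heq : A.supp = E.supp := by
    apply hmax E hE hEs
    intro mu hmu
    obtain ⟨m1, m2, m3⟩ := supp_spec hA hmu
    obtain ⟨T, hT, hT'⟩ := hEl (part mu) (part_anti mu) m1 (by rw [m3, hsize]) (by omega)
    exact ⟨hmu.1, T, hT, hT'⟩
  have key : ∀ f : ℕ → ℕ, Antitone f → f A.numRows = 0 → ∑ k ∈ range A.numRows, f k = N →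
      f 0 + A.numRows ≤ N + 1 → ∃ T, A.IsLR T ∧ ∀ k, A.content T (k + 1) = f k := by
    intro f f1 f2 f3 f4
    obtain ⟨lam, l1, l2⟩ := exists_part f1 f2
    obtain ⟨T, hT, hT'⟩ := hEl f f1 f2 f3 f4
    have hlam : lam ∈ E.supp := ⟨l1, T, hT, fun i => by rw [hT', l2]⟩
    rw [← heq] at hlam
    obtain ⟨-, T, hT, hT'⟩ := hlam
    exact ⟨T, hT, fun k => by rw [hT', l2]⟩
  have hcol : A.numRows + A.numCols = A.size + 1 := by
    obtain ⟨k1, k2, k3, k4⟩ := hook_spec (r := A.numRows) (c := N + 1 - A.numRows) (N := N) hr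
      (by omega) (by omega)
    obtain ⟨T, hT, hT'⟩ := key _ k1 k2 k3 k4
    have h := (nec hA hT).2.1
    rw [hT' 0] at h
    simp only [hook, if_true] at h
    omega
  obtain ⟨u, i0, j1, hRD⟩ := RD_of hA hcol
  refine ⟨hRD.ribbon hA, ?_, ?_⟩
  · obtain ⟨k1, k2, k3, k4, k5, k6⟩ := rho_spec hr hrN
    obtain ⟨T, hT, hT'⟩ := key _ k1 k2 k3 k4
    have h := (nec hA hT).2.2.2
    intro i hi i' hi'
    have a := h i hi
    have b := h i' hi'
    have e1 := hT' 0
    have e2 := hT' (A.numRows - 1)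
    rw [Nat.sub_add_cancel hr] at e2
    rw [zero_add] at e1
    omega
  · obtain ⟨k1, k2, k3, k4, k5, k6⟩ := kap_spec (N := N) hr hc (by omega)
    obtain ⟨T, hT, hT'⟩ := key _ k1 k2 k3 k4
    have h := nec_col hT (q := N / A.numCols) (by
      rw [← k5]; exact Finset.sum_congr rfl (fun k _ => hT' k)) (fun k hk => by rw [hT', k6 k hk])
    intro i hi i' hi'
    have a := h i hi
    have b := h i' hi'
    omega

end EqRib

/-- A connected skew shape `A` with `N` boxes is maximal in the
support-containment order among connected skew shapes with `N` boxes if and only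
if `A` is an equitable ribbon. -/
theorem maximal_support_iff_equitable_ribbon (N : ℕ) (A : SkewShape)
    (hconn : A.Connected) (hsize : A.size = N) :
    (¬ ∃ B : SkewShape, B.Connected ∧ B.size = N ∧ A.supp ⊆ B.supp ∧ A.supp ≠ B.supp) ↔
      (A.Ribbon ∧ A.Equitable) := by
  constructor
  · intro h
    apply EqRib.main2 hconn hsize
    intro B h1 h2 h3
    by_contra h4
    exact h ⟨B, h1, h2, h3, h4⟩
  · rintro ⟨h1, h2⟩ ⟨B, b1, b2, b3, b4⟩
    exact b4 (EqRib.main1 hsize h1 h2 b1 b2 b3)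
end
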